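/- arXiv:2107.06674 — 3 statements merged into one kernel-verified Lean document; each statement's English description precedes it below -/
import Mathlib

section
/- For every natural number n there is a constant C(n), depending only on n, with the following property. Let F be a finite field of characteristic p and let N ⊴ Γ ≤ GL_n(F) be subgroups such that the quotient Γ/N is abelian and the order of Γ/N is coprime to p. Let R = N_{GL_n(F)}(Γ) ∩ N_{GL_n(F)}(N) be the subgroup of elements normalizing both Γ and N, and let Z = {g ∈ R : g⁻¹x⁻¹gx ∈ N for all x ∈ Γ} be the subgroup of elements of R acting trivially on Γ/N. Then the index of Z in R is at most C(n). -/
open Matrix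
open scoped Pointwise
open scoped commutatorElement

set_option synthInstance.maxHeartbeats 400000
set_option maxHeartbeats 1000000

namespace WeylSec

/-- In a finite-dimensional commutative algebra, a root of unity of order prime to the
characteristic on which all characters take the value one is one. -/
theorem eq_one_of_forall_algHom {F E : Type} [Field F] [CommRing E] [Algebra F E]
    [Module.Finite F E] (u : E) (k : ℕ) (hu : u ^ k = 1) (hk : (k : F) ≠ 0)
    (h : ∀ φ : E →ₐ[F] AlgebraicClosure F, φ u = 1) : u = 1 := by
  have hmax : ∀ m : Ideal E, m.IsMaximal → u - 1 ∈ m := by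
    intro m hm
    let : Field (E ⧸ m) := Ideal.Quotient.field m
    have : Algebra.IsAlgebraic F (E ⧸ m) := Algebra.IsAlgebraic.of_finite F (E ⧸ m)
    let ψ : (E ⧸ m) →ₐ[F] AlgebraicClosure F := IsAlgClosed.lift
    have h1 := h (ψ.comp (Ideal.Quotient.mkₐ F m))
    rw [← Ideal.Quotient.eq_zero_iff_mem]
    apply ψ.toRingHom.injective
    have h2 : ψ (Ideal.Quotient.mk m u) = 1 := h1
    simp [map_sub, h2]
  set s : E := ∑ i ∈ Finset.range k, u ^ i with hs
  have hsu : s * (u - 1) = 0 := by rw [hs, geom_sum_mul, hu, sub_self]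
  have hunit : IsUnit s := by
    by_contra hns
    obtain ⟨m, hm, hsm⟩ := exists_max_ideal_of_mem_nonunits (mem_nonunits_iff.mpr hns)
    have hu1 : Ideal.Quotient.mk m u = 1 := by
      have := Ideal.Quotient.eq_zero_iff_mem.mpr (hmax m hm)
      rw [map_sub, map_one, sub_eq_zero] at this
      exact this
    have hs0 := Ideal.Quotient.eq_zero_iff_mem.mpr hsm
    rw [hs, map_sum] at hs0
    simp only [map_pow, hu1, one_pow, Finset.sum_const, Finset.card_range, nsmul_eq_mul,
      mul_one] at hs0
    have hkm : algebraMap F E (k : F) ∈ m := by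
      rw [← Ideal.Quotient.eq_zero_iff_mem, map_natCast, map_natCast]
      exact hs0
    exact hm.ne_top (Ideal.eq_top_of_isUnit_mem _ hkm ((isUnit_iff_ne_zero.mpr hk).map _))
  have := (hunit.mul_right_eq_zero).mp hsu
  exact sub_eq_zero.mp this

open scoped IsMulCommutative in
/-- The weights of an abelian group of matrices of order prime to the characteristic. -/
theorem exists_weights {F : Type} [Field F] {n : ℕ} {G : Type} [Group G]
    (ρ : G →* Matrix (Fin n) (Fin n) F) (hρ : Function.Injective ρ) (A : Subgroup G)
    (hA : ∀ a ∈ A, ∀ b ∈ A, a * b = b * a) (k : ℕ) (hk : ∀ a ∈ A, a ^ k = 1)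
    (hkF : (k : F) ≠ 0) :
    ∃ (X : Type) (_ : Finite X) (ev : X → (A →* AlgebraicClosure F)), Nat.card X ≤ n * n ∧
      (∀ a b : A, (∀ χ, ev χ a = ev χ b) → a = b) ∧
      (∀ g : G, (∀ a ∈ A, g * a * g⁻¹ ∈ A) → ∀ χ, ∃ χ', ∀ a b : A, (b : G) = g * a * g⁻¹ →
        ev χ' a = ev χ b) := by
  set s : Set (Matrix (Fin n) (Fin n) F) := ρ '' (A : Set G) with hs
  have hsc : ∀ a ∈ s, ∀ b ∈ s, a * b = b * a := by
    rintro _ ⟨a, ha, rfl⟩ _ ⟨b, hb, rfl⟩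
    rw [← map_mul, hA a ha b hb, map_mul]
  have : IsMulCommutative (Algebra.adjoin F s) := Algebra.isMulCommutative_adjoin F hsc
  let E := Algebra.adjoin F s
  let ι : A →* E :=
    { toFun := fun a => ⟨ρ a, Algebra.subset_adjoin ⟨a, a.2, rfl⟩⟩
      map_one' := by ext1; simp
      map_mul' := by intro a b; ext1; simp }
  have hι : Function.Injective ι := by
    intro a b hab
    apply Subtype.ext
    apply hρ
    exact congrArg (fun x : E => (x : Matrix (Fin n) (Fin n) F)) hab
  refine ⟨E →ₐ[F] AlgebraicClosure F, inferInstance,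
    fun φ => (φ : E →* AlgebraicClosure F).comp ι, ?_, ?_, ?_⟩
  · refine (card_algHom_le_finrank F E (AlgebraicClosure F)).trans ?_
    refine (Submodule.finrank_le (Subalgebra.toSubmodule E)).trans ?_
    simp [Module.finrank_matrix]
  · intro a b hab
    have h1 : ι (a * b⁻¹) = 1 := by
      apply eq_one_of_forall_algHom (F := F) _ k
      · rw [← map_pow]
        have : (a * b⁻¹) ^ k = 1 := by
          apply Subtype.ext
          exact hk _ (a * b⁻¹).2
        rw [this, map_one]
      · exact hkF
      · intro φ
        have h2 : φ (ι a) = φ (ι b) := hab φ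
        rw [map_mul, map_mul, h2, ← map_mul, ← map_mul, mul_inv_cancel, map_one, map_one]
    have h3 : a * b⁻¹ = 1 := hι (h1.trans (map_one ι).symm)
    exact mul_inv_eq_one.mp h3
  · intro g hg φ
    let c : Matrix (Fin n) (Fin n) F →ₐ[F] Matrix (Fin n) (Fin n) F :=
      AlgHom.ofLinearMap
        ((LinearMap.mulLeft F (ρ g)).comp (LinearMap.mulRight F (ρ g⁻¹)))
        (by simp [← map_mul])
        (by
          intro x y
          have : ρ g⁻¹ * ρ g = 1 := by rw [← map_mul]; simp
          simp only [LinearMap.comp_apply, LinearMap.mulLeft_apply, LinearMap.mulRight_apply]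
          calc ρ g * (x * y * ρ g⁻¹) = ρ g * x * 1 * y * ρ g⁻¹ := by simp only [mul_one, mul_assoc]
            _ = _ := by rw [← this]; simp only [mul_assoc])
    have hc : ∀ x ∈ E, c x ∈ E := by
      intro x hx
      have h1 : c x ∈ E.map c := ⟨x, hx, rfl⟩
      have h2 : E.map c ≤ E := by
        rw [AlgHom.map_adjoin]
        apply Algebra.adjoin_mono
        rintro _ ⟨_, ⟨a, ha, rfl⟩, rfl⟩
        refine ⟨g * a * g⁻¹, hg a ha, ?_⟩
        simp [c, mul_assoc]
      exact h2 h1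
    let c' : E →ₐ[F] E := (c.comp E.val).codRestrict E (fun x => hc x x.2)
    refine ⟨φ.comp c', ?_⟩
    intro a b hb
    change φ (c' (ι a)) = φ (ι b)
    congr 1
    apply Subtype.ext
    change c (ρ a) = ρ b
    rw [hb]
    simp [c, mul_assoc]

theorem pow_self_bound {x d : ℕ} (h : x ≤ d) : x ^ x ≤ (d + 1) ^ d :=
  (Nat.pow_le_pow_left (by omega) x).trans (Nat.pow_le_pow_right (by omega) h)

/-- The number of conjugation actions on an abelian normal matrix group is bounded. -/
theorem exists_action_classes {F : Type} [Field F] {n : ℕ} {G : Type} [Group G]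
    (ρ : G →* Matrix (Fin n) (Fin n) F) (hρ : Function.Injective ρ) (A : Subgroup G) [A.Normal]
    (hA : ∀ a ∈ A, ∀ b ∈ A, a * b = b * a) (k : ℕ) (hk : ∀ a ∈ A, a ^ k = 1)
    (hkF : (k : F) ≠ 0) :
    ∃ (T : Type) (_ : Finite T) (f : G → T), Nat.card T ≤ (n * n + 1) ^ (n * n) ∧
      ∀ g h, f g = f h → ∀ a ∈ A, g * a * g⁻¹ = h * a * h⁻¹ := by
  obtain ⟨X, _, ev, hX, hsep, hst⟩ := exists_weights ρ hρ A hA k hk hkF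
  have hn : ∀ g : G, ∀ a ∈ A, g * a * g⁻¹ ∈ A := fun g a ha =>
    Subgroup.Normal.conj_mem inferInstance a ha g
  choose t ht using fun g => hst g (hn g)
  refine ⟨X → X, inferInstance, t, ?_, ?_⟩
  · rw [Nat.card_fun]
    exact pow_self_bound hX
  · intro g h hgh a ha
    have := hsep ⟨g * a * g⁻¹, hn g a ha⟩ ⟨h * a * h⁻¹, hn h a ha⟩ (by
      intro χ
      rw [← ht g χ ⟨a, ha⟩ ⟨_, hn g a ha⟩ rfl, ← ht h χ ⟨a, ha⟩ ⟨_, hn h a ha⟩ rfl, hgh])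
    exact congrArg Subtype.val this

/-- The torsion of an abelian matrix group of order prime to the characteristic. -/
theorem card_torsion_le {F : Type} [Field F] {n : ℕ} {G : Type} [Group G]
    (ρ : G →* Matrix (Fin n) (Fin n) F) (hρ : Function.Injective ρ) (A : Subgroup G)
    (hA : ∀ a ∈ A, ∀ b ∈ A, a * b = b * a) (k : ℕ) (hk : ∀ a ∈ A, a ^ k = 1)
    (hkF : (k : F) ≠ 0) (e : ℕ) (he : e ≠ 0) :
    Nat.card {a : A // a ^ e = 1} ≤ e ^ (n * n) := by
  obtain ⟨X, _, ev, hX, hsep, hst⟩ := exists_weights ρ hρ A hA k hk hkF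
  have : NeZero e := ⟨he⟩
  let f : {a : A // a ^ e = 1} → (X → rootsOfUnity e (AlgebraicClosure F)) := fun a χ =>
    rootsOfUnity.mkOfPowEq (ev χ a.1) (by rw [← map_pow, a.2, map_one])
  have hf : Function.Injective f := by
    intro a b hab
    apply Subtype.ext
    apply hsep
    intro χ
    have h1 := congrArg (fun x : rootsOfUnity e (AlgebraicClosure F) =>
      ((x : (AlgebraicClosure F)ˣ) : AlgebraicClosure F)) (congrFun hab χ)
    simpa [f] using h1
  refine (Nat.card_le_card_of_injective f hf).trans ?_
  rw [Nat.card_fun]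
  exact (Nat.pow_le_pow_left (card_rootsOfUnity _ _) _).trans
    (Nat.pow_le_pow_right (Nat.pos_of_ne_zero he) hX)

theorem closure_comm {G : Type} [Group G] (S : Set G) (hS : ∀ x ∈ S, ∀ y ∈ S, x * y = y * x) :
    ∀ x ∈ Subgroup.closure S, ∀ y ∈ Subgroup.closure S, x * y = y * x := by
  have h1 : Subgroup.closure S ≤ Subgroup.centralizer (Subgroup.closure S : Set G) := by
    rw [Subgroup.centralizer_closure]
    exact (Subgroup.closure_le _).mpr fun x hx =>
      Subgroup.mem_centralizer_iff.mpr fun y hy => hS y hy x hx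
  intro x hx y hy
  exact Subgroup.mem_centralizer_iff.mp (h1 hy) x hx

theorem closure_normal {G : Type} [Group G] (S : Set G)
    (hS : ∀ x ∈ S, ∀ g : G, g * x * g⁻¹ ∈ Subgroup.closure S) :
    (Subgroup.closure S).Normal := by
  refine ⟨fun x hx g => ?_⟩
  have h1 : Subgroup.closure S ≤ (Subgroup.closure S).comap (MulAut.conj g).toMonoidHom :=
    (Subgroup.closure_le _).mpr fun y hy => hS y hy g
  exact h1 hx

/-- A finite nilpotent group has a self-centralizing abelian normal subgroup. -/
theorem exists_self_centralizing (G : Type) [Group G] [Finite G] [Group.IsNilpotent G] :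
    ∃ A : Subgroup G, A.Normal ∧ (∀ a ∈ A, ∀ b ∈ A, a * b = b * a) ∧
      ∀ g : G, (∀ a ∈ A, g * a = a * g) → g ∈ A := by
  obtain ⟨A, hA⟩ := exists_maximal_of_wellFoundedGT
    (fun A : Subgroup G => A.Normal ∧ ∀ a ∈ A, ∀ b ∈ A, a * b = b * a)
    ⟨⊥, inferInstance, by simp⟩
  obtain ⟨⟨hAn, hAc⟩, hmax⟩ := hA
  refine ⟨A, hAn, hAc, ?_⟩
  have key : ∀ i : ℕ, ∀ c ∈ Subgroup.upperCentralSeries G i, (∀ a ∈ A, c * a = a * c) →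
      c ∈ A := by
    intro i
    induction i with
    | zero =>
      intro c hc _
      rw [Subgroup.upperCentralSeries_zero, Subgroup.mem_bot] at hc
      rw [hc]; exact A.one_mem
    | succ i ih =>
      intro c hc hca
      have hcg : ∀ g : G, ⁅c, g⁆ ∈ A := by
        intro g
        refine ih _ (Subgroup.mem_upperCentralSeries_succ_iff.mp hc g) ?_
        have hcC : c ∈ Subgroup.centralizer (A : Set G) :=
          Subgroup.mem_centralizer_iff.mpr fun a ha => (hca a ha).symm
        have h2 : ⁅c, g⁆ ∈ Subgroup.centralizer (A : Set G) := by
          have : ⁅c, g⁆ = c * (g * c⁻¹ * g⁻¹) := by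
            rw [commutatorElement_def]; group
          rw [this]
          exact mul_mem hcC (Subgroup.Normal.conj_mem inferInstance _ (inv_mem hcC) g)
        intro a ha
        exact (Subgroup.mem_centralizer_iff.mp h2 a ha).symm
      set S : Set G := insert c (A : Set G) with hS
      have hAS : A ≤ Subgroup.closure S := fun a ha =>
        Subgroup.subset_closure (Set.mem_insert_of_mem _ ha)
      have hcS : c ∈ Subgroup.closure S := Subgroup.subset_closure (Set.mem_insert _ _)
      refine hmax (y := Subgroup.closure S) ⟨?_, ?_⟩ hAS hcS
      · apply closure_normal
        rintro x (rfl | hx) g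
        · have : g * x * g⁻¹ = (⁅x, g⁆)⁻¹ * x := by
            rw [commutatorElement_def]; group
          rw [this]
          exact mul_mem (inv_mem (hAS (hcg g))) hcS
        · exact hAS (hAn.conj_mem x hx g)
      · apply closure_comm
        rintro x (rfl | hx) y (rfl | hy)
        · rfl
        · exact hca y hy
        · exact (hca x hx).symm
        · exact hAc x hx y hy
  obtain ⟨N, hN⟩ := Group.IsNilpotent.nilpotent G
  intro g hg
  exact key N g (by rw [hN]; trivial) hg

/-- Jordan-type statement for nilpotent groups of order prime to the characteristic. -/
theorem nilpotent_jordan {F : Type} [Field F] {n : ℕ} {G : Type} [Group G] [Finite G]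
    [Group.IsNilpotent G]
    (ρ : G →* Matrix (Fin n) (Fin n) F) (hρ : Function.Injective ρ)
    (hkF : (Nat.card G : F) ≠ 0) (c e : ℕ) (hc : c = (n * n + 1) ^ (n * n))
    (he : e = c.factorial) :
    (∀ x y : G, x ^ e * y ^ e = y ^ e * x ^ e) ∧
      (powMonoidHom e : Abelianization G →* Abelianization G).range.index ≤
        e ^ (n * n) * c := by
  obtain ⟨A, hAn, hAc, hAs⟩ := exists_self_centralizing G
  have hk : ∀ a ∈ A, a ^ Nat.card G = 1 := fun a _ => pow_card_eq_one'
  obtain ⟨T, _, f, hT, hf⟩ := exists_action_classes ρ hρ A hAc _ hk hkF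
  have hidx : A.index ≤ c := by
    rw [hc]
    refine le_trans ?_ hT
    refine Nat.card_le_card_of_injective (fun q : G ⧸ A => f q.out) ?_
    intro q q' hqq
    have h1 := hf _ _ hqq
    rw [← q.out_eq', ← q'.out_eq', QuotientGroup.eq]
    apply hAs
    intro a ha
    have h2 := h1 a ha
    rw [eq_mul_inv_iff_mul_eq] at h2
    rw [mul_assoc, inv_mul_eq_iff_eq_mul, ← h2]
    simp only [mul_assoc]
  have hpos : A.index ≠ 0 := Subgroup.FiniteIndex.index_ne_zero
  have hdvd : A.index ∣ e := by
    rw [he]; exact Nat.dvd_factorial (Nat.pos_of_ne_zero hpos) hidx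
  have hpow : ∀ x : G, x ^ e ∈ A := by
    intro x
    obtain ⟨d, hd⟩ := hdvd
    rw [hd, pow_mul]
    exact A.pow_mem (A.pow_index_mem x) d
  have he0 : e ≠ 0 := by rw [he]; exact Nat.factorial_ne_zero _
  refine ⟨fun x y => hAc _ (hpow x) _ (hpow y), ?_⟩
  let _ : CommGroup A := { (inferInstance : Group A) with
    mul_comm := fun a b => Subtype.ext (hAc a a.2 b b.2) }
  let pe : A →* A := powMonoidHom e
  have hle : pe.range.map A.subtype ≤
      ((powMonoidHom e : Abelianization G →* Abelianization G).range).comap Abelianization.of := by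
    rintro _ ⟨_, ⟨a, rfl⟩, rfl⟩
    refine ⟨Abelianization.of (a : G), ?_⟩
    rw [powMonoidHom_apply, ← map_pow]
    rfl
  have h1 := Subgroup.index_antitone hle
  rw [Subgroup.index_comap_of_surjective (f := Abelianization.of) _
    (QuotientGroup.mk'_surjective _)] at h1
  refine h1.trans ?_
  rw [← Subgroup.relIndex_mul_index (H := pe.range.map A.subtype) (K := A)
    (Subgroup.map_subtype_le _)]
  refine Nat.mul_le_mul ?_ hidx
  have h3 : (pe.range.map A.subtype).relIndex A = pe.range.index := by
    rw [Subgroup.relIndex, Subgroup.subgroupOf,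
      Subgroup.comap_map_eq_self_of_injective A.subtype_injective]
  rw [h3, Subgroup.index_range]
  exact card_torsion_le ρ hρ A hAc _ hk hkF e he0

/-- Counting endomorphisms of an abelian group. -/
theorem classes_of_pow {Q H T : Type} [CommGroup Q] [Finite Q] [Finite T] (φ : H → (Q →* Q))
    (e s : ℕ) (hs : (powMonoidHom e : Q →* Q).range.index ≤ s) (f : H → T)
    (hf : ∀ g h, f g = f h → ∀ q, φ g (q ^ e) = φ h (q ^ e)) :
    ∃ (T' : Type) (_ : Finite T') (f' : H → T'), Nat.card T' ≤ Nat.card T * (s + 1) ^ s ∧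
      ∀ g h, f' g = f' h → φ g = φ h := by
  let P : Subgroup Q := (powMonoidHom e : Q →* Q).range
  let K : Subgroup Q := (powMonoidHom e : Q →* Q).ker
  have hr : ∀ g : H, ∃ r : H, f r = f g ∧ ∀ g', f g' = f g →
      Classical.epsilon (fun r => f r = f g') (h := ⟨g⟩) = r := by
    intro g
    have : Nonempty H := ⟨g⟩
    refine ⟨Classical.epsilon (fun r => f r = f g), Classical.epsilon_spec
      (p := fun r => f r = f g) ⟨g, rfl⟩, ?_⟩
    intro g' hg'
    rw [hg']
  choose r hr1 hr2 using hr
  have hrr : ∀ g h, f g = f h → r g = r h := by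
    intro g h hgh
    rw [← hr2 g g rfl, ← hr2 h g hgh]
  let δ : H → (Q →* Q) := fun g => φ g / φ (r g)
  have hδK : ∀ g q, δ g q ∈ K := by
    intro g q
    rw [MonoidHom.mem_ker, powMonoidHom_apply, ← map_pow, MonoidHom.div_apply,
      hf g (r g) (hr1 g).symm, div_self']
  let f2 : H → (Q ⧸ P → K) := fun g q => ⟨δ g q.out, hδK g _⟩
  refine ⟨T × (Q ⧸ P → K), inferInstance, fun g => (f g, f2 g), ?_, ?_⟩
  · rw [Nat.card_prod, Nat.card_fun]
    refine Nat.mul_le_mul le_rfl ?_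
    have h1 : Nat.card K = P.index := (Subgroup.index_range).symm
    have h2 : Nat.card (Q ⧸ P) = P.index := rfl
    rw [h1, h2]
    exact pow_self_bound hs
  · intro g h hgh
    obtain ⟨h1, h2⟩ := Prod.mk.inj hgh
    have h3 := hrr g h h1
    have hker : ∀ g, ∀ x ∈ P, δ g x = 1 := by
      rintro g _ ⟨y, rfl⟩
      have := hδK g y
      rw [MonoidHom.mem_ker, powMonoidHom_apply] at this
      rw [powMonoidHom_apply, map_pow, this]
    have hout : ∀ (g : H) (q : Q), δ g ((q : Q ⧸ P)).out = δ g q := by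
      intro g q
      obtain ⟨x, hx⟩ := QuotientGroup.mk_out_eq_mul P q
      rw [hx, map_mul, hker g x x.2, mul_one]
    ext q
    have h4 : δ g q = δ h q := by
      exact (hout g q).symm.trans
        ((congrArg Subtype.val (congrFun h2 (q : Q ⧸ P))).trans (hout h q))
    simp only [δ, MonoidHom.div_apply, h3] at h4
    exact div_left_injective h4

/-- The bound for nilpotent normal subgroups. -/
theorem classes_of_nilpotent (n : ℕ) : ∃ C : ℕ, ∀ {F : Type} [Field F] {G : Type} [Group G]
    [Finite G] (ρ : G →* Matrix (Fin n) (Fin n) F) (_ : Function.Injective ρ)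
    (Γ : Subgroup G) [Γ.Normal] [Group.IsNilpotent Γ] (_ : (Nat.card Γ : F) ≠ 0),
    ∃ (T : Type) (_ : Finite T) (f : G → T), Nat.card T ≤ C ∧
      ∀ g h, f g = f h → ∀ N : Subgroup G, (∀ a ∈ Γ, ∀ b ∈ Γ, ⁅a, b⁆ ∈ N) →
        ∀ x ∈ Γ, (g * x * g⁻¹)⁻¹ * (h * x * h⁻¹) ∈ N := by
  obtain ⟨c, hc⟩ : ∃ c, c = (n * n + 1) ^ (n * n) := ⟨_, rfl⟩
  obtain ⟨e, he⟩ : ∃ e, e = c.factorial := ⟨_, rfl⟩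
  refine ⟨c * (e ^ (n * n) * c + 1) ^ (e ^ (n * n) * c), ?_⟩
  intro F _ G _ _ ρ hρ Γ hΓn _ hcard
  obtain ⟨hcomm, hidx⟩ := nilpotent_jordan (G := Γ) (ρ.comp Γ.subtype)
    (hρ.comp Γ.subtype_injective) hcard c e hc he
  set S : Set G := (fun x => x ^ e) '' (Γ : Set G) with hS
  have hSn : (Subgroup.closure S).Normal := by
    apply closure_normal
    rintro _ ⟨x, hx, rfl⟩ g
    apply Subgroup.subset_closure
    exact ⟨g * x * g⁻¹, hΓn.conj_mem x hx g, conj_pow⟩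
  have hSΓ : Subgroup.closure S ≤ Γ := by
    rw [Subgroup.closure_le]
    rintro _ ⟨x, hx, rfl⟩
    exact Γ.pow_mem hx e
  have hSc : ∀ x ∈ Subgroup.closure S, ∀ y ∈ Subgroup.closure S, x * y = y * x := by
    apply closure_comm
    rintro _ ⟨x, hx, rfl⟩ _ ⟨y, hy, rfl⟩
    exact congrArg Subtype.val (hcomm ⟨x, hx⟩ ⟨y, hy⟩)
  have hSk : ∀ a ∈ Subgroup.closure S, a ^ Nat.card Γ = 1 := by
    intro a ha
    have : (⟨a, hSΓ ha⟩ : Γ) ^ Nat.card Γ = 1 := pow_card_eq_one'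
    exact congrArg Subtype.val this
  obtain ⟨T, _, f, hT, hf⟩ := exists_action_classes ρ hρ _ hSc _ hSk hcard
  let φ : G → (Abelianization Γ →* Abelianization Γ) := fun g =>
    Abelianization.map ((MulAut.conjNormal g : MulAut Γ).toMonoidHom)
  obtain ⟨T', hTfin, f', hT', hf'⟩ := classes_of_pow φ e _ hidx f (by
    intro g h hgh q
    obtain ⟨x, rfl⟩ := QuotientGroup.mk'_surjective _ q
    change φ g (Abelianization.of x ^ e) = φ h (Abelianization.of x ^ e)
    rw [← map_pow]
    change Abelianization.of (MulAut.conjNormal g (x ^ e)) =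
      Abelianization.of (MulAut.conjNormal h (x ^ e))
    congr 1
    apply Subtype.ext
    rw [MulAut.conjNormal_apply, MulAut.conjNormal_apply]
    exact hf g h hgh _ (Subgroup.subset_closure ⟨x, x.2, rfl⟩))
  refine ⟨T', hTfin, f', hT'.trans ?_, ?_⟩
  · rw [hc] at *
    exact Nat.mul_le_mul hT le_rfl
  · intro g h hgh N hN x hx
    have h1 : φ g (Abelianization.of ⟨x, hx⟩) = φ h (Abelianization.of ⟨x, hx⟩) := by
      rw [hf' g h hgh]
    have h2 : (QuotientGroup.mk (MulAut.conjNormal g ⟨x, hx⟩) : Γ ⧸ commutator Γ) =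
      QuotientGroup.mk (MulAut.conjNormal h ⟨x, hx⟩) := h1
    rw [QuotientGroup.eq] at h2
    have h3 : commutator Γ ≤ N.comap Γ.subtype := by
      rw [commutator_def, Subgroup.commutator_le]
      intro a _ b _
      exact hN a a.2 b b.2
    exact h3 h2

/-- Reduction to a nilpotent section by a minimal supplement. -/
theorem exists_nilpotent_supplement {G : Type} [Group G] [Finite G] (Γ N : Subgroup G)
    [Γ.Normal] [N.Normal] (hN : ∀ a ∈ Γ, ∀ b ∈ Γ, ⁅a, b⁆ ∈ N) :
    ∃ H : Subgroup G, H ⊔ N = ⊤ ∧ Group.IsNilpotent (Γ.subgroupOf H) := by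
  obtain ⟨H, hH, hmin⟩ := exists_minimal_of_wellFoundedLT
    (fun H : Subgroup G => H ⊔ N = ⊤) ⟨⊤, by simp⟩
  refine ⟨H, hH, ?_⟩
  refine ((Group.isNilpotent_of_finite_tfae (G := Γ.subgroupOf H)).out 0 3).mpr ?_
  set M : Subgroup H := Γ.subgroupOf H with hM
  intro p hp P
  set Pm : Subgroup H := (P : Subgroup M).map M.subtype with hPm
  set K : Subgroup H := N.subgroupOf H with hK
  have hF1 : Subgroup.normalizer (Pm : Set H) ⊔ M = ⊤ := Sylow.normalizer_sup_eq_top P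
  have hKc : ∀ a b : M, ⁅a, b⁆ ∈ K.subgroupOf M := by
    intro a b
    exact hN a a.2 b b.2
  have hLn : ((P : Subgroup M) ⊔ K.subgroupOf M).Normal := by
    refine ⟨fun x hx g => ?_⟩
    have : g * x * g⁻¹ = ⁅g, x⁆ * x := by rw [commutatorElement_def]; group
    rw [this]
    exact mul_mem (Subgroup.mem_sup_right (hKc g x)) hx
  have hF2 : Subgroup.normalizer ((P : Subgroup M) : Set M) ⊔
      ((P : Subgroup M) ⊔ K.subgroupOf M) = ⊤ :=
    Sylow.normalizer_sup_eq_top' P le_sup_left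
  have hF3 : Subgroup.normalizer ((P : Subgroup M) : Set M) ⊔ K.subgroupOf M = ⊤ := by
    rw [← sup_assoc, sup_eq_left.mpr Subgroup.le_normalizer] at hF2
    exact hF2
  have hF4 : M ≤ Subgroup.normalizer (Pm : Set H) ⊔ K := by
    have h1 : (⊤ : Subgroup M).map M.subtype = M := by
      rw [← MonoidHom.range_eq_map, Subgroup.range_subtype]
    rw [← h1, ← hF3, Subgroup.map_sup]
    refine sup_le_sup (Subgroup.le_normalizer_map _) ?_
    rw [Subgroup.subgroupOf_map_subtype]
    exact inf_le_left
  have hF5 : Subgroup.normalizer (Pm : Set H) ⊔ K = ⊤ := by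
    rw [eq_top_iff, ← hF1]
    exact sup_le le_sup_left hF4
  set D : Subgroup G := (Subgroup.normalizer (Pm : Set H)).map H.subtype with hD
  have hDN : D ⊔ N = ⊤ := by
    rw [eq_top_iff, ← hH]
    refine sup_le ?_ le_sup_right
    have h1 : (⊤ : Subgroup H).map H.subtype = H := by
      rw [← MonoidHom.range_eq_map, Subgroup.range_subtype]
    nth_rewrite 1 [← h1]
    rw [← hF5, Subgroup.map_sup]
    refine sup_le_sup le_rfl ?_
    rintro _ ⟨x, hx, rfl⟩
    exact hx
  have hHD : H ≤ D := hmin hDN (Subgroup.map_subtype_le _)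
  have hnt : Subgroup.normalizer (Pm : Set H) = ⊤ := by
    rw [eq_top_iff]
    intro x _
    obtain ⟨y, hy, hyx⟩ := hHD x.2
    have : y = x := Subtype.ext hyx
    exact this ▸ hy
  have hPn : Pm.Normal := Subgroup.normalizer_eq_top_iff.mp hnt
  have hcm : (Pm.comap M.subtype) = (P : Subgroup M) :=
    Subgroup.comap_map_eq_self_of_injective M.subtype_injective _
  rw [← hcm]
  infer_instance

/-- The part of order prime to `p` of a nilpotent group. -/
theorem exists_prime_to_part (M : Type) [Group M] [Finite M] [hM : Group.IsNilpotent M] (p : ℕ)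
    (hp : p.Prime) :
    ∃ K : Subgroup M, K.Characteristic ∧ (Nat.card K).Coprime p ∧
      ∀ x : M, ∃ k : ℕ, x ^ p ^ k ∈ K := by
  obtain ⟨e⟩ := ((Group.isNilpotent_of_finite_tfae (G := M)).out 0 4).mp hM
  have hpf : Fact p.Prime := ⟨hp⟩
  by_cases hpM : p ∈ (Nat.card M).primeFactors
  · let π : M →* (∀ P : Sylow p M, (P : Subgroup M)) :=
      (Pi.evalMonoidHom (fun q : (Nat.card M).primeFactors => ∀ P : Sylow q M, (P : Subgroup M))
        ⟨p, hpM⟩).comp e.symm.toMonoidHom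
    have hcop : (Nat.card π.ker).Coprime p := by
      rw [Nat.coprime_comm, hp.coprime_iff_not_dvd]
      intro hdvd
      obtain ⟨x, hx⟩ := exists_prime_orderOf_dvd_card' p hdvd
      have hx1 : x = 1 := by
        apply Subtype.ext
        have hxp : (x : M) ^ p = 1 := by
          have := pow_orderOf_eq_one x
          rw [hx] at this
          exact congrArg Subtype.val this
        have hxk : π x = 1 := x.2
        have : e.symm (x : M) = 1 := by
          funext q P
          obtain ⟨q, hq⟩ := q
          by_cases hqp : q = p
          · subst hqp
            exact congrFun hxk P
          · have hqf : Fact q.Prime := ⟨Nat.prime_of_mem_primeFactors hq⟩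
            have h1 : (e.symm (x : M) ⟨q, hq⟩ P) ^ p = 1 := by
              have h2 : (e.symm (x : M)) ^ p = 1 := by rw [← map_pow, hxp, map_one]
              exact congrFun (congrFun h2 ⟨q, hq⟩) P
            have h2 : (e.symm (x : M) ⟨q, hq⟩ P) ^ (q ^ (Nat.card M).factorization q) = 1 := by
              rw [← Sylow.card_eq_multiplicity P]
              exact pow_card_eq_one'
            have h3 := Nat.dvd_gcd (orderOf_dvd_of_pow_eq_one h1) (orderOf_dvd_of_pow_eq_one h2)
            have h4 : Nat.gcd p (q ^ (Nat.card M).factorization q) = 1 :=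
              Nat.Coprime.pow_right _ ((Nat.coprime_primes hp hqf.out).mpr (Ne.symm hqp))
            rw [h4, Nat.dvd_one, orderOf_eq_one_iff] at h3
            exact h3
        exact e.symm.injective (this.trans (map_one e.symm).symm)
      rw [hx1, orderOf_one] at hx
      exact hp.one_lt.ne hx
    have hpow : ∀ x : M, x ^ p ^ (Nat.card M).factorization p ∈ π.ker := by
      intro x
      rw [MonoidHom.mem_ker, map_pow]
      funext P
      rw [Pi.pow_apply, ← Sylow.card_eq_multiplicity P]
      exact pow_card_eq_one'
    refine ⟨π.ker, ?_, hcop, fun x => ⟨_, hpow x⟩⟩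
    rw [Subgroup.characteristic_iff_le_comap]
    intro ψ x hx
    have h1 : (ψ x) ^ Nat.card π.ker = 1 := by
      rw [← map_pow]
      have : (⟨x, hx⟩ : π.ker) ^ Nat.card π.ker = 1 := pow_card_eq_one'
      have h2 : x ^ Nat.card π.ker = 1 := congrArg Subtype.val this
      rw [h2, map_one]
    have h2 : (p ^ (Nat.card M).factorization p).Coprime (orderOf (ψ x)) :=
      Nat.Coprime.coprime_dvd_right (orderOf_dvd_of_pow_eq_one h1)
        (Nat.Coprime.pow_left _ hcop.symm)
    obtain ⟨m, hm⟩ := exists_pow_eq_self_of_coprime h2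
    rw [Subgroup.mem_comap]
    change ψ x ∈ π.ker
    rw [← hm]
    exact π.ker.pow_mem (hpow _) m
  · refine ⟨⊤, inferInstance, ?_, fun x => ⟨0, trivial⟩⟩
    rw [Subgroup.card_top, Nat.coprime_comm, hp.coprime_iff_not_dvd]
    intro h
    exact hpM (Nat.mem_primeFactors.mpr ⟨hp, h, Nat.card_pos.ne'⟩)

/-- Reduction to a nilpotent section of order prime to `p`. -/
theorem exists_good_supplement {G : Type} [Group G] [Finite G] (Γ N : Subgroup G)
    [Γ.Normal] [N.Normal] (hNΓ : N ≤ Γ) (hN : ∀ a ∈ Γ, ∀ b ∈ Γ, ⁅a, b⁆ ∈ N) (p : ℕ)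
    (hp : p.Prime) (i : ℕ) (hi : i.Coprime p) (hpow : ∀ x ∈ Γ, x ^ i ∈ N) :
    ∃ H : Subgroup G, H ⊔ N = ⊤ ∧ ∃ L : Subgroup H, L.Normal ∧ Group.IsNilpotent L ∧
      (Nat.card L).Coprime p ∧ (∀ y ∈ L, (y : G) ∈ Γ) ∧
      ∀ x ∈ Γ, ∃ y ∈ L, QuotientGroup.mk' N x = QuotientGroup.mk' N (y : G) := by
  obtain ⟨H, hH, hnil⟩ := exists_nilpotent_supplement Γ N hN
  obtain ⟨K, hKc, hKp, hK⟩ := exists_prime_to_part (Γ.subgroupOf H) p hp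
  have eqv := K.equivMapOfInjective _ (Γ.subgroupOf H).subtype_injective
  refine ⟨H, hH, K.map (Γ.subgroupOf H).subtype, inferInstance,
    Group.nilpotent_of_mulEquiv eqv, ?_, ?_, ?_⟩
  · rw [← Nat.card_congr eqv.toEquiv]
    exact hKp
  · rintro _ ⟨y, _, rfl⟩
    exact y.2
  · intro x hx
    have hxt : x ∈ H ⊔ N := by rw [hH]; trivial
    obtain ⟨h, hh, m, hm, rfl⟩ := Subgroup.mem_sup_of_normal_right.mp hxt
    have hhΓ : h ∈ Γ := (Subgroup.mul_mem_cancel_right Γ (hNΓ hm)).mp hx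
    have hq : QuotientGroup.mk' N (h * m) = QuotientGroup.mk' N h := by
      rw [map_mul, show QuotientGroup.mk' N m = 1 from (QuotientGroup.eq_one_iff m).mpr hm, mul_one]
    let z : Γ.subgroupOf H := ⟨⟨h, hh⟩, hhΓ⟩
    obtain ⟨k, hk⟩ := hK z
    have h1 : (QuotientGroup.mk' N h) ^ i = 1 := by
      rw [← map_pow]
      exact (QuotientGroup.eq_one_iff _).mpr (hpow h hhΓ)
    have h2 : (p ^ k).Coprime (orderOf (QuotientGroup.mk' N h)) :=
      Nat.Coprime.coprime_dvd_right (orderOf_dvd_of_pow_eq_one h1)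
        (Nat.Coprime.pow_left _ hi.symm)
    obtain ⟨m', hm'⟩ := exists_pow_eq_self_of_coprime h2
    refine ⟨((z ^ p ^ k) ^ m' : Γ.subgroupOf H), ⟨_, K.pow_mem hk m', rfl⟩, ?_⟩
    rw [hq, ← hm', ← map_pow, ← map_pow]
    rfl

/-- The bound for arbitrary sections. -/
theorem classes_of_section (n : ℕ) : ∃ C : ℕ, ∀ {F : Type} [Field F] (p : ℕ) [CharP F p]
    {G : Type} [Group G]
    [Finite G] (ρ : G →* Matrix (Fin n) (Fin n) F) (_ : Function.Injective ρ)
    (Γ N : Subgroup G) [Γ.Normal] [N.Normal] (_ : N ≤ Γ)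
    (_ : ∀ a ∈ Γ, ∀ b ∈ Γ, ⁅a, b⁆ ∈ N) (_ : p.Prime) (i : ℕ) (_ : i.Coprime p)
    (_ : ∀ x ∈ Γ, x ^ i ∈ N),
    ∃ (T : Type) (_ : Finite T) (f : G → T), Nat.card T ≤ C ∧
      ∀ g h, f g = f h → ∀ x ∈ Γ,
        QuotientGroup.mk' N (g * x * g⁻¹) = QuotientGroup.mk' N (h * x * h⁻¹) := by
  obtain ⟨C, hC⟩ := classes_of_nilpotent n
  refine ⟨C, ?_⟩
  intro F _ p _ G _ _ ρ hρ Γ N _ _ hNΓ hN hp i hi hpow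
  obtain ⟨H, hH, L, hLn, hLnil, hLp, hLΓ, hL⟩ :=
    exists_good_supplement Γ N hNΓ hN p hp i hi hpow
  have hcard : (Nat.card L : F) ≠ 0 := by
    rw [Ne, CharP.cast_eq_zero_iff F p, ← hp.coprime_iff_not_dvd]
    exact hLp.symm
  obtain ⟨T, hTf, f, hT, hf⟩ := hC (ρ.comp H.subtype) (hρ.comp H.subtype_injective) L hcard
  have hex : ∀ g : G, ∃ h : H, QuotientGroup.mk' N g = QuotientGroup.mk' N (h : G) := by
    intro g
    have hgt : g ∈ H ⊔ N := by rw [hH]; trivial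
    obtain ⟨h, hh, m, hm, rfl⟩ := Subgroup.mem_sup_of_normal_right.mp hgt
    refine ⟨⟨h, hh⟩, ?_⟩
    rw [map_mul, show QuotientGroup.mk' N m = 1 from (QuotientGroup.eq_one_iff m).mpr hm, mul_one]
  choose r hr using hex
  refine ⟨T, hTf, fun g => f (r g), hT, ?_⟩
  intro g h hgh x hx
  obtain ⟨y, hy, hxy⟩ := hL x hx
  have h1 := hf _ _ hgh (N.subgroupOf H)
    (fun a ha b hb => hN a (hLΓ a ha) b (hLΓ b hb)) y hy
  have h2 : QuotientGroup.mk' N ((r g : G) * y * (r g : G)⁻¹) =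
      QuotientGroup.mk' N ((r h : G) * y * (r h : G)⁻¹) := by
    rw [QuotientGroup.mk'_apply, QuotientGroup.mk'_apply, QuotientGroup.eq]
    exact h1
  simp only [map_mul, map_inv] at h2 ⊢
  rw [hr g, hr h, hxy]
  exact h2

end WeylSec

/-- **Bounded Weyl group of an abelian `p'`-section.**
For each `n` there is `C(n)` such that: if `F` is a finite field of characteristic `p`,
`N ⊴ Γ ≤ GL_n(F)` with `Γ/N` abelian of order coprime to `p`, `R` is the set of elements
normalizing both `Γ` and `N`, and `Z ⊆ R` those acting trivially on `Γ/N`, then `R` is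
covered by at most `C(n)` left cosets of `Z`. -/
theorem weyl_group_of_section_bounded :
    ∀ n : ℕ, ∃ C : ℕ,
      ∀ (F : Type) [Field F] [Fintype F] (p : ℕ) [CharP F p], p.Prime →
      ∀ Γ N : Subgroup (GL (Fin n) F), N ≤ Γ →
      (∀ g ∈ Γ, ∀ x ∈ N, g * x * g⁻¹ ∈ N) →
      (∀ a ∈ Γ, ∀ b ∈ Γ, ⁅a, b⁆ ∈ N) →
      Nat.Coprime ((N.subgroupOf Γ).index) p →
      ∃ S : Finset (GL (Fin n) F), S.card ≤ C ∧
        ∀ g ∈ Subgroup.normalizer (Γ : Set (GL (Fin n) F)) ⊓ Subgroup.normalizer (N : Set (GL (Fin n) F)), ∃ s ∈ S,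
          s⁻¹ * g ∈ Subgroup.normalizer (Γ : Set (GL (Fin n) F)) ⊓ Subgroup.normalizer (N : Set (GL (Fin n) F)) ∧
          ∀ x ∈ Γ, (s⁻¹ * g)⁻¹ * x⁻¹ * (s⁻¹ * g) * x ∈ N := by
  intro n
  obtain ⟨C, hC⟩ := WeylSec.classes_of_section n
  refine ⟨C, ?_⟩
  intro F _ _ p _ hp Γ N hNΓ hΓN hcomm hcop
  classical
  set R : Subgroup (GL (Fin n) F) := Subgroup.normalizer (Γ : Set (GL (Fin n) F)) ⊓
    Subgroup.normalizer (N : Set (GL (Fin n) F)) with hR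
  have : Finite (GL (Fin n) F) := inferInstanceAs (Finite (Matrix (Fin n) (Fin n) F)ˣ)
  have hΓn : (Γ.subgroupOf R).Normal := by
    refine ⟨fun x hx g => ?_⟩
    exact (Subgroup.mem_normalizer_iff.mp g.2.1 (x : GL (Fin n) F)).mp hx
  have hNn : (N.subgroupOf R).Normal := by
    refine ⟨fun x hx g => ?_⟩
    exact (Subgroup.mem_normalizer_iff.mp g.2.2 (x : GL (Fin n) F)).mp hx
  have hΓR : Γ ≤ R := by
    intro g hg
    refine ⟨Subgroup.le_normalizer hg, ?_⟩
    refine Subgroup.mem_normalizer_iff.mpr fun x => ⟨fun hx => hΓN g hg x hx, fun hx => ?_⟩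
    have := hΓN g⁻¹ (inv_mem hg) _ hx
    simpa [mul_assoc] using this
  have hpow : ∀ x ∈ Γ, x ^ (N.subgroupOf Γ).index ∈ N := by
    have hn : (N.subgroupOf Γ).Normal := ⟨fun x hx g => hΓN g g.2 x hx⟩
    intro x hx
    exact (N.subgroupOf Γ).pow_index_mem ⟨x, hx⟩
  obtain ⟨T, hTf, f, hT, hf⟩ := hC (F := F) p (G := R)
    ((Units.coeHom (Matrix (Fin n) (Fin n) F)).comp R.subtype)
    (Units.val_injective.comp R.subtype_injective)
    (Γ.subgroupOf R) (N.subgroupOf R) (fun x hx => hNΓ hx)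
    (fun a ha b hb => hcomm a ha b hb) hp _ hcop (fun x hx => hpow x hx)
  have := Fintype.ofFinite T
  let r : T → GL (Fin n) F := fun t =>
    ((Classical.epsilon (fun g : R => f g = t) (h := ⟨1⟩) : R) : GL (Fin n) F)
  refine ⟨Finset.univ.image r, ?_, ?_⟩
  · refine Finset.card_image_le.trans ?_
    rw [Finset.card_univ, ← Nat.card_eq_fintype_card]
    exact hT
  · intro g hg
    refine ⟨r (f ⟨g, hg⟩), Finset.mem_image_of_mem _ (Finset.mem_univ _), ?_⟩
    obtain ⟨s, hs1, hs2⟩ : ∃ s : R, f s = f ⟨g, hg⟩ ∧ r (f ⟨g, hg⟩) = s :=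
      ⟨_, Classical.epsilon_spec (p := fun s : R => f s = f ⟨g, hg⟩) ⟨_, rfl⟩, rfl⟩
    rw [hs2]
    have hsg : (s : GL (Fin n) F)⁻¹ * g ∈ R := mul_mem (inv_mem s.2) hg
    refine ⟨hsg, ?_⟩
    intro x hx
    let u : R := s⁻¹ * ⟨g, hg⟩
    let x' : R := ⟨x, hΓR hx⟩
    have h1 := hf _ _ hs1 x' hx
    have h2 : QuotientGroup.mk' (N.subgroupOf R) (u⁻¹ * x'⁻¹ * u * x') = 1 := by
      simp only [map_mul, map_inv] at h1 ⊢
      simp only [u, map_mul, map_inv]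
      generalize QuotientGroup.mk' (N.subgroupOf R) s = a at *
      generalize QuotientGroup.mk' (N.subgroupOf R) ⟨g, hg⟩ = b at *
      generalize QuotientGroup.mk' (N.subgroupOf R) x' = c at *
      have h3 : c⁻¹ * (a⁻¹ * b) = a⁻¹ * b * c⁻¹ := by
        have h4 : a * c⁻¹ * a⁻¹ = b * c⁻¹ * b⁻¹ := by
          have := congrArg (·⁻¹) h1
          simpa [mul_assoc] using this
        calc c⁻¹ * (a⁻¹ * b) = a⁻¹ * (a * c⁻¹ * a⁻¹) * b := by group
          _ = a⁻¹ * b * c⁻¹ := by rw [h4]; group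
      calc (a⁻¹ * b)⁻¹ * c⁻¹ * (a⁻¹ * b) * c = (a⁻¹ * b)⁻¹ * (c⁻¹ * (a⁻¹ * b)) * c := by group
        _ = 1 := by rw [h3]; group
    have h5 : u⁻¹ * x'⁻¹ * u * x' ∈ N.subgroupOf R := (QuotientGroup.eq_one_iff _).mp h2
    exact h5
end

section
/- For every natural number d ≥ 1 there is a constant m = m(d), depending only on d, with the following property. Let Γ be a group and let N ≤ G be finite normal subgroups of Γ, and let K ≥ 1 be a real number. Assume: (i) [G,N] = N, where [G,N] is the subgroup generated by commutators of elements of G and N; (ii) N is nilpotent; (iii) the quotient G/N can be generated by d elements; (iv) every group homomorphism from G to GL_e(ℂ) with nontrivial image satisfies e > K^m. Let A be a finite symmetric subset of Γ with |A^3| ≤ K·|A|, generating Γ, and satisfying G ⊆ A·N (A covers G/N). Then (A^2 ∩ G)^3 = G; moreover, if Γ = G, then already A^3 = G. -/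
open Matrix
open scoped Pointwise

set_option synthInstance.maxHeartbeats 400000
set_option maxHeartbeats 1000000


/-- `D`-quasirandomness. -/
def IsQR (G : Type*) [Group G] (D : ℝ) : Prop :=
  ∀ (e : ℕ) (φ : G →* GL (Fin e) ℂ), φ.range ≠ ⊥ → D < (e : ℝ)

lemma qr_rep {G : Type*} [Group G] {D : ℝ} (h : IsQR G D) {V : Type*} [AddCommGroup V]
    [Module ℂ V] [FiniteDimensional ℂ V] (ρ : G →* Module.End ℂ V)
    (hd : (Module.finrank ℂ V : ℝ) ≤ D) (g : G) : ρ g = 1 := by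
  by_contra hne
  let b := Module.finBasis ℂ V
  let ψ : G →* Matrix (Fin (Module.finrank ℂ V)) (Fin (Module.finrank ℂ V)) ℂ :=
    ((LinearMap.toMatrixAlgEquiv b : Module.End ℂ V ≃ₐ[ℂ] _) : Module.End ℂ V →* _).comp ρ
  have := h _ ψ.toHomUnits (by
    intro hb
    apply hne
    have h1 : ψ.toHomUnits g = 1 := by
      have : ψ.toHomUnits g ∈ ψ.toHomUnits.range := ⟨g, rfl⟩
      rw [hb] at this
      simpa using this
    have h2 : ψ g = 1 := by
      have := congrArg Units.val h1
      simpa using this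
    apply (LinearMap.toMatrixAlgEquiv b).injective
    rw [map_one]
    exact h2)
  linarith

lemma qr_char {G : Type*} [Group G] {D : ℝ} (h : IsQR G D) (hD : 1 ≤ D) (f : G →* ℂ) (g : G) :
    f g = 1 := by
  let ρ : G →* Module.End ℂ ℂ := ((Algebra.lmul ℂ ℂ : ℂ →ₐ[ℂ] Module.End ℂ ℂ) : ℂ →* _).comp f
  have := qr_rep h ρ (by simpa using hD) g
  have h2 := congrArg (fun l : Module.End ℂ ℂ => l 1) this
  simpa [ρ] using h2

lemma qr_index {G : Type*} [Group G] {D : ℝ} (h : IsQR G D) (J : Subgroup G) [Finite (G ⧸ J)]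
    (hd : (Nat.card (G ⧸ J) : ℝ) ≤ D) (g : G) : g ∈ J := by
  classical
  have := Fintype.ofFinite (G ⧸ J)
  let ρ : G →* Module.End ℂ (G ⧸ J → ℂ) :=
    { toFun := fun g => LinearMap.funLeft ℂ ℂ (fun x => g⁻¹ • x)
      map_one' := by ext; simp [LinearMap.funLeft]
      map_mul' := by intro a b; ext; simp [LinearMap.funLeft, mul_smul] }
  have h1 := qr_rep h ρ (by simpa using hd) g⁻¹
  have h2 := congrFun (congrArg (fun l : Module.End ℂ (G ⧸ J → ℂ) =>
    l (Pi.single ((1 : G) : G ⧸ J) 1)) h1) ((1 : G) : G ⧸ J)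
  simp only [ρ, MonoidHom.coe_mk, OneHom.coe_mk, LinearMap.funLeft_apply, inv_inv] at h2
  rw [Module.End.one_apply, Pi.single_eq_same] at h2
  by_contra hg
  rw [Pi.single_eq_of_ne] at h2
  · simp at h2
  · intro hh
    apply hg
    change ((g * 1 : G) : G ⧸ J) = _ at hh
    rw [mul_one] at hh
    have := QuotientGroup.eq.1 hh.symm
    simpa using this

/-- translation action on functions -/
noncomputable def trRep (G X : Type*) [Group G] [MulAction G X] [Fintype X] :
    G →* Module.End ℂ (EuclideanSpace ℂ X) where
  toFun g :=
    { toFun := fun v => WithLp.toLp 2 (fun x => v (g⁻¹ • x))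
      map_add' := by intro a b; ext; simp
      map_smul' := by intro a b; ext; simp }
  map_one' := by ext; simp
  map_mul' := by intro a b; ext; simp [mul_smul]

lemma trRep_apply {G X : Type*} [Group G] [MulAction G X] [Fintype X] (g : G)
    (v : EuclideanSpace ℂ X) (x : X) : trRep G X g v x = v (g⁻¹ • x) := rfl

lemma toEuclideanLin_ap {X : Type*} [Fintype X] [DecidableEq X] (k : Matrix X X ℂ)
    (v : EuclideanSpace ℂ X) (x : X) : Matrix.toEuclideanLin k v x = ∑ y, k x y * v y := by
  simp [Matrix.toLpLin_apply, Matrix.mulVec, dotProduct]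

lemma trRep_comm {G X : Type*} [Group G] [MulAction G X] [Fintype X] [DecidableEq X]
    (k : Matrix X X ℂ) (hk : ∀ (g : G) x y, k (g • x) (g • y) = k x y) (g : G)
    (v : EuclideanSpace ℂ X) :
    Matrix.toEuclideanLin k (trRep G X g v) = trRep G X g (Matrix.toEuclideanLin k v) := by
  ext x
  rw [trRep_apply, toEuclideanLin_ap, toEuclideanLin_ap]
  simp_rw [trRep_apply]
  rw [← Equiv.sum_comp (MulAction.toPerm g)]
  refine Finset.sum_congr rfl fun y _ => ?_
  have := hk g (g⁻¹ • x) y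
  simp only [smul_inv_smul] at this
  simp [this]

lemma qr_op {G X : Type*} [Group G] [MulAction G X] [Fintype X] {D : ℝ} (hD : 0 < D)
    (h : IsQR G D) (k : X → X → ℂ) (hk : ∀ (g : G) x y, k (g • x) (g • y) = k x y)
    (v : X → ℂ)
    (hv : ∀ u : X → ℂ, (∀ (g : G) x, u (g • x) = u x) → ∑ x, (starRingEnd ℂ) (u x) * v x = 0) :
    ∑ x, ‖∑ y, k x y * v y‖ ^ 2 ≤ (∑ x, ∑ y, ‖k x y‖ ^ 2) / D * ∑ x, ‖v x‖ ^ 2 := by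
  classical
  set L := ∑ x, ∑ y, ‖k x y‖ ^ 2 with hL
  let kM : Matrix X X ℂ := Matrix.of k
  let T := Matrix.toEuclideanLin kM
  let S := Matrix.toEuclideanLin (kMᴴ * kM)
  have hTS : ∀ a b, inner ℂ (T a) (T b) = inner ℂ a (S b) := by
    intro a b
    have e1 : S b = LinearMap.adjoint T (T b) := by
      simp only [S, T]
      rw [← Matrix.toEuclideanLin_conjTranspose_eq_adjoint]
      simp [Matrix.toLpLin_apply]
    rw [e1, LinearMap.adjoint_inner_right]
  have hS : S.IsSymmetric := by
    intro a b
    rw [← hTS, ← inner_conj_symm, ← hTS, inner_conj_symm]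
  have hSk : ∀ (g : G) x y, (kMᴴ * kM) (g • x) (g • y) = (kMᴴ * kM) x y := by
    intro g x y
    simp only [Matrix.mul_apply, Matrix.conjTranspose_apply]
    rw [← Equiv.sum_comp (MulAction.toPerm g)]
    simp [kM, hk]
  -- eigenvalue bound
  have key : ∀ (μ : ℝ), L / D < μ → ∀ e ∈ Module.End.eigenspace S (μ : ℂ),
      ∀ g, trRep G X g e = e := by
    intro μ hμ e he g
    let E := Module.End.eigenspace S (μ : ℂ)
    have hinv : ∀ g : G, ∀ e ∈ E, trRep G X g e ∈ E := by
      intro g e he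
      rw [Module.End.mem_eigenspace_iff] at he ⊢
      rw [trRep_comm _ hSk, he, map_smul]
    let ρ : G →* Module.End ℂ E :=
      { toFun := fun g => (trRep G X g).restrict (hinv g)
        map_one' := by
          ext x y
          simp
        map_mul' := by
          intro a b
          ext x y
          simp }
    let b := stdOrthonormalBasis ℂ E
    have hb : Orthonormal ℂ (fun i => (b i : EuclideanSpace ℂ X)) :=
      b.orthonormal.comp_linearIsometry E.subtypeₗᵢ
    have h1 : ∀ i, ‖T (b i)‖ ^ 2 = μ := by
      intro i
      have h2 : S (b i) = (μ : ℂ) • (b i : EuclideanSpace ℂ X) :=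
        Module.End.mem_eigenspace_iff.1 (b i).2
      have h3 := hTS (b i) (b i)
      rw [h2, inner_smul_right, inner_self_eq_norm_sq_to_K, inner_self_eq_norm_sq_to_K,
        hb.1 i] at h3
      simp only [RCLike.ofReal_one, one_pow, mul_one] at h3
      apply Complex.ofReal_injective
      rw [Complex.ofReal_pow]
      exact h3
    have h4 : ∑ i, ‖T (b i)‖ ^ 2 ≤ L := by
      simp_rw [EuclideanSpace.norm_sq_eq]
      rw [Finset.sum_comm, hL]
      refine Finset.sum_le_sum fun x _ => ?_
      have := hb.sum_inner_products_le (s := Finset.univ)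
        (WithLp.toLp 2 (fun y => (starRingEnd ℂ) (k x y)))
      rw [EuclideanSpace.norm_sq_eq] at this
      refine le_trans (le_of_eq ?_) (this.trans (le_of_eq ?_))
      · refine Finset.sum_congr rfl fun i _ => ?_
        rw [← norm_inner_symm]
        congr 2
        simp only [T]
        rw [toEuclideanLin_ap]
        simp [PiLp.inner_apply, kM, mul_comm]
      · simp
    simp_rw [h1] at h4
    have hdim : (Module.finrank ℂ E : ℝ) ≤ D := by
      simp only [Finset.sum_const, Finset.card_univ, Fintype.card_fin, nsmul_eq_mul] at h4
      have hL0 : 0 ≤ L := by positivity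
      have hμ0 : 0 < μ := lt_of_le_of_lt (by positivity) hμ
      rw [div_lt_iff₀ hD] at hμ
      by_contra hc
      push Not at hc
      have : D * μ < (Module.finrank ℂ E : ℝ) * μ := mul_lt_mul_of_pos_right hc hμ0
      nlinarith
    have h5 := qr_rep h ρ hdim g
    have h6 := congrArg (fun l : Module.End ℂ E => ((l ⟨e, he⟩ : E) : EuclideanSpace ℂ X)) h5
    simpa [ρ] using h6
  let v' : EuclideanSpace ℂ X := WithLp.toLp 2 v
  have hl : ∑ x, ‖∑ y, k x y * v y‖ ^ 2 = ‖T v'‖ ^ 2 := by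
    rw [EuclideanSpace.norm_sq_eq]
    refine Finset.sum_congr rfl fun x _ => ?_
    simp only [T]
    rw [toEuclideanLin_ap]
    rfl
  have hr : ∑ x, ‖v x‖ ^ 2 = ‖v'‖ ^ 2 := by
    rw [EuclideanSpace.norm_sq_eq]
  rw [hl, hr]
  let b := hS.eigenvectorBasis rfl
  have e1 : ‖T v'‖ ^ 2 = ∑ i, hS.eigenvalues rfl i * ‖inner ℂ (b i) v'‖ ^ 2 := by
    have h1 := hTS v' v'
    rw [inner_self_eq_norm_sq_to_K, ← b.sum_inner_mul_inner] at h1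
    have h2 : ∀ i, inner ℂ v' (b i) * inner ℂ (b i) (S v') =
        ((hS.eigenvalues rfl i * ‖inner ℂ (b i) v'‖ ^ 2 : ℝ) : ℂ) := by
      intro i
      have h3 := hS.eigenvectorBasis_apply_self_apply rfl v' i
      rw [OrthonormalBasis.repr_apply_apply, OrthonormalBasis.repr_apply_apply] at h3
      rw [h3, ← inner_conj_symm, mul_left_comm, Complex.conj_mul']
      push_cast
      rfl
    simp_rw [h2] at h1
    rw [← Complex.ofReal_sum] at h1
    apply Complex.ofReal_injective
    rw [Complex.ofReal_pow]
    exact h1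
  have e2 : ‖v'‖ ^ 2 = ∑ i, ‖inner ℂ (b i) v'‖ ^ 2 := (b.sum_sq_norm_inner_right v').symm
  rw [e1, e2, Finset.mul_sum]
  refine Finset.sum_le_sum fun i _ => ?_
  by_cases hi : L / D < hS.eigenvalues rfl i
  · have hfix := key _ hi (b i) (hS.hasEigenvector_eigenvectorBasis rfl i).1
    have h0 : inner ℂ (b i) v' = 0 := by
      have := hv (fun x => b i x) (by
        intro g x
        have := congrArg (fun w : EuclideanSpace ℂ X => w (g • x)) (hfix g)
        simp only [trRep_apply, inv_smul_smul] at this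
        exact this.symm)
      rw [PiLp.inner_apply]
      simpa [v', mul_comm] using this
    rw [h0]; simp
  · push Not at hi
    exact mul_le_mul_of_nonneg_right hi (by positivity)

lemma gowers {G : Type*} [Group G] [Finite G] {D : ℝ} (hD : 0 < D) (h : IsQR G D)
    (B : Finset G) (hB : ∀ b ∈ B, b⁻¹ ∈ B)
    (hc : (Nat.card G : ℝ) ^ 3 < D * (B.card : ℝ) ^ 3) (z : G) :
    ∃ a ∈ B, ∃ b ∈ B, ∃ c ∈ B, a * b * c = z := by
  classical
  have := Fintype.ofFinite G
  by_contra hz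
  push Not at hz
  rw [Nat.card_eq_fintype_card] at hc
  set n : ℝ := (Fintype.card G : ℝ) with hn
  have hnpos : 0 < n := by rw [hn]; exact_mod_cast Fintype.card_pos
  set b : ℝ := (B.card : ℝ) with hb
  have hb0 : 0 ≤ b := by positivity
  let f : G → ℝ := fun x => if x ∈ B then 1 else 0
  let v : G → ℂ := fun x => ((f x - b / n : ℝ) : ℂ)
  let k : G → G → ℂ := fun x y => ((f (x⁻¹ * y) : ℝ) : ℂ)
  have hf : ∑ x, f x = b := by simp [f, hb]
  have hf2 : ∀ x, f x ^ 2 = f x := by intro x; simp only [f]; split_ifs <;> simp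
  have hfx : ∀ x : G, ∑ y, f (x⁻¹ * y) = b := by
    intro x
    rw [← hf]
    exact Equiv.sum_comp (Equiv.mulLeft x⁻¹) f
  have key := qr_op hD h k (by intro g x y; simp [k, mul_assoc]) v (by
    intro u hu
    have : ∀ x, u x = u 1 := fun x => by simpa using hu x 1
    simp_rw [this]
    rw [← Finset.mul_sum]
    have : ∑ x, v x = 0 := by
      simp only [v]
      rw [← Complex.ofReal_sum, Finset.sum_sub_distrib, hf]
      simp only [Finset.sum_const, Finset.card_univ, nsmul_eq_mul, ← hn]
      rw [mul_div_cancel₀ _ hnpos.ne', sub_self, Complex.ofReal_zero]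
    rw [this, mul_zero])
  have e1 : ∑ x, ∑ y, ‖k x y‖ ^ 2 = n * b := by
    simp only [k, Complex.norm_real, Real.norm_eq_abs, sq_abs, hf2, hfx]
    simp [hn]
  have e2 : ∑ x, ‖v x‖ ^ 2 ≤ b := by
    simp only [v, Complex.norm_real, Real.norm_eq_abs, sq_abs, sub_sq, hf2]
    rw [Finset.sum_add_distrib, Finset.sum_sub_distrib, ← Finset.sum_mul, ← Finset.mul_sum, hf]
    simp only [Finset.sum_const, Finset.card_univ, nsmul_eq_mul, ← hn]
    have : b - 2 * b * (b / n) + n * (b / n) ^ 2 = b - b ^ 2 / n := by field_simp; ring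
    rw [this]
    have : 0 ≤ b ^ 2 / n := by positivity
    linarith
  have e3 : b * (b / n * b) ^ 2 ≤ ∑ x, ‖∑ y, k x y * v y‖ ^ 2 := by
    have h1 : ∑ x ∈ B.map (Equiv.mulLeft z).toEmbedding, ‖∑ y, k x y * v y‖ ^ 2
        = b * (b / n * b) ^ 2 := by
      rw [Finset.sum_map]
      have : ∀ c ∈ B, ‖∑ y, k (z * c) y * v y‖ ^ 2 = (b / n * b) ^ 2 := by
        intro c hcB
        have : ∑ y, k (z * c) y * v y = ((- (b / n * b) : ℝ) : ℂ) := by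
          simp only [k, v]
          have h5 : -(b / n * b) = ∑ y, -(b / n * f ((z * c)⁻¹ * y)) := by
            rw [Finset.sum_neg_distrib, ← Finset.mul_sum, hfx]
          rw [h5, Complex.ofReal_sum]
          refine Finset.sum_congr rfl fun y _ => ?_
          have : f ((z * c)⁻¹ * y) * f y = 0 := by
            simp only [f]
            by_cases h1 : (z * c)⁻¹ * y ∈ B
            · by_cases h2 : y ∈ B
              · exfalso
                refine hz y h2 _ (hB _ h1) _ (hB _ hcB) ?_
                group
              · simp [h2]
            · rw [if_neg h1, zero_mul]
          rw [← Complex.ofReal_mul, mul_sub, this]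
          congr 1
          ring
        rw [this, Complex.norm_real, Real.norm_eq_abs, sq_abs, neg_sq]
      refine (Finset.sum_congr rfl this).trans ?_
      simp [hb]
    rw [← h1]
    exact Finset.sum_le_sum_of_subset_of_nonneg (Finset.subset_univ _) (fun _ _ _ => by positivity)
  rw [e1] at key
  have e4 : b * (b / n * b) ^ 2 ≤ n * b / D * b :=
    e3.trans (key.trans (by gcongr))
  have hbpos : 0 < b := by
    rcases hb0.lt_or_eq with h0 | h0
    · exact h0
    · exfalso
      rw [← h0] at hc
      have : 0 < n ^ 3 := by positivity
      norm_num at hc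
      linarith
  have e5 : b * (b / n * b) ^ 2 = b ^ 5 / n ^ 2 := by field_simp
  have e6 : n * b / D * b = n * b ^ 2 / D := by ring
  rw [e5, e6, div_le_div_iff₀ (by positivity) hD] at e4
  have : b ^ 2 * (D * b ^ 3) ≤ b ^ 2 * n ^ 3 := by nlinarith
  have := le_of_mul_le_mul_left this (by positivity)
  linarith

/-- Parseval -/
lemma parseval {V : Type*} [AddCommGroup V] [Fintype V] (F : V → ℂ) :
    ∑ χ : AddChar V ℂ, ‖∑ m, χ m * F m‖ ^ 2 = (Fintype.card V : ℝ) * ∑ m, ‖F m‖ ^ 2 := by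
  classical
  apply Complex.ofReal_injective
  push_cast
  have h1 : ∀ z : ℂ, ((‖z‖ : ℂ)) ^ 2 = z * (starRingEnd ℂ) z := by
    intro z; rw [Complex.mul_conj, Complex.normSq_eq_norm_sq]; push_cast; rfl
  simp_rw [h1, map_sum, map_mul, Finset.sum_mul_sum]
  rw [Finset.sum_comm, Finset.mul_sum]
  refine Finset.sum_congr rfl fun x _ => ?_
  rw [Finset.sum_comm]
  have : ∀ y, ∑ χ : AddChar V ℂ, χ x * F x * ((starRingEnd ℂ) (χ y) * (starRingEnd ℂ) (F y))
      = (if y = x then (Fintype.card V : ℂ) * (F x * (starRingEnd ℂ) (F x)) else 0) := by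
    intro y
    have h2 : ∀ χ : AddChar V ℂ, χ x * F x * ((starRingEnd ℂ) (χ y) * (starRingEnd ℂ) (F y))
      = χ (x - y) * (F x * (starRingEnd ℂ) (F y)) := by
      intro χ
      rw [sub_eq_add_neg, AddChar.map_add_eq_mul, AddChar.map_neg_eq_conj]
      ring
    simp_rw [h2]
    rw [← Finset.sum_mul, AddChar.sum_apply_eq_ite]
    by_cases hxy : y = x
    · subst hxy; simp
    · have : x - y ≠ 0 := sub_ne_zero.2 (Ne.symm hxy)
      simp [hxy, this]
  rw [Finset.sum_congr rfl (fun y _ => this y)]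
  simp

lemma central_step {G : Type*} [Group G] [Fintype G] {D : ℝ} (hD : 0 < D) (h : IsQR G D)
    {V : Type*} [AddCommGroup V] [Fintype V] (ι : V → G) (hadd : ∀ a b, ι (a + b) = ι a * ι b)
    (hcent : ∀ m g, ι m * g = g * ι m) (sel : G → G) (μ : G → V)
    (hsel : ∀ g, sel g * ι (μ g) = g) (C P : Finset G) (hP : ∀ c ∈ C, ∀ x, c * sel x ∈ P) :
    (Fintype.card G : ℝ) * C.card ≤ P.card * (C.card + Fintype.card G / D) := by
  classical
  set n : ℝ := (Fintype.card G : ℝ) with hn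
  have hnpos : 0 < n := by rw [hn]; exact_mod_cast Fintype.card_pos
  set c : ℝ := (C.card : ℝ) with hc
  have hc0 : 0 ≤ c := Nat.cast_nonneg _
  set N : ℝ := (Fintype.card V : ℝ) with hN
  have hNpos : 0 < N := by rw [hN]; exact_mod_cast Fintype.card_pos
  let f : G → ℂ := fun x => if x ∈ C then 1 else 0
  have hf : ∑ x, f x = (c : ℂ) := by simp [f, hc]
  have hf2 : ∑ x, ‖f x‖ ^ 2 = c := by
    have : ∀ x, ‖f x‖ ^ 2 = if x ∈ C then 1 else 0 := by
      intro x; simp only [f]; split_ifs <;> simp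
    simp [this, hc]
  -- the chi-component
  let pr : AddChar V ℂ → (G → ℂ) → G → ℂ := fun χ F g => ∑ m, χ m * F (g * ι m)
  have hpr : ∀ χ F g m, pr χ F (g * ι m) = χ (-m) * pr χ F g := by
    intro χ F g m
    simp only [pr]
    rw [Finset.mul_sum, ← Equiv.sum_comp (Equiv.addLeft (-m))]
    refine Finset.sum_congr rfl fun k _ => ?_
    simp only [Equiv.coe_addLeft]
    rw [AddChar.map_add_eq_mul, mul_assoc (g : G), ← hadd, add_neg_cancel_left, mul_assoc]
  have hplan : ∀ F : G → ℂ, ∑ χ, ∑ g, ‖pr χ F g‖ ^ 2 = N ^ 2 * ∑ g, ‖F g‖ ^ 2 := by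
    intro F
    rw [Finset.sum_comm]
    simp only [pr]
    simp_rw [fun g : G => parseval (fun m => F (g * ι m))]
    rw [← Finset.mul_sum, Finset.sum_comm]
    have : ∀ m, ∑ g, ‖F (g * ι m)‖ ^ 2 = ∑ g, ‖F g‖ ^ 2 := fun m =>
      Equiv.sum_comp (Equiv.mulRight (ι m)) (fun g => ‖F g‖ ^ 2)
    simp_rw [this]
    simp [← hN]
    ring
  let T : G → ℂ := fun g => ∑ x, f (g * (sel x)⁻¹)
  have hT : ∀ χ g, pr χ T g = ∑ y, χ (-μ (y⁻¹ * g)) * pr χ f y := by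
    intro χ g
    have h1 : pr χ T g = ∑ x, pr χ f (g * (sel x)⁻¹) := by
      simp only [pr, T]
      simp_rw [Finset.mul_sum]
      rw [Finset.sum_comm]
      refine Finset.sum_congr rfl fun x _ => Finset.sum_congr rfl fun m _ => ?_
      rw [mul_assoc, hcent, mul_assoc]
    rw [h1, ← Equiv.sum_comp ((Equiv.inv G).trans (Equiv.mulRight g))]
    refine Finset.sum_congr rfl fun y _ => ?_
    simp only [Equiv.trans_apply, Equiv.inv_apply, Equiv.coe_mulRight]
    rw [← hpr]
    congr 1
    have := hsel (y⁻¹ * g)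
    rw [← hcent] at this
    have h2 : sel (y⁻¹ * g) = (ι (μ (y⁻¹ * g)))⁻¹ * (y⁻¹ * g) := by
      rw [eq_inv_mul_iff_mul_eq]; exact this
    rw [h2]
    have h3 := hcent (μ (y⁻¹ * g)) y
    rw [← h3, _root_.mul_inv_rev, _root_.mul_inv_rev, inv_inv, inv_inv, ← mul_assoc, mul_inv_cancel_left, h3]
  have hbd : ∀ χ : AddChar V ℂ, ∑ g, ‖pr χ T g‖ ^ 2 ≤
      (if χ = 0 then n * N ^ 2 * c ^ 2 else 0) + n ^ 2 / D * ∑ g, ‖pr χ f g‖ ^ 2 := by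
    intro χ
    have hsum : ∑ g, pr χ f g = (∑ m, χ m) * c := by
      simp only [pr]
      rw [Finset.sum_comm, Finset.sum_mul]
      refine Finset.sum_congr rfl fun m _ => ?_
      rw [← Finset.mul_sum, ← hf]
      congr 1
      exact Equiv.sum_comp (Equiv.mulRight (ι m)) f
    by_cases hχ : χ = 0
    · subst hχ
      have h1 : ∀ g, pr 0 T g = ((N * c : ℝ) : ℂ) := by
        intro g
        rw [hT]
        simp only [AddChar.zero_apply, one_mul]
        rw [hsum]
        simp [hN]
      simp_rw [h1, Complex.norm_real, Real.norm_eq_abs, sq_abs]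
      simp only [Finset.sum_const, Finset.card_univ, nsmul_eq_mul, ← hn, if_true]
      have : 0 ≤ n ^ 2 / D * ∑ g, ‖pr 0 f g‖ ^ 2 := by positivity
      nlinarith
    · have key := qr_op hD h (fun g y => χ (-μ (y⁻¹ * g))) (by intro g x y; simp [mul_assoc])
        (pr χ f) (by
          intro u hu
          have : ∀ x, u x = u 1 := fun x => by simpa using hu x 1
          simp_rw [this]
          rw [← Finset.mul_sum, hsum, AddChar.sum_eq_ite, if_neg hχ]
          simp)
      simp only [AddChar.norm_apply] at key
      simp_rw [hT]
      refine key.trans ?_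
      simp [hχ, ← hn, sq]
  have hTn : ∑ g, ‖T g‖ ^ 2 ≤ n * c ^ 2 + n ^ 2 / D * c := by
    have h1 := Finset.sum_le_sum (s := Finset.univ) (fun χ _ => hbd χ)
    rw [hplan, Finset.sum_add_distrib, ← Finset.mul_sum, hplan, hf2] at h1
    simp only [Finset.sum_ite_eq', Finset.mem_univ, if_true] at h1
    have h2 : N ^ 2 * ∑ g, ‖T g‖ ^ 2 ≤ N ^ 2 * (n * c ^ 2 + n ^ 2 / D * c) := by linarith
    exact le_of_mul_le_mul_left h2 (by positivity)
  have hTs : ∑ g, T g = ((n * c : ℝ) : ℂ) := by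
    simp only [T]
    rw [Finset.sum_comm]
    have : ∀ x, ∑ g, f (g * (sel x)⁻¹) = c := by
      intro x
      rw [← hf]
      exact Equiv.sum_comp (Equiv.mulRight (sel x)⁻¹) f
    simp_rw [this]
    simp [hn]
  have hsupp : ∀ g, g ∉ P → T g = 0 := by
    intro g hg
    refine Finset.sum_eq_zero fun x _ => ?_
    simp only [f]
    rw [if_neg]
    intro hx
    apply hg
    have := hP _ hx x
    simpa using this
  have hCS : (n * c) ^ 2 ≤ P.card * ∑ g, ‖T g‖ ^ 2 := by
    have h1 : n * c ≤ ∑ g ∈ P, ‖T g‖ := by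
      have h2 : ∑ g ∈ P, T g = ((n * c : ℝ) : ℂ) := by
        rw [← hTs]
        exact Finset.sum_subset (Finset.subset_univ _) (fun g _ hg => hsupp g hg)
      calc n * c ≤ |n * c| := le_abs_self _
        _ = ‖∑ g ∈ P, T g‖ := by rw [h2, Complex.norm_real, Real.norm_eq_abs]
        _ ≤ _ := norm_sum_le _ _
    have h3 : (n * c) ^ 2 ≤ (∑ g ∈ P, ‖T g‖) ^ 2 := by
      exact pow_le_pow_left₀ (mul_nonneg hnpos.le hc0) h1 2
    refine h3.trans ((sq_sum_le_card_mul_sum_sq).trans ?_)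
    refine mul_le_mul_of_nonneg_left ?_ (Nat.cast_nonneg _)
    exact Finset.sum_le_sum_of_subset_of_nonneg (Finset.subset_univ _) (fun _ _ _ => sq_nonneg _)
  have hfin : (n * c) ^ 2 ≤ P.card * (n * c ^ 2 + n ^ 2 / D * c) :=
    hCS.trans (mul_le_mul_of_nonneg_left hTn (Nat.cast_nonneg _))
  rcases hc0.lt_or_eq with h0 | h0
  · have : (n * c) * (n * c) ≤ (n * c) * (P.card * (c + n / D)) := by
      calc (n * c) * (n * c) = (n * c) ^ 2 := by ring
        _ ≤ _ := hfin
        _ = _ := by ring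
    exact le_of_mul_le_mul_left this (mul_pos hnpos h0)
  · rw [← h0, mul_zero, zero_add]
    exact mul_nonneg (Nat.cast_nonneg _) (div_nonneg hnpos.le hD.le)

lemma unit_mul_sub_one {a b : ℂ} (ha : ‖a‖ = 1) : ‖a * b - 1‖ ≤ ‖a - 1‖ + ‖b - 1‖ := by
  have : a * b - 1 = (a - 1) + a * (b - 1) := by ring
  rw [this]
  refine (norm_add_le _ _).trans ?_
  rw [norm_mul, ha, one_mul]

/-- Fourier coefficient of a finite set -/
noncomputable def hat {V : Type*} [AddCommGroup V] (Y : Finset V) (χ : AddChar V ℂ) : ℂ :=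
  ∑ y ∈ Y, χ y

lemma hat_parseval {V : Type*} [AddCommGroup V] [Fintype V] (Y : Finset V) :
    ∑ χ : AddChar V ℂ, ‖hat Y χ‖ ^ 2 = (Fintype.card V : ℝ) * Y.card := by
  classical
  have := parseval (fun y => if y ∈ Y then (1 : ℂ) else 0)
  have h1 : ∀ χ : AddChar V ℂ, ∑ m, χ m * (if m ∈ Y then (1 : ℂ) else 0) = hat Y χ := by
    intro χ; simp [hat]
  simp_rw [h1] at this
  rw [this]
  congr 1
  have h2 : ∀ y, ‖(if y ∈ Y then (1 : ℂ) else 0)‖ ^ 2 = if y ∈ Y then (1 : ℝ) else 0 := by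
    intro y; split_ifs <;> simp
  simp [h2]

lemma hat_sq {V : Type*} [AddCommGroup V] (Y : Finset V) (χ : AddChar V ℂ) :
    hat Y χ ^ 2 = ∑ p ∈ Y ×ˢ Y, χ (p.1 + p.2) := by
  rw [sq, hat, Finset.sum_mul_sum, Finset.sum_product]
  simp [AddChar.map_add_eq_mul]

lemma hat_sq_norm {V : Type*} [AddCommGroup V] [Fintype V] (Y : Finset V)
    (hneg : ∀ y ∈ Y, -y ∈ Y) (χ : AddChar V ℂ) : hat Y χ ^ 2 = ((‖hat Y χ‖ ^ 2 : ℝ) : ℂ) := by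
  have : (starRingEnd ℂ) (hat Y χ) = hat Y χ := by
    rw [hat, map_sum]
    refine Finset.sum_nbij' (fun y => -y) (fun y => -y) hneg hneg (by simp) (by simp) ?_
    intro y _
    rw [AddChar.map_neg_eq_conj]
  rw [← Complex.normSq_eq_norm_sq, ← Complex.mul_conj, this, sq]

lemma hat_four {V : Type*} [AddCommGroup V] [Fintype V] [DecidableEq V] (Y : Finset V)
    {L : ℝ} (hL : 0 < L) (hne : 0 < Y.card)
    (h2 : ((Y + Y).card : ℝ) ≤ L * Y.card) :
    (Fintype.card V : ℝ) * (Y.card : ℝ) ^ 3 / L ≤ ∑ χ : AddChar V ℂ, ‖hat Y χ‖ ^ 4 := by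
  classical
  let r : V → ℝ := fun v => ((Y ×ˢ Y).filter (fun p => p.1 + p.2 = v)).card
  have hr : ∀ χ : AddChar V ℂ, ∑ v, χ v * (r v : ℂ) = hat Y χ ^ 2 := by
    intro χ
    rw [hat_sq, ← Finset.sum_fiberwise (Y ×ˢ Y) (fun p => p.1 + p.2)]
    refine Finset.sum_congr rfl fun v _ => ?_
    rw [Finset.sum_congr rfl (g := fun _ => χ v)]
    · simp [r, mul_comm]
    · intro p hp
      rw [(Finset.mem_filter.1 hp).2]
  have hp := parseval (fun v => (r v : ℂ))
  simp_rw [hr] at hp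
  have e1 : ∀ χ : AddChar V ℂ, ‖hat Y χ ^ 2‖ ^ 2 = ‖hat Y χ‖ ^ 4 := by
    intro χ; rw [norm_pow, ← pow_mul]
  simp_rw [e1, Complex.norm_real, Real.norm_eq_abs, sq_abs] at hp
  rw [hp, mul_div_assoc]
  refine mul_le_mul_of_nonneg_left ?_ (Nat.cast_nonneg _)
  have hsupp : ∀ v, v ∉ Y + Y → r v = 0 := by
    intro v hv
    simp only [r]
    rw [Nat.cast_eq_zero, Finset.card_eq_zero, Finset.filter_eq_empty_iff]
    intro p hp hpv
    rw [Finset.mem_product] at hp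
    exact hv (hpv ▸ Finset.add_mem_add hp.1 hp.2)
  have hs : ∑ v ∈ Y + Y, r v = (Y.card : ℝ) ^ 2 := by
    rw [Finset.sum_subset (Finset.subset_univ _) (fun v _ hv => hsupp v hv)]
    simp only [r]
    rw [← Nat.cast_sum, Finset.sum_card_fiberwise_eq_card_filter]
    simp [sq]
  have hcs := sq_sum_le_card_mul_sum_sq (s := Y + Y) (f := r)
  rw [hs] at hcs
  have h3 : ∑ v ∈ Y + Y, r v ^ 2 ≤ ∑ v, r v ^ 2 :=
    Finset.sum_le_sum_of_subset_of_nonneg (Finset.subset_univ _) (fun _ _ _ => sq_nonneg _)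
  set R := ∑ v, r v ^ 2
  have hR : 0 ≤ ∑ v ∈ Y + Y, r v ^ 2 := Finset.sum_nonneg (fun _ _ => sq_nonneg _)
  have hy : (0 : ℝ) < Y.card := by exact_mod_cast hne
  rw [div_le_iff₀ hL]
  have h4 : ((Y.card : ℝ) ^ 2) ^ 2 ≤ L * Y.card * R :=
    hcs.trans (mul_le_mul h2 h3 hR (by positivity))
  have h5 : (Y.card : ℝ) * (Y.card : ℝ) ^ 3 ≤ Y.card * (R * L) := by nlinarith
  exact le_of_mul_le_mul_left h5 hy

lemma bogolyubov {V : Type*} [AddCommGroup V] [Fintype V] [DecidableEq V] (Y : Finset V)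
    (hneg : ∀ y ∈ Y, -y ∈ Y) {L : ℝ} (hL : 0 < L) (hne : 0 < Y.card)
    (h2 : ((Y + Y).card : ℝ) ≤ L * Y.card) (x : V)
    (hx : ∀ χ : AddChar V ℂ, (Y.card : ℝ) ^ 2 ≤ 4 * L * ‖hat Y χ‖ ^ 2 → ‖χ x - 1‖ ≤ 1 / 2) :
    x ∈ Y + Y + (Y + Y) := by
  classical
  by_contra hxn
  have hy : (0 : ℝ) < Y.card := by exact_mod_cast hne
  have hV : (0 : ℝ) < Fintype.card V := by exact_mod_cast Fintype.card_pos
  have h4 : ∀ χ : AddChar V ℂ, ((‖hat Y χ‖ ^ 4 : ℝ) : ℂ) =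
      ∑ q ∈ (Y ×ˢ Y) ×ˢ (Y ×ˢ Y), χ (q.1.1 + q.1.2 + (q.2.1 + q.2.2)) := by
    intro χ
    have : ((‖hat Y χ‖ ^ 4 : ℝ) : ℂ) = hat Y χ ^ 2 * hat Y χ ^ 2 := by
      rw [hat_sq_norm Y hneg, ← Complex.ofReal_mul, ← pow_add]
    rw [this, hat_sq, Finset.sum_mul_sum, Finset.sum_product (Y ×ˢ Y) (Y ×ˢ Y)]
    simp only [AddChar.map_add_eq_mul]
  have hz : ∑ χ : AddChar V ℂ, ((‖hat Y χ‖ ^ 4 : ℝ) : ℂ) * χ x = 0 := by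
    simp_rw [h4, Finset.sum_mul]
    rw [Finset.sum_comm]
    refine Finset.sum_eq_zero fun q hq => ?_
    simp_rw [← AddChar.map_add_eq_mul]
    rw [AddChar.sum_apply_eq_ite, if_neg]
    intro h0
    apply hxn
    simp only [Finset.mem_product] at hq
    have : x = (-q.1.1) + (-q.1.2) + ((-q.2.1) + (-q.2.2)) := by
      rw [add_comm, ← neg_eq_iff_add_eq_zero] at h0
      rw [← neg_neg x, h0]; abel
    rw [this]
    exact Finset.add_mem_add (Finset.add_mem_add (hneg _ hq.1.1) (hneg _ hq.1.2))
      (Finset.add_mem_add (hneg _ hq.2.1) (hneg _ hq.2.2))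
  have hre := congrArg Complex.re hz
  simp only [Complex.re_sum, Complex.re_ofReal_mul, Complex.zero_re] at hre
  have hbd : ∀ χ : AddChar V ℂ, 1 / 2 * ‖hat Y χ‖ ^ 4 - 3 / 2 * ((Y.card : ℝ) ^ 2 / (4 * L)) *
      ‖hat Y χ‖ ^ 2 ≤ ‖hat Y χ‖ ^ 4 * (χ x).re := by
    intro χ
    set t := ‖hat Y χ‖ ^ 2 with ht
    have ht0 : 0 ≤ t := sq_nonneg _
    have e4 : ‖hat Y χ‖ ^ 4 = t ^ 2 := by rw [ht, ← pow_mul]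
    rw [e4]
    have hlb : -1 ≤ (χ x).re := by
      have := (Complex.abs_re_le_norm (χ x))
      rw [AddChar.norm_apply] at this
      exact (abs_le.1 this).1
    by_cases hS : (Y.card : ℝ) ^ 2 ≤ 4 * L * t
    · have h1 := hx χ hS
      have h3 := (Complex.abs_re_le_norm (χ x - 1)).trans h1
      have h5 := (abs_le.1 h3).1
      simp at h5
      have : 0 ≤ 3 / 2 * ((Y.card : ℝ) ^ 2 / (4 * L)) * t := by positivity
      have : t ^ 2 * (1 / 2) ≤ t ^ 2 * (χ x).re := by
        apply mul_le_mul_of_nonneg_left _ (sq_nonneg _); linarith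
      linarith
    · push Not at hS
      have h6 : t ≤ (Y.card : ℝ) ^ 2 / (4 * L) := by
        rw [le_div_iff₀ (by positivity)]; linarith
      have h7 : t ^ 2 ≤ (Y.card : ℝ) ^ 2 / (4 * L) * t := by nlinarith
      have : t ^ 2 * (-1) ≤ t ^ 2 * (χ x).re := mul_le_mul_of_nonneg_left hlb (sq_nonneg _)
      linarith
  have hsum := Finset.sum_le_sum (s := Finset.univ) (fun χ _ => hbd χ)
  rw [hre, Finset.sum_sub_distrib, ← Finset.mul_sum, ← Finset.mul_sum, hat_parseval] at hsum
  have h5 := hat_four Y hL hne h2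
  have h6 : 3 / 2 * ((Y.card : ℝ) ^ 2 / (4 * L)) * (Fintype.card V * Y.card) =
    3 / 8 * ((Fintype.card V : ℝ) * (Y.card : ℝ) ^ 3 / L) := by field_simp; ring
  rw [h6] at hsum
  have : 0 < (Fintype.card V : ℝ) * (Y.card : ℝ) ^ 3 / L := by positivity
  linarith

lemma core_two {V : Type*} [AddCommGroup V] [Fintype V] [DecidableEq V] {G : Type*} [Group G]
    [DistribMulAction G V] (Y Y5 Y6 : Finset V)
    (hneg : ∀ y ∈ Y, -y ∈ Y) (hG : ∀ (g : G), ∀ y ∈ Y, g • y ∈ Y)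
    (hG5 : ∀ (g : G), ∀ y ∈ Y5, g • y ∈ Y5) (hG6 : ∀ (g : G), ∀ y ∈ Y6, g • y ∈ Y6)
    (h56 : ∀ x ∈ Y5, ∀ y ∈ Y, x - y ∈ Y6)
    {D : ℝ} (hD : 0 < D) (h : IsQR G D) (χ : AddChar V ℂ) (g : G) :
    ‖hat Y χ‖ ^ 2 * ∑ x ∈ Y5, ‖χ (g • x - x) - 1‖ ^ 2 ≤ 4 * (Y5.card * Y.card) / D * Y6.card := by
  classical
  have hGi : ∀ (Z : Finset V), (∀ (g : G), ∀ y ∈ Z, g • y ∈ Z) → ∀ (g : G) y, g • y ∈ Z ↔ y ∈ Z := by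
    intro Z hZ g y
    refine ⟨fun hy => ?_, hZ g y⟩
    have := hZ g⁻¹ _ hy
    simpa using this
  let k : V → V → ℂ := fun x y => if x ∈ Y5 ∧ x - y ∈ Y then 1 else 0
  let w : V → ℂ := fun y => if y ∈ Y6 then χ y else 0
  let v : V → ℂ := fun y => w y - w (g • y)
  have key := qr_op hD h k (by
      intro g x y
      simp only [k, ← smul_sub, hGi Y hG, hGi Y5 hG5]) v (by
      intro u hu
      simp only [v, mul_sub]
      rw [Finset.sum_sub_distrib, sub_eq_zero, ← Equiv.sum_comp (MulAction.toPerm g)]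
      refine Finset.sum_congr rfl fun x _ => ?_
      simp [hu])
  have e1 : ∑ x, ∑ y, ‖k x y‖ ^ 2 = Y5.card * Y.card := by
    have : ∀ x, ∑ y, ‖k x y‖ ^ 2 = if x ∈ Y5 then (Y.card : ℝ) else 0 := by
      intro x
      have h1 : ∀ y, ‖k x y‖ ^ 2 = if x ∈ Y5 then (if x - y ∈ Y then (1 : ℝ) else 0) else 0 := by
        intro y
        simp only [k]
        split_ifs <;> simp_all
      simp_rw [h1]
      by_cases hx : x ∈ Y5
      · simp only [hx, if_true]
        refine (Equiv.sum_comp (Equiv.subLeft x) (fun z => if z ∈ Y then (1 : ℝ) else 0)).trans ?_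
        simp
      · simp [hx]
    simp_rw [this]
    simp
  have e2 : ∑ x, ‖v x‖ ^ 2 ≤ 4 * Y6.card := by
    have : ∀ x, ‖v x‖ ^ 2 ≤ if x ∈ Y6 then 4 else 0 := by
      intro x
      simp only [v, w, hGi Y6 hG6]
      split_ifs with hx
      · have : ‖χ x - χ (g • x)‖ ≤ 2 := by
          refine (norm_sub_le _ _).trans ?_
          rw [AddChar.norm_apply, AddChar.norm_apply]; norm_num
        nlinarith [norm_nonneg (χ x - χ (g • x))]
      · simp
    refine (Finset.sum_le_sum fun x _ => this x).trans ?_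
    simp [mul_comm]
  have e3 : ∀ x ∈ Y5, ‖∑ y, k x y * v y‖ ^ 2 = ‖hat Y χ‖ ^ 2 * ‖χ (g • x - x) - 1‖ ^ 2 := by
    intro x hx
    have h1 : ∑ y, k x y * v y = χ x * hat Y χ - χ (g • x) * hat Y χ := by
      rw [← Equiv.sum_comp (Equiv.subLeft x)]
      have h2 : ∀ z, k x (Equiv.subLeft x z) * v (Equiv.subLeft x z) =
          if z ∈ Y then χ x * χ (-z) - χ (g • x) * χ (g • (-z)) else 0 := by
        intro z
        simp only [Equiv.subLeft_apply, k, hx, sub_sub_cancel, true_and]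
        by_cases hz : z ∈ Y
        · simp only [hz, if_true, one_mul, v, w]
          rw [if_pos (h56 x hx z hz), if_pos (hG6 g _ (h56 x hx z hz)), ← AddChar.map_add_eq_mul,
            ← AddChar.map_add_eq_mul, ← smul_add, ← sub_eq_add_neg x z]
        · simp [hz]
      simp_rw [h2]
      rw [Finset.sum_ite_mem, Finset.univ_inter, Finset.sum_sub_distrib, ← Finset.mul_sum,
        ← Finset.mul_sum]
      congr 2
      · exact Finset.sum_nbij' (fun y => -y) (fun y => -y) hneg hneg (by simp) (by simp) (by simp)
      · refine Finset.sum_nbij' (fun y => g • (-y)) (fun y => -(g⁻¹ • y))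
          (fun y hy => hG _ _ (hneg _ hy)) (fun y hy => hneg _ (hG _ _ hy)) ?_ ?_ ?_
        · simp
        · simp
        · simp
    rw [h1, ← sub_mul, norm_mul, mul_pow, mul_comm]
    congr 2
    have : χ (g • x - x) - 1 = χ (-x) * (χ (g • x) - χ x) := by
      rw [mul_sub, ← AddChar.map_add_eq_mul, ← AddChar.map_add_eq_mul, neg_add_cancel,
        AddChar.map_zero_eq_one, neg_add_eq_sub]
    rw [this, norm_mul, AddChar.norm_apply, one_mul, norm_sub_rev]
  rw [e1] at key
  rw [Finset.mul_sum, ← Finset.sum_congr rfl e3]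
  calc _ ≤ ∑ x, ‖∑ y, k x y * v y‖ ^ 2 :=
        Finset.sum_le_sum_of_subset_of_nonneg (Finset.subset_univ _) (fun _ _ _ => sq_nonneg _)
    _ ≤ _ := key
    _ ≤ Y5.card * Y.card / D * (4 * Y6.card) := by gcongr
    _ = _ := by ring

lemma core_three {V : Type*} [AddCommGroup V] [Fintype V] [DecidableEq V] {G : Type*} [Group G]
    [DistribMulAction G V] (Y Y4 Y5 Y6 : Finset V) (hy0 : 0 < Y.card)
    (hneg : ∀ y ∈ Y, -y ∈ Y) (hG : ∀ (g : G), ∀ y ∈ Y, g • y ∈ Y)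
    (hG5 : ∀ (g : G), ∀ y ∈ Y5, g • y ∈ Y5) (hG6 : ∀ (g : G), ∀ y ∈ Y6, g • y ∈ Y6)
    (h56 : ∀ x ∈ Y5, ∀ y ∈ Y, x - y ∈ Y6) (h15 : Y ⊆ Y5)
    (h45 : ∀ x ∈ Y4, ∀ y ∈ Y, x + y ∈ Y5)
    {D L : ℝ} (hL : 0 < L) (hL5 : (Y5.card : ℝ) ≤ L * Y.card) (hL6 : (Y6.card : ℝ) ≤ L * Y.card)
    (hD : 65536 * L ^ 3 ≤ D) (h : IsQR G D) (χ : AddChar V ℂ)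
    (hχ : (Y.card : ℝ) ^ 2 ≤ 4 * L * ‖hat Y χ‖ ^ 2) (g : G) (x : V) (hx : x ∈ Y4) :
    ‖χ (g • x - x) - 1‖ ≤ 1 / 32 := by
  have hD0 : 0 < D := lt_of_lt_of_le (by positivity) hD
  have key := core_two Y Y5 Y6 hneg hG hG5 hG6 h56 hD0 h χ g
  set y : ℝ := (Y.card : ℝ) with hy
  have hy' : 0 < y := by rw [hy]; exact_mod_cast hy0
  set T5 := ∑ x ∈ Y5, ‖χ (g • x - x) - 1‖ ^ 2 with hS
  have hS0 : 0 ≤ T5 := Finset.sum_nonneg (fun _ _ => sq_nonneg _)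
  have h1 : y ^ 2 * T5 ≤ 16 * L ^ 3 * y ^ 3 / D := by
    calc y ^ 2 * T5 ≤ 4 * L * ‖hat Y χ‖ ^ 2 * T5 := by gcongr
      _ = 4 * L * (‖hat Y χ‖ ^ 2 * T5) := by ring
      _ ≤ 4 * L * (4 * (Y5.card * y) / D * Y6.card) := by gcongr
      _ ≤ 4 * L * (4 * ((L * y) * y) / D * (L * y)) := by gcongr
      _ = _ := by ring
  have h2 : T5 ≤ 16 * L ^ 3 * y / D := by
    have : y ^ 2 * T5 ≤ y ^ 2 * (16 * L ^ 3 * y / D) := h1.trans (le_of_eq (by ring))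
    exact le_of_mul_le_mul_left this (by positivity)
  have h3 : ∀ z ∈ Y, ‖χ (g • x - x) - 1‖ ^ 2 ≤
      2 * ‖χ (g • (x + z) - (x + z)) - 1‖ ^ 2 + 2 * ‖χ (g • z - z) - 1‖ ^ 2 := by
    intro z hz
    have e : χ (g • x - x) - 1 = χ (-(g • z - z)) * ((χ (g • (x + z) - (x + z)) - 1) -
        (χ (g • z - z) - 1)) := by
      rw [sub_sub_sub_cancel_right, mul_sub, ← AddChar.map_add_eq_mul, ← AddChar.map_add_eq_mul,
        neg_add_cancel, AddChar.map_zero_eq_one, smul_add]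
      congr 2
      abel
    rw [e, norm_mul, AddChar.norm_apply, one_mul]
    have := norm_sub_le (χ (g • (x + z) - (x + z)) - 1) (χ (g • z - z) - 1)
    have h0 := norm_nonneg ((χ (g • (x + z) - (x + z)) - 1) - (χ (g • z - z) - 1))
    nlinarith [sq_nonneg (‖χ (g • (x + z) - (x + z)) - 1‖ - ‖χ (g • z - z) - 1‖)]
  have h4 := Finset.sum_le_sum h3
  rw [Finset.sum_add_distrib, ← Finset.mul_sum, ← Finset.mul_sum] at h4
  have h5 : ∑ z ∈ Y, ‖χ (g • z - z) - 1‖ ^ 2 ≤ T5 :=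
    Finset.sum_le_sum_of_subset_of_nonneg h15 (fun _ _ _ => sq_nonneg _)
  have h6 : ∑ z ∈ Y, ‖χ (g • (x + z) - (x + z)) - 1‖ ^ 2 ≤ T5 := by
    have : ∑ z ∈ Y, ‖χ (g • (x + z) - (x + z)) - 1‖ ^ 2 =
      ∑ z ∈ Y.map (Equiv.addLeft x).toEmbedding, ‖χ (g • z - z) - 1‖ ^ 2 := by
      rw [Finset.sum_map]; rfl
    rw [this]
    refine Finset.sum_le_sum_of_subset_of_nonneg ?_ (fun _ _ _ => sq_nonneg _)
    intro z hz
    obtain ⟨t, ht, rfl⟩ := Finset.mem_map.1 hz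
    exact h45 x hx t ht
  simp only [Finset.sum_const, nsmul_eq_mul, ← hy] at h4
  have h7 : y * ‖χ (g • x - x) - 1‖ ^ 2 ≤ y * (64 * L ^ 3 / D) := by
    have : y * (64 * L ^ 3 / D) = 4 * (16 * L ^ 3 * y / D) := by ring
    linarith
  have h8 := le_of_mul_le_mul_left h7 hy'
  have h9 : 64 * L ^ 3 / D ≤ (1 / 32) ^ 2 := by
    rw [div_le_iff₀ hD0]; linarith
  exact le_of_sq_le_sq (h8.trans h9) (by norm_num)

lemma halve {V : Type*} [AddCommGroup V] {G : Type*} [Group G]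
    [DistribMulAction G V] (Y Y4 : Finset V) (S : AddChar V ℂ → Prop)
    (hn : ∀ (χ : AddChar V ℂ) x, ‖χ x‖ = 1)
    (h14 : Y ⊆ Y4)
    (hbog : ∀ x, (∀ χ, S χ → ‖χ x - 1‖ ≤ 1 / 2) → x ∈ Y4)
    (hsm : ∀ χ, S χ → ∀ (g : G), ∀ x ∈ Y4, ‖χ (g • x - x) - 1‖ ≤ 1 / 32)
    (δ : ℝ) (hδ0 : 0 < δ) (hδ : δ ≤ 1 / 4)
    (hB : ∀ χ, S χ → ∀ g h : G, ∀ x ∈ Y, ‖χ (g • (h • x - x) - (h • x - x)) - 1‖ ≤ δ) :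
    ∀ χ, S χ → ∀ g h : G, ∀ x ∈ Y, ‖χ (g • (h • x - x) - (h • x - x)) - 1‖ ≤ δ / 2 := by
  intro χ hχ g h x hx
  set u := h • x - x with hu
  have hneg1 : ∀ (χ : AddChar V ℂ) x, ‖χ (-x) - 1‖ = ‖χ x - 1‖ := by
    intro χ x
    have : χ (-x) - 1 = χ (-x) * (1 - χ x) := by
      rw [mul_sub, ← AddChar.map_add_eq_mul, neg_add_cancel, AddChar.map_zero_eq_one, mul_one]
    rw [this, norm_mul, hn, one_mul, norm_sub_rev]
  have h1 : ∀ χ, S χ → ∀ n : ℕ, ‖χ (n • u - (h ^ n • x - x)) - 1‖ ≤ n * δ := by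
    intro χ hχ n
    induction n with
    | zero => simp
    | succ n ih =>
      have e : (n + 1) • u - (h ^ (n + 1) • x - x) =
          (n • u - (h ^ n • x - x)) + (-(h ^ n • u - u)) := by
        rw [add_smul, one_smul, pow_succ, mul_smul]
        have e2 : h ^ n • u = h ^ n • h • x - h ^ n • x := by rw [hu, smul_sub]
        rw [e2]
        abel
      rw [e, AddChar.map_add_eq_mul]
      refine (unit_mul_sub_one (hn _ _)).trans ?_
      rw [hneg1]
      have := hB χ hχ (h ^ n) h x hx
      push_cast
      rw [add_mul, one_mul]
      exact add_le_add ih this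
  have h2 : ∀ n : ℕ, n * δ ≤ 1 / 4 → n • u ∈ Y4 := by
    intro n hnd
    apply hbog
    intro χ hχ
    have e : n • u = (n • u - (h ^ n • x - x)) + (h ^ n • x - x) := by abel
    rw [e, AddChar.map_add_eq_mul]
    refine (unit_mul_sub_one (hn _ _)).trans ?_
    have := h1 χ hχ n
    have := hsm χ hχ (h ^ n) x (h14 hx)
    linarith
  set z := χ (g • u - u) with hz
  have hzn : ∀ n : ℕ, n * δ ≤ 1 / 4 → ‖z ^ n - 1‖ ≤ 1 / 32 := by
    intro n hnd
    have := hsm χ hχ g _ (h2 n hnd)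
    rwa [smul_comm g n u, ← smul_sub, AddChar.map_nsmul_eq_pow] at this
  set n := ⌊1 / (4 * δ)⌋₊ with hndef
  have hq : 1 ≤ 1 / (4 * δ) := by
    rw [le_div_iff₀ (by positivity)]; linarith
  have hn1 : (n : ℝ) ≤ 1 / (4 * δ) := Nat.floor_le (by positivity)
  have hn2 : 1 / (4 * δ) < n + 1 := Nat.lt_floor_add_one _
  have hn3 : (1 : ℝ) ≤ n := by
    have : 1 ≤ n := Nat.le_floor (by simpa using hq)
    exact_mod_cast this
  have hnδ : n * δ ≤ 1 / 4 := by
    rw [le_div_iff₀ (by positivity)] at hn1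
    linarith
  have hnδ2 : 1 / 8 ≤ n * δ := by
    rw [div_lt_iff₀ (by positivity)] at hn2
    nlinarith
  have hgs : (∑ i ∈ Finset.range n, z ^ i) * (z - 1) = z ^ n - 1 := geom_sum_mul z n
  have hlow : (31 / 32 : ℝ) * n ≤ ‖∑ i ∈ Finset.range n, z ^ i‖ := by
    have h3 : ‖(n : ℂ) - ∑ i ∈ Finset.range n, z ^ i‖ ≤ n * (1 / 32) := by
      have : (n : ℂ) - ∑ i ∈ Finset.range n, z ^ i = ∑ i ∈ Finset.range n, (1 - z ^ i) := by
        simp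
      rw [this]
      refine (norm_sum_le _ _).trans ?_
      have : ∀ i ∈ Finset.range n, ‖1 - z ^ i‖ ≤ 1 / 32 := by
        intro i hi
        rw [norm_sub_rev]
        apply hzn
        have : (i : ℝ) ≤ n := by exact_mod_cast (Finset.mem_range.1 hi).le
        nlinarith
      refine (Finset.sum_le_sum this).trans ?_
      simp
    have h4 := norm_sub_norm_le (n : ℂ) (∑ i ∈ Finset.range n, z ^ i)
    rw [Complex.norm_natCast] at h4
    linarith
  have hfin : (31 / 32 : ℝ) * n * ‖z - 1‖ ≤ 1 / 32 := by
    have := hzn n hnδ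
    rw [← hgs, norm_mul] at this
    exact le_trans (by gcongr) this
  have h5 : n * ‖z - 1‖ ≤ 1 / 31 := by linarith
  have h6 : 1 / 8 * ‖z - 1‖ ≤ n * δ * ‖z - 1‖ := by gcongr
  have h7 : n * δ * ‖z - 1‖ ≤ δ * (1 / 31) := by
    have : n * δ * ‖z - 1‖ = δ * (n * ‖z - 1‖) := by ring
    rw [this]; gcongr
  linarith

lemma core {V : Type*} [AddCommGroup V] [Fintype V] [DecidableEq V] {G : Type*} [Group G]
    [DistribMulAction G V] (Y : Finset V) (h0 : 0 ∈ Y)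
    (hneg : ∀ y ∈ Y, -y ∈ Y) (hG : ∀ (g : G), ∀ y ∈ Y, g • y ∈ Y)
    {D L : ℝ} (hL : 0 < L) (hL6 : ((Y + Y + (Y + Y) + Y + Y).card : ℝ) ≤ L * Y.card)
    (hD : 65536 * L ^ 3 ≤ D) (hD1 : 1 ≤ D) (h : IsQR G D) :
    ∃ P : AddSubgroup V, (∀ x ∈ P, x ∈ Y + Y + (Y + Y)) ∧
      ∀ (g : G), ∀ y ∈ Y, g • y - y ∈ P := by
  classical
  have hsub : ∀ Z : Finset V, Z ⊆ Z + Y := fun Z z hz => by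
    have := Finset.add_mem_add hz h0
    simpa using this
  have hGadd : ∀ Z W : Finset V, (∀ (g : G), ∀ y ∈ Z, g • y ∈ Z) → (∀ (g : G), ∀ y ∈ W, g • y ∈ W) →
      ∀ (g : G), ∀ y ∈ Z + W, g • y ∈ Z + W := by
    intro Z W hZ hW g y hy
    obtain ⟨a, ha, b, hb, rfl⟩ := Finset.mem_add.1 hy
    rw [smul_add]
    exact Finset.add_mem_add (hZ g a ha) (hW g b hb)
  set Y2 := Y + Y with hY2
  set Y4 := Y2 + Y2 with hY4
  set Y5 := Y4 + Y with hY5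
  set Y6 := Y5 + Y with hY6
  have h12 : Y ⊆ Y2 := hsub Y
  have h24 : Y2 ⊆ Y4 := fun z hz => by
    have := Finset.add_mem_add hz (h12 h0)
    simpa using this
  have h45 : Y4 ⊆ Y5 := hsub _
  have h56 : Y5 ⊆ Y6 := hsub _
  have hG2 := hGadd Y Y hG hG
  have hG4 := hGadd Y2 Y2 hG2 hG2
  have hG5 := hGadd Y4 Y hG4 hG
  have hG6 := hGadd Y5 Y hG5 hG
  have hy0 : 0 < Y.card := Finset.card_pos.2 ⟨0, h0⟩
  have hL5 : (Y5.card : ℝ) ≤ L * Y.card :=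
    le_trans (by exact_mod_cast Finset.card_le_card h56) hL6
  have hL2 : (Y2.card : ℝ) ≤ L * Y.card :=
    le_trans (by exact_mod_cast Finset.card_le_card (h24.trans h45)) hL5
  let S : AddChar V ℂ → Prop := fun χ => (Y.card : ℝ) ^ 2 ≤ 4 * L * ‖hat Y χ‖ ^ 2
  have hbog : ∀ x, (∀ χ, S χ → ‖χ x - 1‖ ≤ 1 / 2) → x ∈ Y4 := fun x hx =>
    bogolyubov Y hneg hL hy0 hL2 x hx
  have hsm : ∀ χ, S χ → ∀ (g : G), ∀ x ∈ Y4, ‖χ (g • x - x) - 1‖ ≤ 1 / 32 := by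
    intro χ hχ g x hx
    refine core_three Y Y4 Y5 Y6 hy0 hneg hG hG5 hG6 ?_ (h12.trans (h24.trans h45)) ?_ hL hL5 hL6
      hD h χ hχ g x hx
    · intro x hx y hy
      rw [sub_eq_add_neg]
      exact Finset.add_mem_add hx (hneg y hy)
    · intro x hx y hy
      exact Finset.add_mem_add hx hy
  have hk : ∀ k : ℕ, ∀ χ, S χ → ∀ g h : G, ∀ x ∈ Y,
      ‖χ (g • (h • x - x) - (h • x - x)) - 1‖ ≤ (1 / 32) / 2 ^ k := by
    intro k
    induction k with
    | zero =>
      intro χ hχ g h x hx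
      rw [pow_zero, div_one]
      apply hsm χ hχ
      apply h24
      rw [sub_eq_add_neg]
      exact Finset.add_mem_add (hG h x hx) (hneg x hx)
    | succ k ih =>
      have := halve Y Y4 S (fun χ x => AddChar.norm_apply χ x) (h12.trans h24) hbog hsm
        ((1 / 32) / 2 ^ k) (by positivity) (by
          have : (1 : ℝ) ≤ 2 ^ k := one_le_pow₀ (by norm_num)
          rw [div_le_iff₀ (by positivity)]
          linarith) ih
      rw [pow_succ, ← div_div]
      exact this
  have hone : ∀ χ, S χ → ∀ g h : G, ∀ x ∈ Y, χ (g • (h • x - x) - (h • x - x)) = 1 := by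
    intro χ hχ g h x hx
    rw [← sub_eq_zero, ← norm_le_zero_iff]
    refine ge_of_tendsto' (f := fun k : ℕ => (1 / 32 : ℝ) / 2 ^ k) (x := Filter.atTop) ?_
      (fun k => hk k χ hχ g h x hx)
    exact tendsto_const_nhds.div_atTop (tendsto_pow_atTop_atTop_of_one_lt (by norm_num))
  refine ⟨⨅ (χ : AddChar V ℂ) (_ : S χ), (χ.toAddMonoidHom).ker, ?_, ?_⟩
  · intro x hx
    apply hbog
    intro χ hχ
    simp only [AddSubgroup.mem_iInf] at hx
    have := hx χ hχ
    rw [AddMonoidHom.mem_ker] at this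
    have h1 : χ x = 1 := this
    rw [h1]
    norm_num
  · intro g y hy
    simp only [AddSubgroup.mem_iInf]
    intro χ hχ
    rw [AddMonoidHom.mem_ker]
    change χ (g • y - y) = 1
    let f : G →* ℂ :=
      { toFun := fun g => χ (g • y - y)
        map_one' := by simp
        map_mul' := by
          intro a b
          have e : (a * b) • y - y = (a • (b • y - y) - (b • y - y)) + ((a • y - y) + (b • y - y)) := by
            rw [mul_smul, smul_sub]; abel
          rw [e, AddChar.map_add_eq_mul, hone χ hχ a b y hy, one_mul, AddChar.map_add_eq_mul] }
    exact qr_char h hD1 f g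

lemma ncard_fibre {α β γ : Type*} {S : Set α} {T : Set β} {U : Set γ} (hS : S.Finite)
    (hT : T.Finite) (hU : U.Finite) (f : α → β) (hf : ∀ a ∈ S, f a ∈ T) (g : α → α → γ)
    (hg : ∀ a ∈ S, ∀ b ∈ S, f b = f a → g a b ∈ U)
    (hinj : ∀ a ∈ S, ∀ b ∈ S, ∀ c ∈ S, f b = f a → f c = f a → g a b = g a c → b = c) :
    S.ncard ≤ U.ncard * T.ncard := by
  classical
  rw [Set.ncard_eq_toFinset_card S hS, Set.ncard_eq_toFinset_card T hT,
    Set.ncard_eq_toFinset_card U hU]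
  have h1 := Finset.card_le_mul_card_image (f := f) hS.toFinset hU.toFinset.card (by
    intro b hb
    obtain ⟨a, ha, rfl⟩ := Finset.mem_image.1 hb
    rw [Set.Finite.mem_toFinset] at ha
    refine Finset.card_le_card_of_injOn (g a) ?_ ?_
    · intro c hc
      simp only [Finset.coe_filter, Set.Finite.mem_toFinset, Set.mem_ofPred_eq] at hc
      simpa using hg a ha c hc.1 hc.2
    · intro c hc d hd hcd
      simp only [Finset.coe_filter, Set.Finite.mem_toFinset, Set.mem_ofPred_eq] at hc hd
      exact hinj a ha c hc.1 d hd.1 hc.2 hd.2 hcd)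
  refine h1.trans (Nat.mul_le_mul_left _ (Finset.card_le_card ?_))
  intro b hb
  obtain ⟨a, ha, rfl⟩ := Finset.mem_image.1 hb
  rw [Set.Finite.mem_toFinset] at ha ⊢
  exact hf a ha

lemma fin_pow {Γ : Type*} [Group Γ] {A : Set Γ} (hA : A.Finite) (k : ℕ) : (A ^ k).Finite := by
  induction k with
  | zero => rw [pow_zero]; exact Set.finite_one
  | succ k ih => rw [pow_succ]; exact ih.mul hA

lemma pow_sub_subgroup {Γ : Type*} [Group Γ] {A : Set Γ} {G : Subgroup Γ} (hA : A ⊆ G) (k : ℕ) :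
    A ^ k ⊆ G := by
  induction k with
  | zero => rw [pow_zero]; intro x hx; rw [Set.mem_one.1 hx]; exact G.one_mem
  | succ k ih =>
    rw [pow_succ]
    rintro _ ⟨x, hx, y, hy, rfl⟩
    exact G.mul_mem (ih hx) (hA hy)

lemma inv_mem_of_symm {Γ : Type*} [Group Γ] {A : Set Γ} (hA : A⁻¹ = A) {a : Γ} (ha : a ∈ A) :
    a⁻¹ ∈ A := by
  rw [← hA]; simpa using ha

lemma pow_symm {Γ : Type*} [Group Γ] {A : Set Γ} (hA : A⁻¹ = A) (k : ℕ) : (A ^ k)⁻¹ = A ^ k := by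
  rw [← inv_pow, hA]

lemma mul_mem_pow {Γ : Type*} [Group Γ] {A : Set Γ} {i j k : ℕ} (h : i + j = k) {x y : Γ}
    (hx : x ∈ A ^ i) (hy : y ∈ A ^ j) : x * y ∈ A ^ k := by
  subst h
  rw [pow_add]
  exact Set.mul_mem_mul hx hy

lemma one_mem_sq {Γ : Type*} [Group Γ] {A : Set Γ} (hA : A⁻¹ = A) (hne : A.Nonempty) :
    (1 : Γ) ∈ A ^ 2 := by
  obtain ⟨a, ha⟩ := hne
  rw [sq]
  exact ⟨a, ha, a⁻¹, inv_mem_of_symm hA ha, by simp⟩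

lemma pow_even_mono {Γ : Type*} [Group Γ] {A : Set Γ} (hA : A⁻¹ = A) (hne : A.Nonempty)
    {i j : ℕ} (hij : i ≤ j) : A ^ (2 * i) ⊆ A ^ (2 * j) := by
  rw [pow_mul, pow_mul]
  exact Set.pow_subset_pow_right (one_mem_sq hA hne) hij

lemma F1 {Γ : Type*} [Group Γ] {A : Set Γ} (hfin : A.Finite) (hA : A⁻¹ = A) (J : Subgroup Γ)
    (k : ℕ) : A.ncard * (A ^ k ∩ J).ncard ≤ (A ^ 2 ∩ J).ncard * (A ^ (k + 1)).ncard := by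
  rw [← Set.ncard_prod]
  refine ncard_fibre (hfin.prod ((fin_pow hfin _).subset Set.inter_subset_left)) (fin_pow hfin _)
    ((fin_pow hfin _).subset Set.inter_subset_left) (fun p => p.1 * p.2) ?_
    (fun p q => p.1⁻¹ * q.1) ?_ ?_
  · rintro ⟨a, x⟩ ⟨ha, hx⟩
    exact mul_mem_pow (add_comm 1 k) (by simpa using ha) hx.1
  · rintro ⟨a, x⟩ ⟨ha, hx⟩ ⟨b, y⟩ ⟨hb, hy⟩ hab
    simp only at hab
    refine ⟨?_, ?_⟩
    · rw [sq]; exact Set.mul_mem_mul (inv_mem_of_symm hA ha) hb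
    · have : a⁻¹ * b = x * y⁻¹ := by
        rw [eq_mul_inv_iff_mul_eq, mul_assoc, hab, inv_mul_cancel_left]
      rw [this]
      exact J.mul_mem hx.2 (J.inv_mem hy.2)
  · rintro ⟨a, x⟩ ⟨ha, hx⟩ ⟨b, y⟩ ⟨hb, hy⟩ ⟨c, z⟩ ⟨hc, hz⟩ hba hca hbc
    simp only at hba hca hbc
    have h1 : b = c := by simpa using hbc
    subst h1
    have h2 : y = z := by
      rw [← hca] at hba; simpa using hba
    rw [h2]

/-- the running hypotheses on the set `A` -/
structure Gr {Γ : Type*} [Group Γ] (A : Set Γ) (K : ℝ) : Prop where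
  fin : A.Finite
  ne : A.Nonempty
  symm : A⁻¹ = A
  gen : Subgroup.closure A = ⊤
  two : 2 ≤ K
  growth : ∀ k, 1 ≤ k → ((A ^ k).ncard : ℝ) ≤ K ^ k * A.ncard

lemma Gr.F {Γ : Type*} [Group Γ] {A : Set Γ} {K : ℝ} (h : Gr A K) (J : Subgroup Γ) (k : ℕ) :
    ((A ^ k ∩ J).ncard : ℝ) ≤ K ^ (k + 1) * (A ^ 2 ∩ J).ncard := by
  have h1 : (A.ncard : ℝ) * (A ^ k ∩ J).ncard ≤ (A ^ 2 ∩ J).ncard * (A ^ (k + 1)).ncard := by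
    exact_mod_cast F1 h.fin h.symm J k
  have h2 := h.growth (k + 1) (by omega)
  have hpos : (0 : ℝ) < A.ncard := by
    exact_mod_cast (Set.ncard_pos h.fin).2 h.ne
  have h3 : (A.ncard : ℝ) * (A ^ k ∩ J).ncard ≤ A.ncard * (K ^ (k + 1) * (A ^ 2 ∩ J).ncard) := by
    refine h1.trans ?_
    calc ((A ^ 2 ∩ J).ncard : ℝ) * (A ^ (k + 1)).ncard
        ≤ (A ^ 2 ∩ J).ncard * (K ^ (k + 1) * A.ncard) := by gcongr
      _ = _ := by ring
  exact le_of_mul_le_mul_left h3 hpos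

lemma Gr.quot {Γ : Type*} [Group Γ] {A : Set Γ} {K : ℝ} (hfin : A.Finite) (hne : A.Nonempty)
    (hsymm : A⁻¹ = A) (hgen : Subgroup.closure A = ⊤) (h2 : 2 ≤ K)
    (hgr : ∀ k, 1 ≤ k → ((A ^ (k + 2)).ncard : ℝ) ≤ K ^ k * A.ncard)
    (R : Subgroup Γ) [R.Normal] : Gr (QuotientGroup.mk' R '' A) K := by
  set π := QuotientGroup.mk' R with hπ
  refine ⟨hfin.image _, hne.image _, ?_, ?_, h2, ?_⟩
  · rw [← Set.image_inv_eq_inv]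
    ext x
    simp only [Set.mem_image]
    constructor
    · rintro ⟨_, ⟨a, ha, rfl⟩, rfl⟩
      exact ⟨a⁻¹, inv_mem_of_symm hsymm ha, by simp⟩
    · rintro ⟨a, ha, rfl⟩
      exact ⟨_, ⟨a⁻¹, inv_mem_of_symm hsymm ha, rfl⟩, by simp⟩
  · rw [← MonoidHom.map_closure, hgen]
    exact Subgroup.map_top_of_surjective _ (QuotientGroup.mk'_surjective R)
  · intro k hk
    rw [← Set.image_pow]
    have hpf : ∀ j, (A ^ j).Finite := fun j => fin_pow hfin j
    have e1 : (π '' (A ^ k)).ncard * (A ^ 2 ∩ R).ncard ≤ (A ^ (k + 2)).ncard := by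
      rw [← Set.ncard_prod]
      have hs : ∀ q, q ∈ π '' (A ^ k) → ∃ a ∈ A ^ k, π a = q := fun q hq => hq
      choose! s hs1 hs2 using hs
      refine Set.ncard_le_ncard_of_injOn (fun p => s p.1 * p.2) ?_ ?_ (hpf _)
      · rintro ⟨q, r⟩ ⟨hq, hr⟩
        exact mul_mem_pow rfl (hs1 q hq) hr.1
      · rintro ⟨q, r⟩ ⟨hq, hr⟩ ⟨q', r'⟩ ⟨hq', hr'⟩ heq
        simp only at heq
        have hrr : ∀ r ∈ R, π r = 1 := fun r hr => (QuotientGroup.eq_one_iff r).2 hr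
        have h1 := congrArg π heq
        rw [map_mul, map_mul, hs2 q hq, hs2 q' hq', hrr r hr.2, hrr r' hr'.2, mul_one, mul_one] at h1
        subst h1
        have : r = r' := by simpa using heq
        rw [this]
    have e2 : A.ncard ≤ (A ^ 2 ∩ R).ncard * (π '' A).ncard := by
      refine ncard_fibre hfin (hfin.image _) ((hpf 2).subset Set.inter_subset_left) π
        (fun a ha => ⟨a, ha, rfl⟩) (fun a b => a⁻¹ * b) ?_ ?_
      · intro a ha b hb hab
        refine ⟨by rw [sq]; exact Set.mul_mem_mul (inv_mem_of_symm hsymm ha) hb, ?_⟩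
        exact QuotientGroup.eq.1 hab.symm
      · intro a _ b _ c _ _ _ hbc
        simpa using hbc
    have e3 := hgr k hk
    have e1' : ((π '' (A ^ k)).ncard : ℝ) * (A ^ 2 ∩ R).ncard ≤ (A ^ (k + 2)).ncard := by
      exact_mod_cast e1
    have e2' : (A.ncard : ℝ) ≤ (A ^ 2 ∩ R).ncard * (π '' A).ncard := by exact_mod_cast e2
    have hpos : (0 : ℝ) < (A ^ 2 ∩ R).ncard := by
      have : 0 < (A ^ 2 ∩ R).ncard :=
        (Set.ncard_pos ((hpf 2).subset Set.inter_subset_left)).2 ⟨1, one_mem_sq hsymm hne, R.one_mem⟩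
      exact_mod_cast this
    have hK : 0 < K := by linarith
    have : ((π '' (A ^ k)).ncard : ℝ) * (A ^ 2 ∩ R).ncard ≤
        (K ^ k * (π '' A).ncard) * (A ^ 2 ∩ R).ncard := by
      calc _ ≤ _ := e1'
        _ ≤ _ := e3
        _ ≤ K ^ k * ((A ^ 2 ∩ R).ncard * (π '' A).ncard) := by gcongr
        _ = _ := by ring
    exact le_of_mul_le_mul_right this hpos

lemma card_preimage {Γ : Type*} [Group Γ] (G : Subgroup Γ) [Fintype G] (S : Set Γ)
    [DecidablePred (fun g : G => (g : Γ) ∈ S)] :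
    (Finset.univ.filter (fun g : G => (g : Γ) ∈ S)).card = (S ∩ G).ncard := by
  rw [← Set.ncard_coe_finset]
  have : S ∩ G = (fun g : G => (g : Γ)) '' (Finset.univ.filter (fun g : G => (g : Γ) ∈ S)) := by
    ext x
    simp only [Set.mem_inter_iff, SetLike.mem_coe, Finset.coe_filter, Finset.mem_univ, true_and,
      Set.mem_image, Set.mem_ofPred_eq, Subtype.exists, exists_and_left, exists_prop]
    constructor
    · rintro ⟨h1, h2⟩; exact ⟨x, h1, h2, rfl⟩
    · rintro ⟨y, h1, h2, rfl⟩; exact ⟨h1, h2⟩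
  rw [this, Set.ncard_image_of_injective _ Subtype.val_injective]

lemma gowers_set {Γ : Type*} [Group Γ] (G : Subgroup Γ) [Finite G] {D c : ℝ} (hD : 0 < D)
    (h : IsQR G D) (B : Set Γ) (hB : B⁻¹ = B) (hc : (Nat.card G : ℝ) ≤ c * (B ∩ G).ncard)
    (hcD : c ^ 3 < D) : (B ∩ (G : Set Γ)) ^ 3 = G := by
  classical
  have := Fintype.ofFinite G
  have hpos : (0 : ℝ) < Nat.card G := by exact_mod_cast Nat.card_pos
  have hb : (0 : ℝ) < (B ∩ G).ncard := by
    rcases (Nat.cast_nonneg (α := ℝ) (B ∩ (G : Set Γ)).ncard).lt_or_eq with h0 | h0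
    · exact h0
    · rw [← h0, mul_zero] at hc; linarith
  apply Set.Subset.antisymm
  · intro x hx
    exact pow_sub_subgroup Set.inter_subset_right 3 hx
  · intro x hx
    obtain ⟨a, ha, b, hb, c, hc, habc⟩ := gowers hD h
      (Finset.univ.filter (fun g : G => (g : Γ) ∈ B)) (by
        intro b hb
        simp only [Finset.mem_filter, Finset.mem_univ, true_and] at hb ⊢
        exact inv_mem_of_symm hB hb) (by
        rw [card_preimage]
        calc (Nat.card G : ℝ) ^ 3 ≤ (c * (B ∩ G).ncard) ^ 3 := by gcongr
          _ = c ^ 3 * ((B ∩ G).ncard : ℝ) ^ 3 := by ring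
          _ < _ := by gcongr) (⟨x, hx⟩ : G)
    simp only [Finset.mem_filter, Finset.mem_univ, true_and] at ha hb hc
    have : x = a * b * c := by
      have := congrArg Subtype.val habc
      simpa using this.symm
    rw [this, pow_succ, sq]
    exact Set.mul_mem_mul (Set.mul_mem_mul ⟨ha, a.2⟩ ⟨hb, b.2⟩) ⟨hc, c.2⟩

lemma step_b {Γ : Type*} [Group Γ] {A : Set Γ} {K D : ℝ} (h : Gr A K) (G M : Subgroup Γ)
    [Finite G] (hMG : M ≤ G) (hcen : ∀ m ∈ M, ∀ g ∈ G, m * g = g * m) (hQ : IsQR G D)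
    (hD : K ^ 31 ≤ D) (hcov : ∀ g ∈ G, ∃ a ∈ A ^ 6, ∃ m ∈ M, a * m = g) :
    (A ^ 2 ∩ (G : Set Γ)) ^ 3 = G := by
  classical
  have hFG := Fintype.ofFinite G
  have : Finite M := Finite.of_injective (Subgroup.inclusion hMG) (Subgroup.inclusion_injective hMG)
  have hFM := Fintype.ofFinite M
  have hK2 := h.two
  have hK0 : 0 < K := by linarith
  have hK1 : 1 < K := by linarith
  have hD0 : 0 < D := lt_of_lt_of_le (by positivity) hD
  letI : CommGroup M := { (inferInstance : Group M) with
    mul_comm := fun x y => Subtype.ext (hcen x x.2 y (hMG y.2)) }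
  have hcov' : ∀ g : G, ∃ s : G, ∃ m : M, (s : Γ) ∈ A ^ 6 ∧ (s : Γ) * m = g := by
    intro g
    obtain ⟨a, ha, m, hm, e⟩ := hcov g g.2
    refine ⟨⟨a, ?_⟩, ⟨m, hm⟩, ha, e⟩
    rw [← eq_mul_inv_iff_mul_eq] at e
    rw [e]
    exact G.mul_mem g.2 (G.inv_mem (hMG hm))
  choose sel μ hs1 hs2 using hcov'
  have key := central_step hD0 hQ (V := Additive M) (fun m => Subgroup.inclusion hMG m.toMul)
    (fun a b => by simp) (fun m g => Subtype.ext (hcen _ (Additive.toMul m).2 g g.2)) sel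
    (fun g => Additive.ofMul (μ g)) (fun g => Subtype.ext (by simpa using hs2 g))
    (Finset.univ.filter (fun g : G => (g : Γ) ∈ A ^ 2))
    (Finset.univ.filter (fun g : G => (g : Γ) ∈ A ^ 8)) (by
      intro c hc x
      simp only [Finset.mem_filter, Finset.mem_univ, true_and, Subgroup.coe_mul] at hc ⊢
      exact mul_mem_pow (by norm_num) hc (hs1 x))
  rw [card_preimage, card_preimage] at key
  have hF := h.F G 8
  norm_num at hF
  set n : ℝ := (Fintype.card G : ℝ) with hn
  set c : ℝ := ((A ^ 2 ∩ (G : Set Γ)).ncard : ℝ) with hc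
  set p : ℝ := ((A ^ 8 ∩ (G : Set Γ)).ncard : ℝ) with hp
  have hn0 : 0 < n := by rw [hn]; exact_mod_cast Fintype.card_pos
  have hc0 : 0 < c := by
    have : 0 < (A ^ 2 ∩ (G : Set Γ)).ncard :=
      (Set.ncard_pos ((fin_pow h.fin _).subset Set.inter_subset_left)).2
        ⟨1, one_mem_sq h.symm h.ne, G.one_mem⟩
    rw [hc]; exact_mod_cast this
  have h1 : c * n ≤ c * (K ^ 9 * (c + n / D)) := by
    have h0 : 0 ≤ c + n / D := add_nonneg hc0.le (div_nonneg hn0.le hD0.le)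
    calc c * n = n * c := mul_comm _ _
      _ ≤ p * (c + n / D) := key
      _ ≤ K ^ 9 * c * (c + n / D) := mul_le_mul_of_nonneg_right hF h0
      _ = _ := by ring
  have h2 := le_of_mul_le_mul_left h1 hc0
  have h3 : K ^ 9 * (n / D) ≤ n / 2 := by
    have h4 : K ^ 9 * 2 ≤ D := by
      have : K ^ 9 * 2 ≤ K ^ 9 * K := by gcongr
      have h5 : K ^ 10 ≤ K ^ 31 := pow_le_pow_right₀ hK1.le (by norm_num)
      calc K ^ 9 * 2 ≤ K ^ 9 * K := this
        _ = K ^ 10 := by ring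
        _ ≤ _ := h5.trans hD
    rw [← mul_div_assoc, div_le_div_iff₀ hD0 (by norm_num)]
    nlinarith
  have h4 : n ≤ K ^ 10 * c := by
    have : n ≤ K ^ 9 * 2 * c := by linarith
    have h5 : K ^ 9 * 2 * c ≤ K ^ 9 * K * c := by gcongr
    calc n ≤ _ := this
      _ ≤ _ := h5
      _ = _ := by ring
  refine gowers_set G hD0 hQ (A ^ 2) (pow_symm h.symm 2) (c := K ^ 10) ?_ ?_
  · rw [Nat.card_eq_fintype_card]; exact h4
  · rw [← pow_mul]
    exact lt_of_lt_of_le (pow_lt_pow_right₀ hK1 (by norm_num)) hD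

lemma core_grp {Γ : Type*} [Group Γ] (G M : Subgroup Γ) [Finite M]
    (hab : ∀ x ∈ M, ∀ y ∈ M, x * y = y * x) (hGM : ∀ g ∈ G, ∀ x ∈ M, g * x * g⁻¹ ∈ M)
    (Y : Set Γ) (hYM : Y ⊆ M) (h1 : (1 : Γ) ∈ Y) (hinv : ∀ y ∈ Y, y⁻¹ ∈ Y)
    (hG : ∀ g ∈ G, ∀ y ∈ Y, g * y * g⁻¹ ∈ Y) {D L : ℝ} (hL : 0 < L)
    (hL6 : ((Y ^ 6).ncard : ℝ) ≤ L * Y.ncard) (hD : 65536 * L ^ 3 ≤ D) (hD1 : 1 ≤ D)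
    (h : IsQR G D) :
    ∃ P : Subgroup Γ, (P : Set Γ) ⊆ Y ^ 4 ∧ ∀ g ∈ G, ∀ y ∈ Y, g * y * g⁻¹ * y⁻¹ ∈ P := by
  classical
  have hFM := Fintype.ofFinite M
  letI : CommGroup M := { (inferInstance : Group M) with
    mul_comm := fun x y => Subtype.ext (hab x x.2 y y.2) }
  letI : DistribMulAction G (Additive M) :=
    { smul := fun g v => Additive.ofMul ⟨g * (v.toMul : M) * (g : Γ)⁻¹, hGM g g.2 _ v.toMul.2⟩
      one_smul := fun v => by
        apply Additive.toMul.injective; apply Subtype.ext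
        change (1 : Γ) * (v.toMul : M) * (1 : Γ)⁻¹ = (v.toMul : M)
        simp
      mul_smul := fun a b v => by
        apply Additive.toMul.injective; apply Subtype.ext
        change ((a : Γ) * b) * (v.toMul : M) * ((a : Γ) * b)⁻¹ =
          a * (b * (v.toMul : M) * (b : Γ)⁻¹) * (a : Γ)⁻¹
        group
      smul_zero := fun a => by
        apply Additive.toMul.injective; apply Subtype.ext
        change (a : Γ) * 1 * (a : Γ)⁻¹ = 1
        simp
      smul_add := fun a v w => by
        apply Additive.toMul.injective; apply Subtype.ext
        change (a : Γ) * ((v.toMul : M) * (w.toMul : M)) * (a : Γ)⁻¹ =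
          (a * (v.toMul : M) * (a : Γ)⁻¹) * (a * (w.toMul : M) * (a : Γ)⁻¹)
        group }
  let e : Additive M → Γ := fun v => ((v.toMul : M) : Γ)
  have he : Function.Injective e := fun a b hab => Additive.toMul.injective (Subtype.ext hab)
  have hadd : ∀ a b, e (a + b) = e a * e b := fun a b => rfl
  have hsm : ∀ (g : G) v, e (g • v) = g * e v * (g : Γ)⁻¹ := fun g v => rfl
  have hneg' : ∀ v, e (-v) = (e v)⁻¹ := fun v => rfl
  let Y' : Finset (Additive M) := Finset.univ.filter (fun v => e v ∈ Y)
  have hmem : ∀ v, v ∈ Y' ↔ e v ∈ Y := fun v => by simp [Y']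
  have hmadd : ∀ (Z : Finset (Additive M)) (W : Set Γ), (∀ z ∈ Z, e z ∈ W) →
      ∀ z ∈ Z + Y', e z ∈ W * Y := by
    intro Z W hZ z hz
    obtain ⟨a, ha, b, hb, rfl⟩ := Finset.mem_add.1 hz
    rw [hadd]
    exact Set.mul_mem_mul (hZ a ha) ((hmem b).1 hb)
  have hm2 : ∀ z ∈ Y' + Y', e z ∈ Y ^ 2 := by
    rw [sq]; exact hmadd Y' Y (fun z hz => (hmem z).1 hz)
  have hm4 : ∀ z ∈ Y' + Y' + (Y' + Y'), e z ∈ Y ^ 4 := by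
    intro z hz
    obtain ⟨a, ha, b, hb, rfl⟩ := Finset.mem_add.1 hz
    rw [hadd]
    exact mul_mem_pow (by norm_num) (hm2 a ha) (hm2 b hb)
  have hm6 : ∀ z ∈ Y' + Y' + (Y' + Y') + Y' + Y', e z ∈ Y ^ 6 := by
    have := hmadd _ _ (hmadd _ _ hm4)
    rw [pow_succ, pow_succ]
    exact this
  have hYfin : Y.Finite := (Set.toFinite (M : Set Γ)).subset hYM
  have hc6 : ((Y' + Y' + (Y' + Y') + Y' + Y').card : ℝ) ≤ (Y ^ 6).ncard := by
    rw [← Set.ncard_coe_finset]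
    have := Set.ncard_le_ncard_of_injOn (s := ((Y' + Y' + (Y' + Y') + Y' + Y' : Finset _) : Set _))
      (t := Y ^ 6) e (fun z hz => hm6 z (Finset.mem_coe.1 hz)) he.injOn (fin_pow hYfin 6)
    exact_mod_cast this
  have hc1 : (Y.ncard : ℝ) ≤ Y'.card := by
    have h2 : Y ⊆ e '' (Y' : Set (Additive M)) := by
      intro y hy
      refine ⟨Additive.ofMul ⟨y, hYM hy⟩, ?_, rfl⟩
      rw [Finset.mem_coe, hmem]
      exact hy
    have h3 := Set.ncard_le_ncard h2 ((Finset.finite_toSet Y').image e)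
    rw [Set.ncard_image_of_injective _ he, Set.ncard_coe_finset] at h3
    exact_mod_cast h3
  obtain ⟨P, hP1, hP2⟩ := core (G := G) Y' ((hmem 0).2 h1)
    (fun y hy => (hmem _).2 (hinv _ ((hmem _).1 hy)))
    (fun g y hy => (hmem _).2 (hG g g.2 _ ((hmem _).1 hy))) hL
    (hc6.trans (hL6.trans (by gcongr))) hD hD1 h
  refine ⟨(AddSubgroup.toSubgroup' P).map M.subtype, ?_, ?_⟩
  · rintro _ ⟨m, hm, rfl⟩
    exact hm4 _ (hP1 (Additive.ofMul m) hm)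
  · intro g hg y hy
    have := hP2 ⟨g, hg⟩ (Additive.ofMul ⟨y, hYM hy⟩) ((hmem _).2 hy)
    rw [sub_eq_add_neg] at this
    exact ⟨Additive.toMul _, this, rfl⟩

lemma normal_of_gen {Γ : Type*} [Group Γ] {A : Set Γ} (hA : A⁻¹ = A)
    (hgen : Subgroup.closure A = ⊤) (H : Subgroup Γ) (hH : ∀ a ∈ A, ∀ x ∈ H, a * x * a⁻¹ ∈ H) :
    ∀ γ : Γ, ∀ x ∈ H, γ * x * γ⁻¹ ∈ H := by
  let N : Subgroup Γ :=
    { carrier := {γ | (∀ x ∈ H, γ * x * γ⁻¹ ∈ H) ∧ ∀ x ∈ H, γ⁻¹ * x * γ ∈ H}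
      mul_mem' := by
        rintro a b ⟨ha, ha'⟩ ⟨hb, hb'⟩
        refine ⟨fun x hx => ?_, fun x hx => ?_⟩
        · have := ha _ (hb x hx)
          convert this using 1; group
        · have := hb' _ (ha' x hx)
          convert this using 1; group
      one_mem' := by
        refine ⟨fun x hx => ?_, fun x hx => ?_⟩ <;> simpa using hx
      inv_mem' := by
        rintro a ⟨ha, ha'⟩
        refine ⟨fun x hx => ?_, fun x hx => ?_⟩
        · simpa using ha' x hx
        · simpa using ha x hx }
  have h1 : Subgroup.closure A ≤ N := by
    rw [Subgroup.closure_le]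
    intro a ha
    refine ⟨hH a ha, fun x hx => ?_⟩
    have := hH a⁻¹ (inv_mem_of_symm hA ha) x hx
    simpa using this
  rw [hgen] at h1
  intro γ
  exact (h1 (Subgroup.mem_top γ)).1

lemma qr_comm {G : Type*} [Group G] {D : ℝ} (h : IsQR G D) (hD : 1 ≤ D) {B : Type*} [CommGroup B]
    [Finite B] (f : G →* B) (g : G) : f g = 1 := by
  by_contra hne
  obtain ⟨ψ, hψ⟩ := (AddChar.exists_apply_ne_zero (α := Additive B) (a := Additive.ofMul (f g))).2
    (by simpa using hne)
  let F : G →* ℂ :=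
    { toFun := fun x => ψ (Additive.ofMul (f x))
      map_one' := by simp
      map_mul' := fun a b => by rw [map_mul, ofMul_mul, AddChar.map_add_eq_mul] }
  exact hψ (qr_char h hD F g)

lemma perf_lemma {Γ : Type*} [Group Γ] (G M L : Subgroup Γ) [Finite M]
    (hab : ∀ x ∈ M, ∀ y ∈ M, x * y = y * x) (hGM : ∀ g ∈ G, ∀ x ∈ M, g * x * g⁻¹ ∈ M)
    {D : ℝ} (h : IsQR G D) (hD : 1 ≤ D) (x : Γ) (hx : x ∈ M)
    (hxx : ∀ g ∈ G, ∀ k ∈ G, k * (g * x * g⁻¹ * x⁻¹) * k⁻¹ * (g * x * g⁻¹ * x⁻¹)⁻¹ ∈ L) :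
    ∀ g ∈ G, g * x * g⁻¹ * x⁻¹ ∈ L := by
  letI : CommGroup M := { (inferInstance : Group M) with
    mul_comm := fun x y => Subtype.ext (hab x x.2 y y.2) }
  have hcm : ∀ g : G, (g : Γ) * x * (g : Γ)⁻¹ * x⁻¹ ∈ M := fun g =>
    M.mul_mem (hGM g g.2 x hx) (M.inv_mem hx)
  let c : G → M := fun g => ⟨(g : Γ) * x * (g : Γ)⁻¹ * x⁻¹, hcm g⟩
  let f : G →* (M ⧸ L.subgroupOf M) :=
    { toFun := fun g => QuotientGroup.mk (c g)
      map_one' := by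
        have : c 1 = 1 := Subtype.ext (by simp [c])
        rw [this]; rfl
      map_mul' := by
        intro a b
        rw [← QuotientGroup.mk_mul]
        apply Eq.symm
        rw [QuotientGroup.eq, Subgroup.mem_subgroupOf]
        have h1 := hxx b b.2 a a.2
        have e1 : ((c a * c b)⁻¹ * c (a * b) : M) = ⟨(a : Γ) * (c b) * (a : Γ)⁻¹,
            hGM a a.2 _ (c b).2⟩ * (c b)⁻¹ := by
          have e2 : c (a * b) = ⟨(a : Γ) * (c b) * (a : Γ)⁻¹, hGM a a.2 _ (c b).2⟩ * c a := by
            apply Subtype.ext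
            simp only [c, Subgroup.coe_mul]
            group
          rw [e2, inv_mul_eq_iff_eq_mul, mul_comm _ (c b)⁻¹, mul_assoc (c a), mul_inv_cancel_left,
            mul_comm]
        rw [e1]
        exact h1 }
  intro g hg
  have h2 := qr_comm h hD f ⟨g, hg⟩
  have h3 := (QuotientGroup.eq_one_iff (N := L.subgroupOf M) (c ⟨g, hg⟩)).1 h2
  exact Subgroup.mem_subgroupOf.1 h3

lemma index_lemma {Γ : Type*} [Group Γ] (G Q : Subgroup Γ) [Finite G] {D : ℝ} (h : IsQR G D)
    (hGQ : ∀ g ∈ G, ∀ q ∈ Q, g * q * g⁻¹ ∈ Q) (x : Γ) (S : Set Γ) (hS : S.Finite)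
    (hxS : ∀ g ∈ G, ∀ q ∈ Q, g * x * g⁻¹ * q ∈ S) (hQ : (Q : Set Γ).Finite)
    (hc : (S.ncard : ℝ) ≤ D * (Q : Set Γ).ncard) : ∀ g ∈ G, x⁻¹ * (g * x * g⁻¹) ∈ Q := by
  let H : Subgroup G :=
    { carrier := {g | x⁻¹ * ((g : Γ) * x * (g : Γ)⁻¹) ∈ Q}
      mul_mem' := by
        intro a b ha hb
        have h1 := Q.mul_mem ha (hGQ a a.2 _ hb)
        change x⁻¹ * (((a : Γ) * b) * x * ((a : Γ) * b)⁻¹) ∈ Q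
        convert h1 using 1; group
      one_mem' := by
        change x⁻¹ * ((1 : Γ) * x * (1 : Γ)⁻¹) ∈ Q
        simp
      inv_mem' := by
        intro a ha
        have h1 := hGQ _ (G.inv_mem a.2) _ (Q.inv_mem ha)
        change x⁻¹ * ((a : Γ)⁻¹ * x * ((a : Γ)⁻¹)⁻¹) ∈ Q
        convert h1 using 1; group }
  have hcard : Nat.card (G ⧸ H) * (Q : Set Γ).ncard ≤ S.ncard := by
    rw [← Set.ncard_univ, ← Set.ncard_prod]
    refine Set.ncard_le_ncard_of_injOn
      (fun p => (p.1.out : Γ) * x * (p.1.out : Γ)⁻¹ * p.2) ?_ ?_ hS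
    · rintro ⟨c, q⟩ ⟨_, hq⟩
      exact hxS _ c.out.2 q hq
    · rintro ⟨c, q⟩ ⟨_, hq⟩ ⟨c', q'⟩ ⟨_, hq'⟩ heq
      simp only at heq
      have hcc : c = c' := by
        rw [← QuotientGroup.out_eq' c, ← QuotientGroup.out_eq' c', eq_comm, QuotientGroup.eq]
        set t := c.out
        set s := c'.out
        change x⁻¹ * (((s : Γ)⁻¹ * t) * x * ((s : Γ)⁻¹ * t)⁻¹) ∈ Q
        have h1 := hGQ _ (G.inv_mem s.2) _ (Q.mul_mem hq' (Q.inv_mem hq))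
        convert h1 using 1
        have h2 : (t : Γ) * x * (t : Γ)⁻¹ = s * x * (s : Γ)⁻¹ * q' * q⁻¹ := by
          rw [eq_mul_inv_iff_mul_eq]; exact heq
        calc x⁻¹ * (((s : Γ)⁻¹ * t) * x * ((s : Γ)⁻¹ * t)⁻¹)
            = x⁻¹ * (s : Γ)⁻¹ * (t * x * (t : Γ)⁻¹) * s := by group
          _ = _ := by rw [h2]; group
      subst hcc
      have : q = q' := by simpa using heq
      rw [this]
  have hpos : (0 : ℝ) < (Q : Set Γ).ncard := by
    have : 0 < (Q : Set Γ).ncard := (Set.ncard_pos hQ).2 ⟨1, Q.one_mem⟩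
    exact_mod_cast this
  have h3 : (Nat.card (G ⧸ H) : ℝ) ≤ D := by
    have : (Nat.card (G ⧸ H) : ℝ) * (Q : Set Γ).ncard ≤ D * (Q : Set Γ).ncard :=
      le_trans (by exact_mod_cast hcard) hc
    exact le_of_mul_le_mul_right this hpos
  intro g hg
  exact qr_index h H h3 ⟨g, hg⟩

lemma conj_mem_pow {Γ : Type*} [Group Γ] {A : Set Γ} (hA : A⁻¹ = A) {i j k : ℕ}
    (h : i + j + i = k) {a x : Γ} (ha : a ∈ A ^ i) (hx : x ∈ A ^ j) : a * x * a⁻¹ ∈ A ^ k :=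
  mul_mem_pow h (mul_mem_pow rfl ha hx) (inv_mem_of_symm (pow_symm hA i) ha)

lemma step_a {Γ : Type*} [Group Γ] {A : Set Γ} {K D : ℝ} (h : Gr A K) (G M : Subgroup Γ)
    [Finite G] (hGn : ∀ γ : Γ, ∀ g ∈ G, γ * g * γ⁻¹ ∈ G) (hMn : ∀ γ : Γ, ∀ x ∈ M, γ * x * γ⁻¹ ∈ M)
    (hMG : M ≤ G) (hab : ∀ x ∈ M, ∀ y ∈ M, x * y = y * x) (hcom : M ≤ ⁅G, M⁆) (hQ : IsQR G D)
    (hD : K ^ 600 ≤ D) (hcov : ∀ g ∈ G, ∃ a ∈ A ^ 6, ∃ m ∈ M, a * m = g) :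
    (A ^ 2 ∩ (G : Set Γ)) ^ 3 = G := by
  have hfM : Finite M := Finite.of_injective (Subgroup.inclusion hMG)
    (Subgroup.inclusion_injective hMG)
  have hMfin : (M : Set Γ).Finite := Set.toFinite _
  have hK2 := h.two
  have hK0 : 0 < K := by linarith
  have hK1 : 1 < K := by linarith
  have hKD : ∀ k ≤ 600, K ^ k ≤ D := fun k hk => (pow_le_pow_right₀ hK1.le hk).trans hD
  have hD1 : 1 ≤ D := by simpa using hKD 0 (by norm_num)
  have hD0 : 0 < D := by linarith
  have hsy := h.symm
  have hGM : ∀ g ∈ G, ∀ x ∈ M, g * x * g⁻¹ ∈ M := fun g _ => hMn g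
  have hmono : ∀ {i j : ℕ}, i ≤ j → A ^ (2 * i) ⊆ A ^ (2 * j) := fun hij =>
    pow_even_mono hsy h.ne hij
  have hGi : ∀ γ : Γ, ∀ g ∈ G, γ⁻¹ * g * γ ∈ G := fun γ g hg => by
    have := hGn γ⁻¹ g hg
    simpa using this
  -- the set Y
  let Y : Set Γ := {y | ∃ g ∈ G, ∃ x ∈ A ^ 18, x ∈ M ∧ g * x * g⁻¹ = y}
  have hYM : Y ⊆ M := by
    rintro _ ⟨g, hg, x, hx, hxM, rfl⟩
    exact hMn g x hxM
  have hY30 : Y ⊆ A ^ 30 := by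
    rintro _ ⟨g, hg, x, hx, hxM, rfl⟩
    obtain ⟨a, ha, m, hm, rfl⟩ := hcov g hg
    have : a * m * x * (a * m)⁻¹ = a * x * a⁻¹ := by
      have : m * x * m⁻¹ = x := by rw [hab m hm x hxM]; group
      calc a * m * x * (a * m)⁻¹ = a * (m * x * m⁻¹) * a⁻¹ := by group
        _ = _ := by rw [this]
    rw [this]
    exact conj_mem_pow hsy (by norm_num) ha hx
  have hXY : ∀ x ∈ A ^ 18, x ∈ M → x ∈ Y := fun x hx hxM =>
    ⟨1, G.one_mem, x, hx, hxM, by group⟩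
  have hYfin : Y.Finite := hMfin.subset hYM
  have h2Y : A ^ 2 ∩ (M : Set Γ) ⊆ Y := fun x hx =>
    hXY x (hmono (i := 1) (j := 9) (by norm_num) hx.1) hx.2
  have hY1 : (1 : Γ) ∈ Y := h2Y ⟨one_mem_sq hsy h.ne, M.one_mem⟩
  have hYpow : ∀ k, Y ^ k ⊆ A ^ (30 * k) := fun k => by
    rw [pow_mul]; exact Set.pow_subset_pow_left hY30
  have hL6 : ((Y ^ 6).ncard : ℝ) ≤ K ^ 181 * Y.ncard := by
    have h1 : Y ^ 6 ⊆ A ^ 180 ∩ (M : Set Γ) := fun y hy =>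
      ⟨hYpow 6 hy, pow_sub_subgroup hYM 6 hy⟩
    have h3 : ((Y ^ 6).ncard : ℝ) ≤ (A ^ 180 ∩ (M : Set Γ)).ncard := by
      exact_mod_cast Set.ncard_le_ncard h1 (hMfin.subset Set.inter_subset_right)
    have h4 : ((A ^ 2 ∩ (M : Set Γ)).ncard : ℝ) ≤ Y.ncard := by
      exact_mod_cast Set.ncard_le_ncard h2Y hYfin
    calc _ ≤ _ := h3
      _ ≤ K ^ 181 * (A ^ 2 ∩ (M : Set Γ)).ncard := h.F M 180
      _ ≤ _ := by gcongr
  obtain ⟨P, hP4, hPc⟩ := core_grp G M hab hGM Y hYM hY1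
    (by
      rintro _ ⟨g, hg, x, hx, hxM, rfl⟩
      exact ⟨g, hg, x⁻¹, inv_mem_of_symm (pow_symm hsy 18) hx, M.inv_mem hxM, by group⟩)
    (by
      rintro k hk _ ⟨g, hg, x, hx, hxM, rfl⟩
      exact ⟨k * g, G.mul_mem hk hg, x, hx, hxM, by group⟩)
    (L := K ^ 181) (D := D) (by positivity) hL6
    (by
      have h16 : (65536 : ℝ) ≤ K ^ 16 := by
        calc (65536 : ℝ) = 2 ^ 16 := by norm_num
          _ ≤ K ^ 16 := by gcongr
      calc 65536 * (K ^ 181) ^ 3 ≤ K ^ 16 * (K ^ 181) ^ 3 := by gcongr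
        _ = K ^ 559 := by rw [← pow_mul, ← pow_add]
        _ ≤ D := hKD _ (by norm_num)) hD1 hQ
  -- the subgroup L
  let gens : Set Γ := {y | ∃ g ∈ G, ∃ x ∈ A ^ 18, x ∈ M ∧ g * x * g⁻¹ * x⁻¹ = y}
  let L : Subgroup Γ := Subgroup.closure gens
  have hLc : ∀ g ∈ G, ∀ x ∈ A ^ 18, x ∈ M → g * x * g⁻¹ * x⁻¹ ∈ L := fun g hg x hx hxM =>
    Subgroup.subset_closure ⟨g, hg, x, hx, hxM, rfl⟩
  have hLM : L ≤ M := by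
    rw [Subgroup.closure_le]
    rintro _ ⟨g, hg, x, hx, hxM, rfl⟩
    exact M.mul_mem (hMn g x hxM) (M.inv_mem hxM)
  have hL120 : (L : Set Γ) ⊆ A ^ 120 := by
    have h1 : L ≤ P := by
      rw [Subgroup.closure_le]
      rintro _ ⟨g, hg, x, hx, hxM, rfl⟩
      exact hPc g hg x (hXY x hx hxM)
    intro x hx
    exact hYpow 4 (hP4 (h1 hx))
  -- conjugation maps of closures
  have hconj : ∀ (γ : Γ) (T : Subgroup Γ), (∀ y ∈ gens, γ * y * γ⁻¹ ∈ T) →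
      ∀ y ∈ L, γ * y * γ⁻¹ ∈ T := by
    intro γ T hT y hy
    have : L ≤ T.comap (MulAut.conj γ).toMonoidHom := by
      rw [Subgroup.closure_le]
      intro y hy
      exact hT y hy
    exact this hy
  have hLG : ∀ k ∈ G, ∀ y ∈ L, k * y * k⁻¹ ∈ L := by
    intro k hk
    apply hconj
    rintro _ ⟨g, hg, x, hx, hxM, rfl⟩
    have h1 := L.mul_mem (hLc (k * g) (G.mul_mem hk hg) x hx hxM) (L.inv_mem (hLc k hk x hx hxM))
    convert h1 using 1
    group
  have hperf := perf_lemma G M L hab hGM hQ hD1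
  -- L is normalized by A
  have hLA : ∀ a ∈ A, ∀ y ∈ L, a * y * a⁻¹ ∈ L := by
    intro a ha
    have ha1 : a ∈ A ^ 1 := by simpa using ha
    let L' : Subgroup Γ := L.map (MulAut.conj a).toMonoidHom
    have hL'mem : ∀ y, y ∈ L' ↔ ∃ l ∈ L, a * l * a⁻¹ = y := fun y => Iff.rfl
    have hL'M : L' ≤ M := by
      intro y hy
      obtain ⟨l, hl, rfl⟩ := (hL'mem y).1 hy
      exact hMn a l (hLM hl)
    have hL'122 : (L' : Set Γ) ⊆ A ^ 122 := by
      intro y hy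
      obtain ⟨l, hl, rfl⟩ := (hL'mem y).1 hy
      exact conj_mem_pow hsy (by norm_num) ha1 (hL120 hl)
    have hL'G : ∀ g ∈ G, ∀ y ∈ L', g * y * g⁻¹ ∈ L' := by
      intro g hg y hy
      obtain ⟨l, hl, rfl⟩ := (hL'mem y).1 hy
      refine (hL'mem _).2 ⟨_, hLG _ (hGi a g hg) l hl, ?_⟩
      group
    let Q : Subgroup Γ :=
      { carrier := {y | y ∈ L' ∧ ∀ g ∈ G, g * y * g⁻¹ * y⁻¹ ∈ L}
        mul_mem' := by
          rintro x y ⟨hx, hx'⟩ ⟨hy, hy'⟩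
          refine ⟨L'.mul_mem hx hy, fun g hg => ?_⟩
          have h1 := L.mul_mem (hx' g hg) (hy' g hg)
          have hm1 : g * y * g⁻¹ * y⁻¹ ∈ M := hLM (hy' g hg)
          have e : x * (g * y * g⁻¹ * y⁻¹) * x⁻¹ = g * y * g⁻¹ * y⁻¹ := by
            rw [hab x (hL'M hx) _ hm1]; group
          convert h1 using 1
          calc g * (x * y) * g⁻¹ * (x * y)⁻¹ =
              (g * x * g⁻¹ * x⁻¹) * (x * (g * y * g⁻¹ * y⁻¹) * x⁻¹) := by group
            _ = _ := by rw [e]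
        one_mem' := ⟨L'.one_mem, fun g hg => by simp⟩
        inv_mem' := by
          rintro x ⟨hx, hx'⟩
          refine ⟨L'.inv_mem hx, fun g hg => ?_⟩
          have h1 := L.inv_mem (hx' g hg)
          have hm1 : g * x * g⁻¹ * x⁻¹ ∈ M := hLM (hx' g hg)
          have e : x⁻¹ * (g * x * g⁻¹ * x⁻¹)⁻¹ * x = (g * x * g⁻¹ * x⁻¹)⁻¹ := by
            rw [hab x⁻¹ (M.inv_mem (hL'M hx)) _ (M.inv_mem hm1)]; group
          convert h1 using 1
          calc g * x⁻¹ * g⁻¹ * x⁻¹⁻¹ = x⁻¹ * (g * x * g⁻¹ * x⁻¹)⁻¹ * x := by group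
            _ = _ := e }
    have hQmem : ∀ y, y ∈ Q ↔ y ∈ L' ∧ ∀ g ∈ G, g * y * g⁻¹ * y⁻¹ ∈ L := fun y => Iff.rfl
    have hQG : ∀ g ∈ G, ∀ q ∈ Q, g * q * g⁻¹ ∈ Q := by
      intro g hg q hq
      obtain ⟨hq1, hq2⟩ := (hQmem q).1 hq
      refine (hQmem _).2 ⟨hL'G g hg q hq1, fun k hk => ?_⟩
      have h1 := L.mul_mem (hq2 (k * g) (G.mul_mem hk hg)) (L.inv_mem (hq2 g hg))
      convert h1 using 1
      group
    have hL'fin : (L' : Set Γ).Finite := hMfin.subset hL'M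
    have hQsub : (Q : Set Γ) ⊆ L' := fun y hy => hy.1
    have h2Q : A ^ 2 ∩ (L' : Set Γ) ⊆ Q := fun y hy =>
      ⟨hy.2, fun g hg => hLc g hg y (hmono (i := 1) (j := 9) (by norm_num) hy.1) (hL'M hy.2)⟩
    have hcard : ((L' : Set Γ).ncard : ℝ) ≤ D * (Q : Set Γ).ncard := by
      have h1 : A ^ 122 ∩ (L' : Set Γ) = L' := Set.inter_eq_right.2 hL'122
      have h2 := h.F L' 122
      rw [h1] at h2
      have h3 : ((A ^ 2 ∩ (L' : Set Γ)).ncard : ℝ) ≤ (Q : Set Γ).ncard := by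
        exact_mod_cast Set.ncard_le_ncard h2Q (hL'fin.subset hQsub)
      have h4 := hKD 123 (by norm_num)
      calc _ ≤ _ := h2
        _ ≤ D * (Q : Set Γ).ncard := by gcongr
    have hstab : ∀ x ∈ L', ∀ g ∈ G, g * x * g⁻¹ * x⁻¹ ∈ L := by
      intro x hx
      have hxM := hL'M hx
      have h1 := index_lemma G Q hQ hQG x L' hL'fin
        (fun g hg q hq => L'.mul_mem (hL'G g hg x hx) (hQsub hq)) (hL'fin.subset hQsub) hcard
      apply hperf x hxM
      intro g hg
      have h2 := h1 g hg
      rw [hab _ (M.inv_mem hxM) _ (hMn g x hxM)] at h2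
      exact h2.2
    apply hconj
    rintro _ ⟨g, hg, x, hx, hxM, rfl⟩
    have h1 := hperf (a * x * a⁻¹) (hMn a x hxM) (by
      intro g hg
      apply hstab
      refine (hL'mem _).2 ⟨_, hLc _ (hGi a g hg) x hx hxM, ?_⟩
      group) (a * g * a⁻¹) (hGn a g hg)
    convert h1 using 1
    group
  have hLn := normal_of_gen hsy h.gen L hLA
  -- the subgroup J
  let J : Subgroup Γ :=
    { carrier := {y | y ∈ M ∧ ∀ g ∈ G, g * y * g⁻¹ * y⁻¹ ∈ L}
      mul_mem' := by
        rintro x y ⟨hx, hx'⟩ ⟨hy, hy'⟩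
        refine ⟨M.mul_mem hx hy, fun g hg => ?_⟩
        have h1 := L.mul_mem (hx' g hg) (hLn x _ (hy' g hg))
        convert h1 using 1
        group
      one_mem' := ⟨M.one_mem, fun g hg => by simp⟩
      inv_mem' := by
        rintro x ⟨hx, hx'⟩
        refine ⟨M.inv_mem hx, fun g hg => ?_⟩
        have h1 := hLn x⁻¹ _ (L.inv_mem (hx' g hg))
        convert h1 using 1
        group }
  have hXJ : ∀ x ∈ A ^ 18, x ∈ M → x ∈ J := fun x hx hxM =>
    ⟨hxM, fun g hg => hLc g hg x hx hxM⟩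
  have hJn : ∀ γ : Γ, ∀ x ∈ J, γ * x * γ⁻¹ ∈ J := by
    rintro γ x ⟨hx, hx'⟩
    refine ⟨hMn γ x hx, fun g hg => ?_⟩
    have h1 := hLn γ _ (hx' _ (hGi γ g hg))
    convert h1 using 1
    group
  have hJM : ∀ x ∈ J, x ∈ M := fun x hx => hx.1
  -- decomposition
  have hdec : ∀ {i : ℕ}, i ≤ 6 → ∀ x ∈ A ^ (2 * i), x ∈ G → ∃ a ∈ A ^ 6, ∃ j ∈ J, a ∈ G ∧ a * j = x := by
    intro i hi x hx hxG
    obtain ⟨a, ha, m, hm, rfl⟩ := hcov x hxG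
    have haG : a ∈ G := by
      have := G.mul_mem hxG (G.inv_mem (hMG hm))
      simpa using this
    refine ⟨a, ha, m, ?_, haG, rfl⟩
    apply hXJ _ _ hm
    have h1 := mul_mem_pow (k := 2 * (3 + i)) (by ring) (inv_mem_of_symm (pow_symm hsy 6) ha) hx
    rw [inv_mul_cancel_left] at h1
    exact hmono (j := 9) (by omega) h1
  let E : Subgroup Γ :=
    { carrier := {y | ∃ a ∈ A ^ 6, ∃ j ∈ J, a ∈ G ∧ a * j = y}
      mul_mem' := by
        rintro _ _ ⟨a, ha, j, hj, haG, rfl⟩ ⟨b, hb, k, hk, hbG, rfl⟩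
        obtain ⟨c, hc, l, hl, hcG, hcl⟩ := hdec (i := 6) le_rfl (a * b)
          (mul_mem_pow (by norm_num) ha hb) (G.mul_mem haG hbG)
        refine ⟨c, hc, l * (b⁻¹ * j * b⁻¹⁻¹ * k), J.mul_mem hl (J.mul_mem (hJn _ _ hj) hk), hcG, ?_⟩
        rw [← mul_assoc, hcl]
        group
      one_mem' := by
        obtain ⟨c, hc, l, hl, hcG, hcl⟩ := hdec (i := 1) (by norm_num) 1
          (one_mem_sq hsy h.ne) G.one_mem
        exact ⟨c, hc, l, hl, hcG, hcl⟩
      inv_mem' := by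
        rintro _ ⟨a, ha, j, hj, haG, rfl⟩
        obtain ⟨c, hc, l, hl, hcG, hcl⟩ := hdec (i := 3) (by norm_num) a⁻¹
          (inv_mem_of_symm (pow_symm hsy 6) ha) (G.inv_mem haG)
        refine ⟨c, hc, l * (a * j⁻¹ * a⁻¹), J.mul_mem hl (hJn _ _ (J.inv_mem hj)), hcG, ?_⟩
        rw [← mul_assoc, hcl]
        group }
  have hEA : ∀ b ∈ A, ∀ y ∈ E, b * y * b⁻¹ ∈ E := by
    rintro b hb _ ⟨a, ha, j, hj, haG, rfl⟩
    have hb1 : b ∈ A ^ 1 := by simpa using hb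
    obtain ⟨c, hc, l, hl, hcG, hcl⟩ := hdec (i := 4) (by norm_num) (b * a * b⁻¹)
      (conj_mem_pow hsy (by norm_num) hb1 ha) (hGn b a haG)
    refine ⟨c, hc, l * (b * j * b⁻¹), J.mul_mem hl (hJn _ _ hj), hcG, ?_⟩
    rw [← mul_assoc, hcl]
    group
  have hEn := normal_of_gen hsy h.gen E hEA
  have hME : M ≤ E := by
    refine hcom.trans ?_
    rw [Subgroup.commutator_le]
    intro g hg m' hm'
    obtain ⟨a, ha, m, hm, rfl⟩ := hcov g hg
    have haG : a ∈ G := by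
      have := G.mul_mem hg (G.inv_mem (hMG hm))
      simpa using this
    have haE : a ∈ E := ⟨a, ha, 1, J.one_mem, haG, mul_one a⟩
    have h1 := E.mul_mem haE (hEn m' _ (E.inv_mem haE))
    have e : m * m' * m⁻¹ = m' := by rw [hab m hm m' hm']; group
    convert h1 using 1
    rw [commutatorElement_def]
    calc a * m * m' * (a * m)⁻¹ * m'⁻¹ = a * (m * m' * m⁻¹) * a⁻¹ * m'⁻¹ := by group
      _ = _ := by rw [e]; group
  have hMJ : M ≤ J := by
    intro m hm
    obtain ⟨a, ha, j, hj, haG, rfl⟩ := hME hm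
    refine J.mul_mem (hXJ a (hmono (i := 3) (j := 9) (by norm_num) ha) ?_) hj
    have := M.mul_mem hm (M.inv_mem (hJM j hj))
    simpa using this
  have hML : M ≤ L := by
    refine hcom.trans ?_
    rw [Subgroup.commutator_le]
    intro g hg m hm
    exact (hMJ hm).2 g hg
  have hG126 : (G : Set Γ) ⊆ A ^ 126 := by
    intro g hg
    obtain ⟨a, ha, m, hm, rfl⟩ := hcov g hg
    exact mul_mem_pow (by norm_num) ha (hL120 (hML hm))
  refine gowers_set G hD0 hQ (A ^ 2) (pow_symm hsy 2) (c := K ^ 127) ?_ ?_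
  · have h1 : A ^ 126 ∩ (G : Set Γ) = G := Set.inter_eq_right.2 hG126
    have h2 := h.F G 126
    rw [h1] at h2
    rw [← Nat.card_coe_set_eq] at h2
    exact h2
  · rw [← pow_mul]
    exact lt_of_lt_of_le (pow_lt_pow_right₀ hK1 (by norm_num)) hD

lemma IsQR.of_surj {G H : Type*} [Group G] [Group H] {D : ℝ} (h : IsQR G D) (f : G →* H)
    (hf : Function.Surjective f) : IsQR H D := by
  intro e φ hφ
  refine h e (φ.comp f) ?_
  rw [MonoidHom.range_comp, MonoidHom.range_eq_top.2 hf, ← MonoidHom.range_eq_map]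
  exact hφ

def Cov {Γ : Type*} [Group Γ] (A : Set Γ) (G R : Subgroup Γ) : Prop :=
  ∀ g ∈ G, ∃ a ∈ (A ^ 2 ∩ (G : Set Γ)) ^ 3, ∃ r ∈ R, a * r = g

lemma Cov.six {Γ : Type*} [Group Γ] {A : Set Γ} {G R : Subgroup Γ} (h : Cov A G R)
    (M : Subgroup Γ) [M.Normal] :
    ∀ g ∈ G.map (QuotientGroup.mk' M), ∃ a ∈ (QuotientGroup.mk' M '' A) ^ 6,
      ∃ r ∈ R.map (QuotientGroup.mk' M), a * r = g := by
  rintro _ ⟨g, hg, rfl⟩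
  obtain ⟨a, ha, r, hr, rfl⟩ := h g hg
  refine ⟨QuotientGroup.mk' M a, ?_, QuotientGroup.mk' M r, ⟨r, hr, rfl⟩, by simp⟩
  rw [← Set.image_pow]
  refine ⟨a, ?_, rfl⟩
  have h1 : (A ^ 2 ∩ (G : Set Γ)) ^ 3 ⊆ (A ^ 2) ^ 3 := Set.pow_subset_pow_left Set.inter_subset_left
  have h2 := h1 ha
  rwa [← pow_mul] at h2

lemma Cov.lift {Γ : Type*} [Group Γ] {A : Set Γ} {G M : Subgroup Γ} [M.Normal] (hMG : M ≤ G)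
    (h : ((QuotientGroup.mk' M '' A) ^ 2 ∩ (G.map (QuotientGroup.mk' M) : Set (Γ ⧸ M))) ^ 3
      = G.map (QuotientGroup.mk' M)) : Cov A G M := by
  intro g hg
  have h1 : (QuotientGroup.mk' M '' A) ^ 2 ∩ (G.map (QuotientGroup.mk' M) : Set (Γ ⧸ M)) ⊆
      QuotientGroup.mk' M '' (A ^ 2 ∩ (G : Set Γ)) := by
    rw [← Set.image_pow]
    rintro _ ⟨⟨a, ha, rfl⟩, ⟨g, hg, hga⟩⟩
    refine ⟨a, ⟨ha, ?_⟩, rfl⟩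
    have h3 : g⁻¹ * a ∈ M := QuotientGroup.eq.1 hga
    have h4 := G.mul_mem hg (hMG h3)
    simpa using h4
  have h2 : QuotientGroup.mk' M g ∈ (G.map (QuotientGroup.mk' M) : Set (Γ ⧸ M)) := ⟨g, hg, rfl⟩
  rw [← h] at h2
  have h3 := Set.pow_subset_pow_left (n := 3) h1 h2
  rw [← Set.image_pow] at h3
  obtain ⟨a, ha, hag⟩ := h3
  exact ⟨a, ha, a⁻¹ * g, QuotientGroup.eq.1 hag, by simp⟩

lemma descend {Γ : Type*} [Group Γ] {A : Set Γ} {K D : ℝ} (hfin : A.Finite) (hne : A.Nonempty)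
    (hsymm : A⁻¹ = A) (hgen : Subgroup.closure A = ⊤) (h2 : 2 ≤ K)
    (hgr : ∀ k, 1 ≤ k → ((A ^ (k + 2)).ncard : ℝ) ≤ K ^ k * A.ncard)
    (G R : Subgroup Γ) [Finite G] [G.Normal] [R.Normal] (hRG : R ≤ G) (hQ : IsQR G D)
    (hD : K ^ 600 ≤ D) (hcov : Cov A G R) (hlt : ⁅R, R⁆ < R) :
    ∃ M : Subgroup Γ, M.Normal ∧ M < R ∧ Cov A G M := by
  have hfinmap : ∀ (M : Subgroup Γ) [M.Normal], Finite (G.map (QuotientGroup.mk' M)) := by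
    intro M _
    exact Finite.of_surjective _ ((QuotientGroup.mk' M).subgroupMap_surjective G)
  have hQm : ∀ (M : Subgroup Γ) [M.Normal], IsQR (G.map (QuotientGroup.mk' M)) D := by
    intro M _
    exact hQ.of_surj _ ((QuotientGroup.mk' M).subgroupMap_surjective G)
  have hnm : ∀ (M J : Subgroup Γ) [M.Normal] [J.Normal], ∀ γ : Γ ⧸ M,
      ∀ g ∈ J.map (QuotientGroup.mk' M), γ * g * γ⁻¹ ∈ J.map (QuotientGroup.mk' M) := by
    intro M J _ hJ γ g hg
    have : (J.map (QuotientGroup.mk' M)).Normal := hJ.map _ (QuotientGroup.mk'_surjective M)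
    exact this.conj_mem g hg γ
  by_cases hc : ⁅G, R⁆ ⊔ ⁅R, R⁆ = R
  · refine ⟨⁅R, R⁆, inferInstance, hlt, ?_⟩
    apply Cov.lift (hlt.le.trans hRG)
    have := hfinmap ⁅R, R⁆
    refine step_a (K := K) (D := D) (Gr.quot hfin hne hsymm hgen h2 hgr ⁅R, R⁆) _
      (R.map (QuotientGroup.mk' ⁅R, R⁆)) (hnm _ _) (hnm _ _) (Subgroup.map_mono hRG) ?_ ?_
      (hQm _) hD (hcov.six _)
    · rintro _ ⟨x, hx, rfl⟩ _ ⟨y, hy, rfl⟩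
      rw [← map_mul, ← map_mul]
      apply QuotientGroup.eq.2
      have := Subgroup.commutator_mem_commutator (R.inv_mem hy) (R.inv_mem hx)
      rw [commutatorElement_def] at this
      simpa [mul_assoc] using this
    · rw [← Subgroup.map_commutator]
      refine (Subgroup.map_mono hc.ge).trans ?_
      rw [Subgroup.map_sup]
      refine sup_le le_rfl ?_
      rintro _ ⟨x, hx, rfl⟩
      have : QuotientGroup.mk' ⁅R, R⁆ x = 1 := (QuotientGroup.eq_one_iff x).2 hx
      rw [this]
      exact Subgroup.one_mem _
  · have hle : ⁅G, R⁆ ⊔ ⁅R, R⁆ ≤ R := sup_le (Subgroup.commutator_le_right _ _) hlt.le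
    set M := ⁅G, R⁆ ⊔ ⁅R, R⁆ with hM
    have hMn : M.Normal := by rw [hM]; infer_instance
    refine ⟨M, hMn, lt_of_le_of_ne hle hc, ?_⟩
    apply Cov.lift (hle.trans hRG)
    have := hfinmap M
    refine step_b (K := K) (D := D) (Gr.quot hfin hne hsymm hgen h2 hgr M) _
      (R.map (QuotientGroup.mk' M)) (Subgroup.map_mono hRG) ?_
      (hQm _) (le_trans (pow_le_pow_right₀ (by linarith) (by norm_num)) hD) (hcov.six _)
    rintro _ ⟨x, hx, rfl⟩ _ ⟨y, hy, rfl⟩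
    rw [← map_mul, ← map_mul]
    apply QuotientGroup.eq.2
    have := Subgroup.commutator_mem_commutator (G.inv_mem hy) (R.inv_mem hx)
    rw [commutatorElement_def] at this
    have h3 : ⁅G, R⁆ ≤ M := le_sup_left
    simpa [mul_assoc] using h3 this

lemma cov_bot {Γ : Type*} [Group Γ] {A : Set Γ} {G : Subgroup Γ} (h : Cov A G ⊥) :
    (A ^ 2 ∩ (G : Set Γ)) ^ 3 = G := by
  apply Set.Subset.antisymm
  · exact pow_sub_subgroup Set.inter_subset_right 3
  · intro g hg
    obtain ⟨a, ha, r, hr, rfl⟩ := h g hg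
    rw [Subgroup.mem_bot] at hr
    subst hr
    simpa using ha

lemma small_case {Γ : Type*} [Group Γ] {A : Set Γ} (hfin : A.Finite) (hne : A.Nonempty)
    (hA : A⁻¹ = A) (hgen : Subgroup.closure A = ⊤) (ht : (A ^ 3).ncard < 2 * A.ncard) {D : ℝ}
    (hD : 1 ≤ D) (G : Subgroup Γ) (hQ : IsQR G D) : (G : Set Γ) ⊆ A ^ 2 := by
  classical
  have hinv : ∀ k, ∀ u ∈ A ^ k, u⁻¹ ∈ A ^ k := fun k u hu => inv_mem_of_symm (pow_symm hA k) hu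
  have hmul : ∀ u ∈ A ^ 2, ∀ v ∈ A ^ 2, u * v ∈ A ^ 2 := by
    intro u hu v hv
    have hs1 : (fun a => u⁻¹ * a) '' A ⊆ A ^ 3 := by
      rintro _ ⟨a, ha, rfl⟩
      exact mul_mem_pow (i := 2) (j := 1) rfl (hinv 2 u hu) (by simpa using ha)
    have hs2 : (fun a => v * a) '' A ⊆ A ^ 3 := by
      rintro _ ⟨a, ha, rfl⟩
      exact mul_mem_pow (i := 2) (j := 1) rfl hv (by simpa using ha)
    have hnd : ¬ Disjoint ((fun a => u⁻¹ * a) '' A) ((fun a => v * a) '' A) := by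
      intro hd
      have h1 := Set.ncard_union_eq hd (hfin.image _) (hfin.image _)
      rw [Set.ncard_image_of_injective _ (mul_right_injective _),
        Set.ncard_image_of_injective _ (mul_right_injective _)] at h1
      have h2 := Set.ncard_le_ncard (Set.union_subset hs1 hs2) (fin_pow hfin 3)
      omega
    rw [Set.not_disjoint_iff] at hnd
    obtain ⟨_, ⟨a, ha, rfl⟩, b, hb, hab⟩ := hnd
    have h3 : u * v = a * b⁻¹ := by
      have h4 : v * b = u⁻¹ * a := hab
      rw [eq_mul_inv_iff_mul_eq, mul_assoc, h4]
      simp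
    rw [h3]
    exact mul_mem_pow (i := 1) (j := 1) rfl (by simpa using ha)
      (by simpa using inv_mem_of_symm hA hb)
  have h42 : A ^ 4 = A ^ 2 := by
    apply Set.Subset.antisymm
    · intro x hx
      rw [show (4 : ℕ) = 2 + 2 from rfl, pow_add] at hx
      obtain ⟨u, hu, v, hv, rfl⟩ := hx
      exact hmul u hu v hv
    · exact pow_even_mono hA hne (i := 1) (j := 2) (by norm_num)
  have h53 : A ^ 5 = A ^ 3 := by
    rw [show (5 : ℕ) = 4 + 1 from rfl, pow_add, h42, ← pow_add]
  have h62 : A ^ 6 = A ^ 2 := by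
    rw [show (6 : ℕ) = 5 + 1 from rfl, pow_add, h53, ← pow_add, h42]
  have hall : ∀ x : Γ, x ∈ A ^ 2 ∨ x ∈ A ^ 3 := by
    intro x
    have hx : x ∈ Subgroup.closure A := by rw [hgen]; trivial
    induction hx using Subgroup.closure_induction with
    | mem a ha =>
      right
      have := mul_mem_pow (i := 1) (j := 2) (k := 3) rfl (show a ∈ A ^ 1 by simpa using ha)
        (one_mem_sq hA hne)
      simpa using this
    | one => exact Or.inl (one_mem_sq hA hne)
    | mul x y _ _ hx hy =>
      rcases hx with hx | hx <;> rcases hy with hy | hy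
      · exact Or.inl (hmul _ hx _ hy)
      · right; rw [← h53]; exact mul_mem_pow rfl hx hy
      · right; rw [← h53]; exact mul_mem_pow rfl hx hy
      · left; rw [← h62]; exact mul_mem_pow rfl hx hy
    | inv x _ hx => exact hx.imp (hinv _ _) (hinv _ _)
  let f : G →* ℂ :=
    { toFun := fun g => if (g : Γ) ∈ A ^ 2 then 1 else -1
      map_one' := by simp [one_mem_sq hA hne]
      map_mul' := by
        intro x y
        by_cases hx : (x : Γ) ∈ A ^ 2 <;> by_cases hy : (y : Γ) ∈ A ^ 2
        · simp [hx, hy, hmul _ hx _ hy]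
        · have : (x : Γ) * y ∉ A ^ 2 := by
            intro h
            apply hy
            simpa using hmul _ (hinv _ _ hx) _ h
          simp [hx, hy, this]
        · have : (x : Γ) * y ∉ A ^ 2 := by
            intro h
            apply hx
            simpa using hmul _ h _ (hinv _ _ hy)
          simp [hx, hy, this]
        · have : (x : Γ) * y ∈ A ^ 2 := by
            rw [← h62]
            exact mul_mem_pow rfl ((hall _).resolve_left hx) ((hall _).resolve_left hy)
          simp [hx, hy, this] }
  intro g hg
  have h1 := qr_char hQ hD f ⟨g, hg⟩
  by_contra hn
  have h2 : (if g ∈ A ^ 2 then (1 : ℂ) else -1) = 1 := h1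
  rw [if_neg hn] at h2
  norm_num at h2

lemma comm_lt {Γ : Type*} [Group Γ] (R N : Subgroup Γ) (hRN : R ≤ N) (hN : Group.IsNilpotent N)
    (hR : R ≠ ⊥) : ⁅R, R⁆ < R := by
  have : Group.IsSolvable R :=
    Group.isSolvable_of_isSolvable_injective (Subgroup.inclusion_injective hRN)
  have : Nontrivial R := (Subgroup.nontrivial_iff_ne_bot R).2 hR
  have h1 := Group.IsSolvable.commutator_lt_top_of_nontrivial R
  rw [← R.map_subtype_commutator]
  conv_rhs => rw [← R.range_subtype, MonoidHom.range_eq_map]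
  exact Subgroup.map_subtype_lt_map_subtype.2 h1

lemma growth_lemma {Γ : Type*} [Group Γ] {A : Set Γ} {K : ℝ} (hfin : A.Finite)
    (hA : A⁻¹ = A) (ht : ((A ^ 3).ncard : ℝ) ≤ K * A.ncard) :
    ∀ k, 1 ≤ k → ((A ^ (k + 2)).ncard : ℝ) ≤ K ^ k * A.ncard := by
  classical
  intro k hk
  obtain ⟨B, rfl⟩ := hfin.exists_finset_coe
  rw [← Finset.coe_pow, Set.ncard_coe_finset, Set.ncard_coe_finset] at ht
  rw [← Finset.coe_pow, Set.ncard_coe_finset, Set.ncard_coe_finset]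
  have hB : B⁻¹ = B := by
    apply Finset.coe_injective
    rw [Finset.coe_inv]
    exact hA
  exact Finset.small_pow_of_small_tripling (m := k + 2) (by omega) ht hB

lemma big_case {Γ : Type*} [Group Γ] {A : Set Γ} {K D : ℝ} (hfin : A.Finite) (hne : A.Nonempty)
    (hsymm : A⁻¹ = A) (hgen : Subgroup.closure A = ⊤) (h2 : 2 ≤ K)
    (hgr : ∀ k, 1 ≤ k → ((A ^ (k + 2)).ncard : ℝ) ≤ K ^ k * A.ncard)
    (G N : Subgroup Γ) [Finite G] [G.Normal] [N.Normal] (hNG : N ≤ G) (hQ : IsQR G D)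
    (hN : Group.IsNilpotent N)
    (hD : K ^ 600 ≤ D) (hcov : (G : Set Γ) ⊆ A * (N : Set Γ)) :
    (A ^ 2 ∩ (G : Set Γ)) ^ 3 = G := by
  have key : ∀ n : ℕ, ∀ R : Subgroup Γ, R.Normal → R ≤ N → Nat.card R = n → Cov A G R →
      Cov A G ⊥ := by
    intro n
    induction n using Nat.strong_induction_on with
    | _ n ih =>
      intro R hRn hRN hcard hc
      by_cases hR : R = ⊥
      · rwa [hR] at hc
      have hRG := hRN.trans hNG
      obtain ⟨M, hMn, hMR, hM⟩ := descend hfin hne hsymm hgen h2 hgr G R hRG hQ hD hc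
        (comm_lt R N hRN hN hR)
      refine ih (Nat.card M) ?_ M hMn (hMR.le.trans hRN) rfl hM
      rw [← hcard]
      have hf : (R : Set Γ).Finite := Set.Finite.subset (Set.toFinite (G : Set Γ)) hRG
      exact Set.ncard_lt_ncard hMR hf
  apply cov_bot
  refine key _ N inferInstance le_rfl rfl ?_
  intro g hg
  have h1 : (1 : Γ) ∈ A ^ 2 ∩ (G : Set Γ) := ⟨one_mem_sq hsymm hne, G.one_mem⟩
  obtain ⟨a, ha, n, hn, hgn⟩ := hcov hg
  obtain ⟨b, hb, n', hn', hbn⟩ := hcov G.one_mem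
  have hbn : b * n' = 1 := hbn
  have hgn : a * n = g := hgn
  have hbN : b ∈ N := by rw [eq_inv_of_mul_eq_one_left hbn]; exact N.inv_mem hn'
  have haG : a ∈ G := by rw [eq_mul_inv_of_mul_eq hgn]; exact G.mul_mem hg (G.inv_mem (hNG hn))
  have hab : a * b ∈ A ^ 2 ∩ (G : Set Γ) :=
    ⟨mul_mem_pow (i := 1) (j := 1) rfl (by simpa using ha) (by simpa using hb),
      G.mul_mem haG (hNG hbN)⟩
  refine ⟨a * b, ?_, b⁻¹ * n, N.mul_mem (N.inv_mem hbN) hn, by rw [← hgn]; group⟩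
  have h2 : ∀ x ∈ A ^ 2 ∩ (G : Set Γ), x ∈ (A ^ 2 ∩ (G : Set Γ)) ^ 1 := by
    intro x hx
    rwa [pow_one]
  have h3 := mul_mem_pow (A := A ^ 2 ∩ (G : Set Γ)) (i := 2) (j := 1) (k := 3) rfl
    (mul_mem_pow (i := 1) (j := 1) (k := 2) rfl (h2 _ hab) (h2 _ h1)) (h2 _ h1)
  rwa [mul_one, mul_one] at h3


/-- For each `d ≥ 1` there is `m = m(d)` such that: if `N ≤ G` are finite normal
subgroups of a group `Γ` with `[G,N] = N`, `N` nilpotent, `G/N` `d`-generated, and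
`deg_ℂ(G) > K^m`, and `A` is a finite symmetric `K`-tripling generating set of `Γ`
covering `G/N`, then `(A² ∩ G)³ = G`; moreover if `Γ = G` then `A³ = G`. -/
theorem covering_perfect_central_extension :
    ∀ d : ℕ, 1 ≤ d → ∃ m : ℕ,
      ∀ (Γ : Type) [Group Γ], ∀ (G N : Subgroup Γ),
      Finite ↥G →
      N ≤ G →
      (∀ γ : Γ, ∀ g ∈ G, γ * g * γ⁻¹ ∈ G) →
      (∀ γ : Γ, ∀ x ∈ N, γ * x * γ⁻¹ ∈ N) →
      ⁅G, N⁆ = N →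
      Group.IsNilpotent ↥N →
      (∃ S : Finset Γ, S.card ≤ d ∧ (S : Set Γ) ⊆ (G : Set Γ) ∧
        ∀ g ∈ G, ∃ h ∈ Subgroup.closure (S : Set Γ), h⁻¹ * g ∈ N) →
      ∀ K : ℝ, 1 ≤ K →
      (∀ (e : ℕ) (φ : ↥G →* GL (Fin e) ℂ), φ.range ≠ ⊥ → K ^ m < (e : ℝ)) →
      ∀ A : Set Γ, A.Finite → A.Nonempty → A⁻¹ = A →
      ((A ^ 3).ncard : ℝ) ≤ K * (A.ncard : ℝ) →
      Subgroup.closure A = ⊤ →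
      (G : Set Γ) ⊆ A * (N : Set Γ) →
      ((A ^ 2 ∩ (G : Set Γ)) ^ 3 = (G : Set Γ)) ∧
        (G = ⊤ → A ^ 3 = (G : Set Γ)) := by
  intro d _
  refine ⟨600, ?_⟩
  intro Γ _ G N hGfin hNG hG hNn _ hNil _ K hK hQ A hfin hne hA ht hgen hcov
  have hGn : G.Normal := ⟨fun g hg γ => hG γ g hg⟩
  have hNn' : N.Normal := ⟨fun g hg γ => hNn γ g hg⟩
  have hQ' : IsQR G (K ^ 600) := hQ
  have hD1 : 1 ≤ K ^ 600 := one_le_pow₀ hK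
  by_cases h2 : 2 ≤ K
  · have hgr := growth_lemma hfin hA ht
    have hmain := big_case hfin hne hA hgen h2 hgr G N hNG hQ' hNil le_rfl hcov
    refine ⟨hmain, ?_⟩
    rintro rfl
    have h6 : A ^ 6 = Set.univ := by
      have h3 : (A ^ 2 ∩ ((⊤ : Subgroup Γ) : Set Γ)) ^ 3 = (A ^ 2) ^ 3 := by simp
      rw [h3, ← pow_mul] at hmain
      simpa using hmain
    have h7 := hgr 4 (by norm_num)
    rw [h6] at h7
    have h8 := gowers_set (c := K ^ 4) (⊤ : Subgroup Γ) (by linarith) hQ' A hA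
      (by
        rw [← Nat.card_coe_set_eq] at h7
        simpa using h7)
      (by
        rw [← pow_mul]
        exact pow_lt_pow_right₀ (by linarith) (by norm_num))
    have h9 : A ∩ ((⊤ : Subgroup Γ) : Set Γ) = A := by simp
    rwa [h9] at h8
  · have ht' : (A ^ 3).ncard < 2 * A.ncard := by
      have h3 : (0 : ℝ) < A.ncard := by
        exact_mod_cast (Set.ncard_pos hfin).2 hne
      have h4 : ((A ^ 3).ncard : ℝ) < 2 * A.ncard := by nlinarith
      exact_mod_cast h4
    have hs := small_case hfin hne hA hgen ht' hD1 G hQ'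
    have hi : A ^ 2 ∩ (G : Set Γ) = G := Set.inter_eq_right.2 hs
    refine ⟨?_, ?_⟩
    · rw [hi]
      exact coe_set_pow (by norm_num) G
    · rintro rfl
      have h3 : A ^ 2 = Set.univ := Set.eq_univ_of_univ_subset hs
      rw [show (3 : ℕ) = 2 + 1 from rfl, pow_add, h3, pow_one]
      simpa using Set.univ_mul hne
end

section
/- Let T be an abelian group acting on a group U by automorphisms, with the action of x ∈ T on w ∈ U written w^x. Let F = {t ∈ T : there exists u ∈ U with u ≠ 1 and u^t = u}. For subsets W ⊆ U and X ⊆ T write W^X = {w^x : w ∈ W, x ∈ X}, and for a subset S of a group write S^{±k} = (S ∪ S⁻¹ ∪ {1})^k. Let X ⊆ T and W ⊆ U be finite nonempty subsets. Then at least one of the following holds: (a) 2·|(W^{X^{±2}})^{±6}|·|X·X⁻¹ ∩ F| ≥ |W|·|X|; (b) (W^X)^{±8} = ⟨W^{⟨X⟩}⟩, the subgroup of U generated by {w^x : w ∈ W, x ∈ ⟨X⟩}. -/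
open scoped Pointwise

set_option synthInstance.maxHeartbeats 400000
set_option maxHeartbeats 1000000

/-- `S^{±k} = (S ∪ S⁻¹ ∪ {1})^k`. -/
def symPow {G : Type*} [Group G] (S : Set G) (k : ℕ) : Set G :=
  (S ∪ S⁻¹ ∪ {1}) ^ k

/-- `W^X = {w^x : w ∈ W, x ∈ X}`, the set of images of `W` under elements of `X`. -/
def actSet {T U : Type*} [Group T] [Group U] [MulDistribMulAction T U]
    (W : Set U) (X : Set T) : Set U :=
  Set.image2 (fun (x : T) (w : U) => x • w) X W

open Finset in
theorem piv_cs {α β : Type} [DecidableEq α] [DecidableEq β] (P : Finset α) (f : α → β) :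
    P.card ^ 2 ≤ (P.image f).card * ((P ×ˢ P).filter (fun z => f z.1 = f z.2)).card := by
  have h1 : P.card = ∑ b ∈ P.image f, (P.filter (fun a => f a = b)).card :=
    Finset.card_eq_sum_card_fiberwise (fun a ha => Finset.mem_coe.2 (Finset.mem_image_of_mem f ha))
  have h2 : ((P ×ˢ P).filter (fun z => f z.1 = f z.2)).card
      = ∑ b ∈ P.image f, (P.filter (fun a => f a = b)).card ^ 2 := by
    rw [Finset.card_eq_sum_card_fiberwise (f := fun z => f z.1) (t := P.image f)]
    · apply Finset.sum_congr rfl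
      intro b hb
      rw [sq, ← Finset.card_product]
      congr 1
      ext ⟨x, y⟩
      simp only [Finset.mem_filter, Finset.mem_product]
      constructor
      · rintro ⟨⟨⟨h1, h2⟩, h3⟩, h4⟩
        exact ⟨⟨h1, h4⟩, h2, h3 ▸ h4⟩
      · rintro ⟨⟨h1, h4⟩, h2, h3⟩
        exact ⟨⟨⟨h1, h2⟩, h4.trans h3.symm⟩, h4⟩
    · intro z hz
      simp only [Finset.coe_filter, Finset.mem_product, Set.mem_ofPred_eq] at hz
      exact Finset.mem_coe.2 (Finset.mem_image_of_mem f hz.1.1)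
  rw [h2, h1]
  exact sq_sum_le_card_mul_sum_sq

theorem piv_pow4 {G : Type} [Group G] (B : Set G) {a b c d : G}
    (ha : a ∈ B) (hb : b ∈ B) (hc : c ∈ B) (hd : d ∈ B) : a * b * c * d ∈ B ^ 4 := by
  have : B ^ 4 = B * B * B * B := by simp only [pow_succ, pow_zero, one_mul]
  rw [this]
  exact Set.mul_mem_mul (Set.mul_mem_mul (Set.mul_mem_mul ha hb) hc) hd

theorem piv_delta_inj {T U : Type} [CommGroup T] [Group U] [MulDistribMulAction T U]
    {x₁ x₂ : T} (h : x₁ * x₂⁻¹ ∉ {t : T | ∃ u : U, u ≠ 1 ∧ t • u = u}) :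
    Function.Injective (fun v : U => (x₂ • v) * (x₁ • v)⁻¹) := by
  intro u v huv
  by_contra hne
  apply h
  refine ⟨x₂ • (v⁻¹ * u), ?_, ?_⟩
  · intro h1
    have h2 : v⁻¹ * u = 1 := by
      have := congrArg (fun y => x₂⁻¹ • y) h1
      simpa using this
    exact hne (inv_mul_eq_one.1 h2).symm
  · rw [mul_smul, inv_smul_smul]
    simp only [smul_mul', smul_inv'] at huv ⊢
    have h3 : x₂ • u = (x₂ • v) * (x₁ • v)⁻¹ * (x₁ • u) := by
      rw [← huv]; group
    rw [h3]; group

section piv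
variable {T U : Type} [CommGroup T] [Group U] [MulDistribMulAction T U]

/-- Non-pivots. -/
def PivNon (X : Set T) (W : Set U) (u : U) : Prop :=
  ∃ w₁ ∈ W, ∃ w₂ ∈ W, ∃ x₁ ∈ X, ∃ x₂ ∈ X,
    x₁ * x₂⁻¹ ∉ {t : T | ∃ u : U, u ≠ 1 ∧ t • u = u} ∧ w₁ * x₁ • u = w₂ * x₂ • u

open Classical in
theorem piv_energy [Nontrivial U] (X : Finset T) (W : Finset U) (u : U) :
    (W.card * X.card) ^ 2 ≤ ((W ×ˢ X).image (fun p => p.1 * p.2 • u)).card *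
      (W.card * X.card *
        (((X : Set T) * (X : Set T)⁻¹) ∩ {t : T | ∃ u : U, u ≠ 1 ∧ t • u = u}).ncard +
      (((W ×ˢ X) ×ˢ (W ×ˢ X)).filter (fun z => z.1.2 * z.2.2⁻¹ ∉
        {t : T | ∃ u : U, u ≠ 1 ∧ t • u = u} ∧ z.1.1 * z.1.2 • u = z.2.1 * z.2.2 • u)).card) := by
  set F := {t : T | ∃ u : U, u ≠ 1 ∧ t • u = u} with hF
  have h := piv_cs (W ×ˢ X) (fun p => p.1 * p.2 • u)
  rw [Finset.card_product] at h
  refine h.trans (Nat.mul_le_mul_left _ ?_)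
  have hfin : (((X : Set T) * (X : Set T)⁻¹) ∩ F).Finite :=
    ((X.finite_toSet.mul X.finite_toSet.inv).inter_of_left _)
  rw [← Finset.card_filter_add_card_filter_not (s := Finset.filter _ _)
    (fun z => z.1.2 * z.2.2⁻¹ ∈ F)]
  refine add_le_add ?_ ?_
  · rw [Set.ncard_eq_toFinset_card _ hfin, ← Finset.card_product, ← Finset.card_product]
    apply Finset.card_le_card_of_injOn (fun z => (z.2, z.1.2 * z.2.2⁻¹))
    · rintro ⟨⟨a, b⟩, c, d⟩ hz
      simp only [Finset.coe_filter, Finset.mem_filter, Finset.mem_product, Set.mem_ofPred_eq] at hz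
      simp only [Finset.mem_coe, Finset.mem_product, Set.Finite.mem_toFinset]
      exact ⟨hz.1.1.2, Set.mul_mem_mul (Finset.mem_coe.2 hz.1.1.1.2)
        (Set.inv_mem_inv.2 (Finset.mem_coe.2 hz.1.1.2.2)), hz.2⟩
    · rintro ⟨⟨a, b⟩, c, d⟩ hz ⟨⟨a', b'⟩, c', d'⟩ hz' he
      simp only [Finset.coe_filter, Finset.mem_filter, Finset.mem_product, Set.mem_ofPred_eq] at hz hz'
      simp only [Prod.mk.injEq] at he
      obtain ⟨⟨rfl, rfl⟩, h3⟩ := he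
      have hb : b = b' := mul_right_cancel h3
      subst hb
      have ha : a = a' := mul_right_cancel (hz.1.2.trans hz'.1.2.symm)
      subst ha
      rfl
  · apply Finset.card_le_card
    intro z hz
    simp only [Finset.mem_filter] at hz ⊢
    exact ⟨hz.1.1, hz.2, hz.1.2⟩

open Classical in
theorem piv_pivot [Nontrivial U] (X : Finset T) (W : Finset U) (hX : X.Nonempty) (hW : W.Nonempty)
    (u : U) (hu : ¬ PivNon (X : Set T) (W : Set U) u) :
    W.card * X.card ≤ ((W ×ˢ X).image (fun p => p.1 * p.2 • u)).card *
        (((X : Set T) * (X : Set T)⁻¹) ∩ {t : T | ∃ u : U, u ≠ 1 ∧ t • u = u}).ncard := by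
  have h := piv_energy X W u
  have h0 : (((W ×ˢ X) ×ˢ (W ×ˢ X)).filter (fun z => z.1.2 * z.2.2⁻¹ ∉
        {t : T | ∃ u : U, u ≠ 1 ∧ t • u = u} ∧ z.1.1 * z.1.2 • u = z.2.1 * z.2.2 • u)) = ∅ := by
    rw [Finset.filter_eq_empty_iff]
    rintro ⟨⟨a, b⟩, c, d⟩ hz hh
    simp only [Finset.mem_product] at hz
    exact hu ⟨a, hz.1.1, c, hz.2.1, b, hz.1.2, d, hz.2.2, hh.1, hh.2⟩
  rw [h0, Finset.card_empty, add_zero] at h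
  have hpos : 0 < W.card * X.card := Nat.mul_pos hW.card_pos hX.card_pos
  nlinarith

theorem piv_mem_base {S : Set U} {a : U} (h : a ∈ S) : a ∈ S ∪ S⁻¹ ∪ {1} := Or.inl (Or.inl h)
theorem piv_inv_mem_base {S : Set U} {a : U} (h : a ∈ S) : a⁻¹ ∈ S ∪ S⁻¹ ∪ {1} :=
  Or.inl (Or.inr (Set.inv_mem_inv.2 h))

theorem piv_finite_symPow {G : Type} [Group G] {S : Set G} (h : S.Finite) (k : ℕ) :
    (symPow S k).Finite := by
  have hb : (S ∪ S⁻¹ ∪ {1}).Finite := (h.union h.inv).union (Set.finite_singleton 1)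
  unfold symPow
  induction k with
  | zero => rw [pow_zero]; exact Set.finite_one
  | succ k ih => rw [pow_succ]; exact ih.mul hb

theorem piv_symPow_mono {G : Type} [Group G] {S : Set G} {k l : ℕ} (h : k ≤ l) :
    symPow S k ⊆ symPow S l :=
  Set.pow_subset_pow_right (Or.inr rfl) h

theorem piv_base_inv {G : Type} [Group G] {S : Set G} {a : G} (h : a ∈ S ∪ S⁻¹ ∪ {1}) :
    a⁻¹ ∈ S ∪ S⁻¹ ∪ {1} := by
  rcases h with (h | h) | h
  · exact Or.inl (Or.inr (Set.inv_mem_inv.2 h))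
  · exact Or.inl (Or.inl h)
  · right
    rw [Set.mem_singleton_iff] at h ⊢
    rw [h, inv_one]

theorem piv_symPow_inv {G : Type} [Group G] {S : Set G} {k : ℕ} :
    ∀ {a : G}, a ∈ symPow S k → a⁻¹ ∈ symPow S k := by
  unfold symPow
  induction k with
  | zero => intro a h; rw [pow_zero, Set.mem_one] at *; rw [h, inv_one]
  | succ k ih =>
    intro a h
    rw [pow_succ] at h
    obtain ⟨b, hb, c, hc, rfl⟩ := h
    rw [pow_succ']
    simp only [mul_inv_rev]
    exact Set.mul_mem_mul (piv_base_inv hc) (ih hb)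

open Classical in
/-- images under an injective map into a finite set -/
theorem piv_card_le (X : Finset T) (W : Finset U) (u : U) (S : Set U) (hS : S.Finite)
    {x₁ x₂ : T} (h : x₁ * x₂⁻¹ ∉ {t : T | ∃ u : U, u ≠ 1 ∧ t • u = u})
    (hm : ∀ w ∈ W, ∀ x ∈ X,
      (x₂ • w) * x • ((x₂ • u) * (x₁ • u)⁻¹) * (x₁ • w)⁻¹ ∈ S) :
    ((W ×ˢ X).image (fun p => p.1 * p.2 • u)).card ≤ S.ncard := by
  rw [Set.ncard_eq_toFinset_card _ hS]
  apply Finset.card_le_card_of_injOn (fun v : U => (x₂ • v) * (x₁ • v)⁻¹)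
  · intro v hv
    simp only [Finset.coe_image, Set.mem_image, Finset.mem_coe, Finset.mem_product] at hv
    obtain ⟨⟨w, x⟩, ⟨hw, hx⟩, rfl⟩ := hv
    simp only [Set.Finite.coe_toFinset]
    convert hm w hw x hx using 1
    simp only [smul_mul', smul_inv', mul_inv_rev, smul_smul, mul_comm x, mul_assoc]
  · exact (piv_delta_inj h).injOn

theorem piv_actSet_mono {W : Set U} {X Y : Set T} (h : X ⊆ Y) : actSet W X ⊆ actSet W Y :=
  Set.image2_subset_right h

theorem piv_mem_act {W : Set U} {X : Set T} {w : U} {x : T} (hx : x ∈ X) (hw : w ∈ W) :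
    x • w ∈ actSet W X := Set.mem_image2_of_mem hx hw

theorem piv_gen (X : Set T) (W : Set U) (N : U → Prop) (h1 : N 1)
    (hw : ∀ w ∈ W, ∀ u, N u → N (w * u) ∧ N (w⁻¹ * u))
    (hx : ∀ x ∈ X, ∀ u, N u → N (x • u) ∧ N (x⁻¹ • u)) :
    ∀ u ∈ Subgroup.closure (actSet W ((Subgroup.closure X : Subgroup T) : Set T)), N u := by
  have hx' : ∀ x ∈ Subgroup.closure X, (∀ u, N u → N (x • u)) ∧ (∀ u, N u → N (x⁻¹ • u)) := by
    intro x hxx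
    induction hxx using Subgroup.closure_induction with
    | mem x h => exact ⟨fun u hu => (hx x h u hu).1, fun u hu => (hx x h u hu).2⟩
    | one => simp
    | mul x y _ _ ihx ihy =>
      refine ⟨fun u hu => ?_, fun u hu => ?_⟩
      · rw [mul_smul]; exact ihx.1 _ (ihy.1 _ hu)
      · rw [mul_inv, mul_smul]; exact ihx.2 _ (ihy.2 _ hu)
    | inv x _ ih => exact ⟨ih.2, by rw [inv_inv]; exact ih.1⟩
  intro g hg
  have key : ∀ u, N u → N (g * u) ∧ N (g⁻¹ * u) := by
    induction hg using Subgroup.closure_induction with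
    | mem g h =>
      obtain ⟨x, hxx, w, hww, rfl⟩ := h
      intro u hu
      have h2 := (hx' x hxx).2 u hu
      have h3 := hw w hww _ h2
      have h4 := (hx' x hxx).1 _ h3.1
      have h5 := (hx' x hxx).1 _ h3.2
      simp only [smul_mul', smul_inv', smul_inv_smul] at h4 h5
      exact ⟨h4, h5⟩
    | one => simp
    | mul x y _ _ ihx ihy =>
      intro u hu
      refine ⟨?_, ?_⟩
      · rw [mul_assoc]; exact (ihx _ (ihy _ hu).1).1
      · rw [mul_inv_rev, mul_assoc]; exact (ihy _ (ihx _ hu).2).2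
    | inv x _ ih => intro u hu; rw [inv_inv]; exact ⟨(ih u hu).2, (ih u hu).1⟩
  simpa using (key 1 h1).1

theorem piv_finite_act {X : Set T} {W : Set U} (hX : X.Finite) (hW : W.Finite) :
    (actSet W X).Finite := hX.image2 _ hW

open Classical in
theorem piv_step (X : Finset T) (W : Finset U) (u a b : U) (y : T)
    (hN : PivNon (X : Set T) (W : Set U) u)
    (hy : y ∈ (X : Set T) ∪ (X : Set T)⁻¹ ∪ {1})
    (hab : (y = 1 ∧ (a ∈ W ∨ a⁻¹ ∈ W)) ∨ a = 1) (hb : b = a * y • u) :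
    ((W ×ˢ X).image (fun p => p.1 * p.2 • b)).card ≤
      (symPow (actSet (W : Set U) (symPow (X : Set T) 2)) 6).ncard := by
  obtain ⟨w₁, hw₁, w₂, hw₂, x₁, hx₁, x₂, hx₂, hF, he⟩ := hN
  have he' : (x₂ • u) * (x₁ • u)⁻¹ = w₂⁻¹ * w₁ := by
    rw [mul_inv_eq_iff_eq_mul, mul_assoc, he]; group
  have hb2 : ∀ {s t : T}, s ∈ (X : Set T) ∪ (X : Set T)⁻¹ ∪ {1} →
      t ∈ (X : Set T) ∪ (X : Set T)⁻¹ ∪ {1} → s * t ∈ symPow (X : Set T) 2 := by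
    intro s t hs ht
    unfold symPow; rw [sq]; exact Set.mul_mem_mul hs ht
  have hbX : ∀ {s : T}, s ∈ X → s ∈ (X : Set T) ∪ (X : Set T)⁻¹ ∪ {1} := fun h => Or.inl (Or.inl h)
  have hbX1 : ∀ {s : T}, s ∈ X → s ∈ symPow (X : Set T) 2 := fun {s} h => by
    have := hb2 (hbX h) (Or.inr rfl : (1:T) ∈ _); rwa [mul_one] at this
  refine piv_card_le X W b _ (piv_finite_symPow
    (piv_finite_act (piv_finite_symPow X.finite_toSet 2) W.finite_toSet) 6) hF ?_
  intro w hw x hx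
  set S := actSet (W : Set U) (symPow (X : Set T) 2) with hS
  have p1 : x₂ • w ∈ S ∪ S⁻¹ ∪ {1} := piv_mem_base (piv_mem_act (hbX1 hx₂) hw)
  have p6 : (x₁ • w)⁻¹ ∈ S ∪ S⁻¹ ∪ {1} := piv_inv_mem_base (piv_mem_act (hbX1 hx₁) hw)
  have p3 : ((x * y) • w₂)⁻¹ ∈ S ∪ S⁻¹ ∪ {1} :=
    piv_inv_mem_base (piv_mem_act (hb2 (hbX hx) hy) hw₂)
  have p4 : (x * y) • w₁ ∈ S ∪ S⁻¹ ∪ {1} := piv_mem_base (piv_mem_act (hb2 (hbX hx) hy) hw₁)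
  have pa : ∀ z ∈ X, (x * z) • a ∈ S ∪ S⁻¹ ∪ {1} := by
    intro z hz
    rcases hab with ⟨_, ha | ha⟩ | ha
    · exact piv_mem_base (piv_mem_act (hb2 (hbX hx) (hbX hz)) ha)
    · have := piv_inv_mem_base (piv_mem_act (hb2 (hbX hx) (hbX hz)) ha)
      rwa [smul_inv', inv_inv] at this
    · rw [ha, smul_one]; exact Or.inr rfl
  have p2 := pa x₂ hx₂
  have p5 := piv_base_inv (pa x₁ hx₁)
  have hprod := Set.mul_mem_mul (Set.mul_mem_mul (piv_pow4 _ p1 p2 p3 p4) p5) p6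
  rw [← pow_succ, ← pow_succ] at hprod
  have key : (x₂ • b) * (x₁ • b)⁻¹ = x₂ • a * y • (w₂⁻¹ * w₁) * (x₁ • a)⁻¹ := by
    rw [hb, ← he']
    simp only [smul_mul', smul_inv', mul_inv_rev, smul_smul, mul_comm y, mul_assoc]
  rw [key]
  unfold symPow
  convert hprod using 1
  simp only [smul_mul', smul_inv', smul_smul, mul_assoc]

open Classical in
theorem piv_four (X : Finset T) (W : Finset U) (u : U)
    (hN : PivNon (X : Set T) (W : Set U) u) :
    ((W ×ˢ X).image (fun p => p.1 * p.2 • u)).card ≤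
      (symPow (actSet (W : Set U) (X : Set T)) 4).ncard := by
  obtain ⟨w₁, hw₁, w₂, hw₂, x₁, hx₁, x₂, hx₂, hF, he⟩ := hN
  have he' : (x₂ • u) * (x₁ • u)⁻¹ = w₂⁻¹ * w₁ := by
    rw [mul_inv_eq_iff_eq_mul, mul_assoc, he]; group
  refine piv_card_le X W u _ (piv_finite_symPow
    (piv_finite_act X.finite_toSet W.finite_toSet) 4) hF ?_
  intro w hw x hx
  have hprod := piv_pow4 _ (piv_mem_base (piv_mem_act (W := (W : Set U)) (X := (X : Set T)) hx₂ hw))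
    (piv_inv_mem_base (piv_mem_act hx hw₂))
    (piv_mem_base (piv_mem_act hx hw₁))
    (piv_inv_mem_base (piv_mem_act hx₁ hw))
  rw [he']
  unfold symPow
  convert hprod using 1
  simp only [smul_mul', smul_inv', mul_assoc]

theorem piv_half (G : Subgroup U) (hG : (G : Set U).Finite) (A : Set U) (hA : A ⊆ G)
    (hinv : ∀ a ∈ A, a⁻¹ ∈ A) (hc : (G : Set U).ncard < 2 * A.ncard) : (G : Set U) ⊆ A * A := by
  intro g hg
  have hAf := hG.subset hA
  by_contra hcon
  have hd : Disjoint A ((fun a => g * a) '' A) := by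
    rw [Set.disjoint_left]
    rintro b hb ⟨a, ha, rfl⟩
    apply hcon
    exact ⟨g * a, hb, a⁻¹, hinv a ha, by simp⟩
  have h1 := Set.ncard_union_eq hd hAf (hAf.image _)
  rw [Set.ncard_image_of_injective _ (mul_right_injective g)] at h1
  have h2 : A ∪ (fun a => g * a) '' A ⊆ G := by
    rintro b (hb | ⟨a, ha, rfl⟩)
    · exact hA hb
    · exact G.mul_mem hg (hA ha)
  have h3 := Set.ncard_le_ncard h2 hG
  omega

open Classical in
theorem piv_avg (X : Finset T) (W : Finset U) (G : Finset U) (hG : G.Nonempty) :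
    ∃ u ∈ G, (((W ×ˢ X) ×ˢ (W ×ˢ X)).filter (fun z => z.1.2 * z.2.2⁻¹ ∉
        {t : T | ∃ u : U, u ≠ 1 ∧ t • u = u} ∧ z.1.1 * z.1.2 • u = z.2.1 * z.2.2 • u)).card * G.card
      ≤ (W.card * X.card) ^ 2 := by
  by_contra! hcon
  have h1 : ∑ u ∈ G, (((W ×ˢ X) ×ˢ (W ×ˢ X)).filter (fun z => z.1.2 * z.2.2⁻¹ ∉
        {t : T | ∃ u : U, u ≠ 1 ∧ t • u = u} ∧ z.1.1 * z.1.2 • u = z.2.1 * z.2.2 • u)).card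
      ≤ (W.card * X.card) ^ 2 := by
    have := Finset.sum_card_bipartiteAbove_eq_sum_card_bipartiteBelow (s := G)
      (t := (W ×ˢ X) ×ˢ (W ×ˢ X)) (fun (u : U) (z : (U × T) × (U × T)) => z.1.2 * z.2.2⁻¹ ∉
        {t : T | ∃ u : U, u ≠ 1 ∧ t • u = u} ∧ z.1.1 * z.1.2 • u = z.2.1 * z.2.2 • u)
    unfold Finset.bipartiteAbove Finset.bipartiteBelow at this
    rw [this]
    calc _ ≤ ∑ z ∈ (W ×ˢ X) ×ˢ (W ×ˢ X), 1 := by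
          apply Finset.sum_le_sum
          rintro ⟨⟨w₁, x₁⟩, w₂, x₂⟩ hz
          rw [Finset.card_le_one]
          intro u hu v hv
          simp only [Finset.mem_filter] at hu hv
          apply piv_delta_inj hu.2.1
          have e : ∀ u : U, w₁ * x₁ • u = w₂ * x₂ • u → (x₂ • u) * (x₁ • u)⁻¹ = w₂⁻¹ * w₁ := by
            intro u he
            rw [mul_inv_eq_iff_eq_mul, mul_assoc, he]; group
          exact (e u hu.2.2).trans (e v hv.2.2).symm
      _ = _ := by simp [Finset.card_product, sq]
  have h2 := Finset.sum_lt_sum_of_nonempty hG hcon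
  rw [← Finset.sum_mul, Finset.sum_const, smul_eq_mul, mul_comm] at h2
  have := Nat.mul_le_mul_right G.card h1
  nlinarith

theorem piv_finite (X : Finset T) (W : Finset U) :
    {u : U | PivNon (X : Set T) (W : Set U) u}.Finite := by
  classical
  have : {u : U | PivNon (X : Set T) (W : Set U) u} ⊆
      ⋃ z ∈ (((W ×ˢ X) ×ˢ (W ×ˢ X) : Finset ((U × T) × (U × T))) : Set ((U × T) × (U × T))),
      {u : U | z.1.2 * z.2.2⁻¹ ∉
        {t : T | ∃ u : U, u ≠ 1 ∧ t • u = u} ∧ z.1.1 * z.1.2 • u = z.2.1 * z.2.2 • u} := by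
    rintro u ⟨w₁, hw₁, w₂, hw₂, x₁, hx₁, x₂, hx₂, hF, he⟩
    simp only [Set.mem_iUnion]
    refine ⟨((w₁, x₁), (w₂, x₂)), ?_, hF, he⟩
    simp only [Finset.mem_coe, Finset.mem_product] at *
    exact ⟨⟨hw₁, hx₁⟩, hw₂, hx₂⟩
  refine Set.Finite.subset (Set.Finite.biUnion (Finset.finite_toSet _) ?_) this
  rintro ⟨⟨w₁, x₁⟩, w₂, x₂⟩ hz
  apply Set.Subsingleton.finite
  intro u hu v hv
  apply piv_delta_inj hu.1
  have e : ∀ u : U, w₁ * x₁ • u = w₂ * x₂ • u → (x₂ • u) * (x₁ • u)⁻¹ = w₂⁻¹ * w₁ := by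
    intro u he
    rw [mul_inv_eq_iff_eq_mul, mul_assoc, he]; group
  exact (e u hu.2).trans (e v hv.2).symm

theorem piv_symPow_le (S : Set U) (G : Subgroup U) (h : S ⊆ G) (k : ℕ) : symPow S k ⊆ G := by
  have hb : S ∪ S⁻¹ ∪ {1} ⊆ (G : Set U) := by
    rintro a ((ha | ha) | ha)
    · exact h ha
    · exact (G.inv_mem_iff).1 (h ha)
    · rw [Set.mem_singleton_iff.1 ha]; exact G.one_mem
  unfold symPow
  induction k with
  | zero => rw [pow_zero]; rintro a rfl; exact G.one_mem
  | succ k ih =>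
    rw [pow_succ]
    rintro _ ⟨a, ha, b, hb', rfl⟩
    exact G.mul_mem (ih ha) (hb hb')

end piv

/-- **The pivoting argument of Gill and Helfgott.**
Let `T` be an abelian group acting on a group `U`, `F ⊆ T` the set of elements with a
nontrivial fixed point, and `X ⊆ T`, `W ⊆ U` finite nonempty. Then either
`2·|(W^{X^{±2}})^{±6}|·|XX⁻¹ ∩ F| ≥ |W||X|`, or `(W^X)^{±8} = ⟨W^{⟨X⟩}⟩`. -/
theorem pivoting
    (T : Type) [CommGroup T] (U : Type) [Group U] [MulDistribMulAction T U]
    (X : Set T) (W : Set U)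
    (hX : X.Finite) (hW : W.Finite) (hXne : X.Nonempty) (hWne : W.Nonempty) :
    2 * (symPow (actSet W (symPow X 2)) 6).ncard *
        ((X * X⁻¹) ∩ {t : T | ∃ u : U, u ≠ 1 ∧ t • u = u}).ncard ≥
      W.ncard * X.ncard ∨
    symPow (actSet W X) 8 =
      (Subgroup.closure (actSet W ((Subgroup.closure X : Subgroup T) : Set T)) :
        Set U) := by
  classical
  set G := Subgroup.closure (actSet W ((Subgroup.closure X : Subgroup T) : Set T)) with hGdef
  have hsubset : ∀ k, symPow (actSet W X) k ⊆ (G : Set U) := fun k =>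
    piv_symPow_le _ _ ((piv_actSet_mono Subgroup.subset_closure).trans Subgroup.subset_closure) k
  rcases subsingleton_or_nontrivial U with hU | hU
  · right
    apply Set.Subset.antisymm (hsubset 8)
    intro g _
    rw [Subsingleton.elim g 1]
    exact Set.one_mem_pow (Or.inr rfl)
  lift X to Finset T using hX
  lift W to Finset U using hW
  rw [Finset.coe_nonempty] at hXne hWne
  rw [Set.ncard_coe_finset, Set.ncard_coe_finset]
  by_cases ha : 2 * (symPow (actSet (W : Set U) (symPow (X : Set T) 2)) 6).ncard *
        (((X : Set T) * (X : Set T)⁻¹) ∩ {t : T | ∃ u : U, u ≠ 1 ∧ t • u = u}).ncard ≥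
      W.card * X.card
  · exact Or.inl ha
  right
  push Not at ha
  set K := (((X : Set T) * (X : Set T)⁻¹) ∩ {t : T | ∃ u : U, u ≠ 1 ∧ t • u = u}).ncard with hK
  set M := (symPow (actSet (W : Set U) (symPow (X : Set T) 2)) 6).ncard with hM
  have hpos : 0 < W.card * X.card := Nat.mul_pos hWne.card_pos hXne.card_pos
  -- small image implies non-pivot
  have hnon : ∀ u : U, ((W ×ˢ X).image (fun p => p.1 * p.2 • u)).card ≤ M →
      PivNon (X : Set T) (W : Set U) u := by
    intro u hu
    by_contra hcon
    have h := piv_pivot X W hXne hWne u hcon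
    have h2 := Nat.mul_le_mul_right K hu
    nlinarith
  have hone : PivNon (X : Set T) (W : Set U) 1 := by
    apply hnon
    have h1 : (W ×ˢ X).image (fun p => p.1 * p.2 • (1 : U)) ⊆ W := by
      intro v hv
      simp only [Finset.mem_image, Finset.mem_product, smul_one, mul_one] at hv
      obtain ⟨p, hp, rfl⟩ := hv
      exact hp.1
    refine (Finset.card_le_card h1).trans ?_
    rw [← Set.ncard_coe_finset]
    refine Set.ncard_le_ncard ?_ (piv_finite_symPow
      (piv_finite_act (piv_finite_symPow X.finite_toSet 2) W.finite_toSet) 6)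
    intro w hw
    apply piv_symPow_mono (show 1 ≤ 6 by norm_num)
    unfold symPow
    rw [pow_one]
    have h1 : (1 : T) • w ∈ actSet (W : Set U) (((X : Set T) ∪ (X : Set T)⁻¹ ∪ {1}) ^ 2) :=
      piv_mem_act (Set.one_mem_pow (Or.inr rfl)) hw
    rw [one_smul] at h1
    exact piv_mem_base h1
  have hall : ∀ u ∈ G, PivNon (X : Set T) (W : Set U) u := by
    apply piv_gen (X : Set T) (W : Set U) _ hone
    · intro w hw u hu
      refine ⟨hnon _ (piv_step X W u w _ 1 hu (Or.inr rfl) (Or.inl ⟨rfl, Or.inl hw⟩) (by simp)),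
        hnon _ (piv_step X W u w⁻¹ _ 1 hu (Or.inr rfl) (Or.inl ⟨rfl, Or.inr ?_⟩) (by simp))⟩
      rw [inv_inv]; exact hw
    · intro x hx u hu
      exact ⟨hnon _ (piv_step X W u 1 _ x hu (Or.inl (Or.inl hx)) (Or.inr rfl) (by simp)),
        hnon _ (piv_step X W u 1 _ x⁻¹ hu (Or.inl (Or.inr (Set.inv_mem_inv.2 hx)))
          (Or.inr rfl) (by simp))⟩
  have hGfin : (G : Set U).Finite := (piv_finite X W).subset hall
  have hGne : hGfin.toFinset.Nonempty := ⟨1, by simp [G.one_mem]⟩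
  obtain ⟨u, huG, hu⟩ := piv_avg X W hGfin.toFinset hGne
  rw [← Set.ncard_eq_toFinset_card _ hGfin] at hu
  have huN := hall u (by simpa using huG)
  have hE := piv_energy X W u
  have hI6 := piv_step X W u 1 u 1 huN (Or.inr rfl) (Or.inr rfl) (by simp)
  have hI4 := piv_four X W u huN
  have hn0 : 0 < (G : Set U).ncard := by
    rw [Set.ncard_eq_toFinset_card _ hGfin]; exact hGne.card_pos
  rw [← hK] at hE
  rw [← hM] at hI6
  set I := ((W ×ˢ X).image (fun p => p.1 * p.2 • u)).card
  set N := (((W ×ˢ X) ×ˢ (W ×ˢ X)).filter (fun z => z.1.2 * z.2.2⁻¹ ∉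
        {t : T | ∃ u : U, u ≠ 1 ∧ t • u = u} ∧ z.1.1 * z.1.2 • u = z.2.1 * z.2.2 • u)).card
  set P := W.card * X.card
  set n := (G : Set U).ncard
  have hmain : n < 2 * I := by
    have h2 : 2 * I * K < P := lt_of_le_of_lt (by gcongr) ha
    -- P^2 ≤ I P K + I N, 2 I K < P hence P^2 < 2 I N
    have h3 : 2 * I * K * P < P * P := Nat.mul_lt_mul_of_pos_right h2 hpos
    have h4 : P ^ 2 < 2 * I * N := by nlinarith
    have h5 : P ^ 2 * n < 2 * I * P ^ 2 := by
      calc P ^ 2 * n < 2 * I * N * n := Nat.mul_lt_mul_of_pos_right h4 hn0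
        _ = 2 * I * (N * n) := by ring
        _ ≤ 2 * I * P ^ 2 := Nat.mul_le_mul_left _ hu
    by_contra! hc
    have := Nat.mul_le_mul_right (P ^ 2) hc
    nlinarith
  apply Set.Subset.antisymm (hsubset 8)
  have := piv_half G hGfin _ (hsubset 4) (fun a ha => piv_symPow_inv ha) (by omega)
  refine this.trans ?_
  unfold symPow
  rw [← pow_add]
end
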